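/- arXiv:2411.17889 — 7 statements merged into one kernel-verified Lean document; each statement's English description precedes it below -/
import Mathlib

section
/- Let L be a countable first-order language and let U be a countable ultrahomogeneous L-structure. Assume that (i) the monoid of self-embeddings of U has the amalgamation property, i.e., for all embeddings f, g : U → U there exist embeddings f', g' : U → U with f' ∘ f = g' ∘ g, and (ii) some self-embedding of U is not surjective. Then there exists an L-structure N of cardinality ℵ₁ such that N is ultrahomogeneous and N has the same age as U. -/
open FirstOrder Language Cardinal CategoryTheory

namespace UHAux
open FirstOrder.Language.Structure

theorem factor {L : FirstOrder.Language.{0, 0}} {B M N : Type} [L.Structure B] [L.Structure M] [L.Structure N]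
    (e : M ↪[L] N) (p : B ↪[L] N) (s : Set B) (hs : Substructure.closure L s = ⊤)
    (h : ∀ x ∈ s, p x ∈ Set.range e) : ∃ p' : B ↪[L] M, p = e.comp p' := by
  have h1 : (⊤ : L.Substructure B) ≤ (e.toHom.range).comap p.toHom := by
    rw [← hs, Substructure.closure_le]
    intro x hx
    obtain ⟨y, hy⟩ := h x hx
    exact ⟨y, hy⟩
  have h2 : ∀ x, p x ∈ e.toHom.range := fun x => h1 (Substructure.mem_top x)
  refine ⟨e.equivRange.symm.toEmbedding.comp (p.codRestrict e.toHom.range h2), ?_⟩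
  ext x
  have := e.equivRange.apply_symm_apply (p.codRestrict e.toHom.range h2 x)
  have := congrArg Subtype.val this
  simp only [Embedding.equivRange_apply] at this
  simpa using this.symm

theorem factor_lim {L : FirstOrder.Language.{0, 0}} {ι : Type} [Preorder ι] [IsDirectedOrder ι] [Nonempty ι]
    (G : ι → Type) [∀ i, L.Structure (G i)] (f : ∀ i j, i ≤ j → G i ↪[L] G j)
    [DirectedSystem G fun i j h => f i j h] {B : Type} [L.Structure B]
    (hB : Structure.FG L B) (p : B ↪[L] Language.DirectLimit G f) :
    ∃ i, ∀ j, i ≤ j → ∃ p' : B ↪[L] G j, p = (Language.DirectLimit.of L ι G f j).comp p' := by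
  classical
  obtain ⟨s, hs⟩ := hB.out
  choose I x hx using fun z : Language.DirectLimit G f => Language.DirectLimit.exists_of z
  obtain ⟨i, hi⟩ := Finset.exists_le (s.image (fun b => I (p b)))
  refine ⟨i, fun j hij => factor _ _ s hs ?_⟩
  intro b hb
  have hle : I (p b) ≤ j := (hi _ (Finset.mem_image_of_mem _ hb)).trans hij
  refine ⟨f (I (p b)) j hle (x (p b)), ?_⟩
  rw [Language.DirectLimit.of_f, hx]

theorem factor_lim_finite {L : FirstOrder.Language.{0, 0}} {ι : Type} [Preorder ι] [IsDirectedOrder ι]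
    [Nonempty ι]
    (G : ι → Type) [∀ i, L.Structure (G i)] (f : ∀ i j, i ≤ j → G i ↪[L] G j)
    [DirectedSystem G fun i j h => f i j h] (s : Set (Language.DirectLimit G f)) (hs : s.Finite) :
    ∃ i, s ⊆ Set.range (Language.DirectLimit.of L ι G f i) := by
  classical
  lift s to Finset (Language.DirectLimit G f) using hs
  choose I x hx using fun z : Language.DirectLimit G f => Language.DirectLimit.exists_of z
  obtain ⟨i, hi⟩ := Finset.exists_le (s.image I)
  refine ⟨i, fun b hb => ?_⟩
  have hle : I b ≤ i := hi _ (Finset.mem_image_of_mem _ hb)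
  refine ⟨f (I b) i hle (x b), ?_⟩
  rw [Language.DirectLimit.of_f, hx]

theorem lim_countable {L : FirstOrder.Language.{0, 0}} 
    (G : ℕ → Type) [∀ i, L.Structure (G i)] [∀ i, Countable (G i)]
    (f : ∀ i j, i ≤ j → G i ↪[L] G j)
    [DirectedSystem G fun i j h => f i j h] : Countable (Language.DirectLimit G f) := by
  choose I x hx using fun z : Language.DirectLimit G f => Language.DirectLimit.exists_of z
  refine Function.Injective.countable (f := fun z => (⟨I z, x z⟩ : Σ i, G i)) ?_
  intro a b hab
  have h2 : (fun q : Σ i, G i => Language.DirectLimit.of L ℕ G f q.1 q.2) ⟨I a, x a⟩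
    = (fun q : Σ i, G i => Language.DirectLimit.of L ℕ G f q.1 q.2) ⟨I b, x b⟩ := congrArg _ hab
  simpa only [hx] using h2

theorem fraisse_iso {L : FirstOrder.Language.{0, 0}} [Countable L.Symbols]
    {U V : Type} [L.Structure U] [Countable U] [L.Structure V] [Countable V]
    (hU : L.IsUltrahomogeneous U) (hV : L.IsUltrahomogeneous V) (h : L.age V = L.age U) :
    Nonempty (V ≃[L] U) := by
  have : Countable (Σ l, L.Functions l) :=
    Function.Injective.countable (f := (Sum.inl : (Σ l, L.Functions l) → L.Symbols))
      Sum.inl_injective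
  exact IsFraisseLimit.nonempty_equiv (K := L.age U) ⟨hV, h⟩ ⟨hU, rfl⟩

/-- the limit of an `ω`-chain of copies of `U` -/
theorem lim_iso {L : FirstOrder.Language.{0, 0}} [Countable L.Symbols]
    {U : Type} [L.Structure U] [Countable U] (hU : L.IsUltrahomogeneous U)
    (d : ℕ → (U ↪[L] U)) : ∃ o : ℕ → (U ↪[L] U), (∀ n x, o (n + 1) (d n x) = o n x) ∧
      (∀ z, ∃ n x, o n x = z) ∧
      ∀ g : ℕ → (U ↪[L] U), (∀ n x, g (n + 1) (d n x) = g n x) →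
        ∃ k : U ↪[L] U, ∀ n x, k (o n x) = g n x := by
  let f := DirectedSystem.natLERec (L := L) (G' := fun _ : ℕ => U) d
  let V := Language.DirectLimit (fun _ : ℕ => U) f
  have hf : ∀ n x, f n (n+1) (Nat.le_succ n) x = d n x := by
    intro n x
    simp only [f, DirectedSystem.coe_natLERec]
    rw [Nat.leRecOn_succ (le_refl n), Nat.leRecOn_self]
  have : Countable V := lim_countable _ f
  have hage : L.age V = L.age U := by
    rw [age_directLimit]
    exact Set.iUnion_const _
  have hV : L.IsUltrahomogeneous V := by
    rw [isUltrahomogeneous_iff_IsExtensionPair cg_of_countable,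
      isExtensionPair_iff_exists_embedding_closure_singleton_sup]
    intro S hS q m
    have hT : (Substructure.closure L {m} ⊔ S).FG := (Substructure.fg_closure_singleton m).sup hS
    obtain ⟨i, hi⟩ := factor_lim _ f ((Substructure.fg_iff_structure_fg _).1 hT)
      (Substructure.subtype _)
    obtain ⟨j, hj⟩ := factor_lim _ f ((Substructure.fg_iff_structure_fg _).1 hS) q
    obtain ⟨r, hr⟩ := hi (max i j) (le_max_left _ _)
    obtain ⟨q', hq'⟩ := hj (max i j) (le_max_right _ _)
    obtain ⟨q'', hq''⟩ := hU.extend_embedding ((Substructure.fg_iff_structure_fg _).1 hS) (h := ⟨r⟩)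
      q' (Substructure.inclusion (le_sup_right : S ≤ Substructure.closure L {m} ⊔ S))
    refine ⟨(Language.DirectLimit.of L ℕ _ f (max i j)).comp q'', ?_⟩
    rw [hq', hq'', Embedding.comp_assoc]
  obtain ⟨t⟩ := fraisse_iso hU hV hage
  refine ⟨fun n => t.toEmbedding.comp (Language.DirectLimit.of L ℕ _ f n), ?_, ?_, ?_⟩
  · intro n x
    simp only [Embedding.comp_apply]
    rw [← hf, Language.DirectLimit.of_f]
  · intro z
    obtain ⟨n, x, h⟩ := Language.DirectLimit.exists_of (t.symm z)
    exact ⟨n, x, by simp only [Embedding.comp_apply, h]; simp⟩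
  · intro g hg
    have hg' : ∀ i j hij x, g j (f i j hij x) = g i x := by
      intro i j hij
      induction j, hij using Nat.le_induction with
      | base => intro x; rw [DirectedSystem.map_self' f]
      | succ j hij ih =>
        intro x
        rw [← DirectedSystem.map_map' f hij (Nat.le_succ j), hf, hg, ih]
    refine ⟨(Language.DirectLimit.lift L ℕ _ f g hg').comp t.symm.toEmbedding, ?_⟩
    intro n x
    simp only [Embedding.comp_apply]
    rw [Language.Equiv.coe_toEmbedding, Language.Equiv.coe_toEmbedding,
      Language.Equiv.symm_apply_apply, Language.DirectLimit.lift_of]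

/-- wide amalgamation -/
theorem wide {L : FirstOrder.Language.{0, 0}} [Countable L.Symbols]
    {U : Type} [L.Structure U] [Countable U] (hU : L.IsUltrahomogeneous U)
    (hAP : ∀ f g : U ↪[L] U, ∃ f' g' : U ↪[L] U, f'.comp f = g'.comp g)
    (f : ℕ → (U ↪[L] U)) : ∃ f' : ℕ → (U ↪[L] U), ∀ n m x, f' n (f n x) = f' m (f m x) := by
  choose A B hAB using hAP
  let c : ℕ → (U ↪[L] U) := fun n => Nat.rec (f 0) (fun n c => (A c (f (n+1))).comp c) n
  obtain ⟨o, ho, -⟩ := lim_iso hU (fun n => A (c n) (f (n+1)))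
  let p : ℕ → (U ↪[L] U) := fun n => Nat.casesOn n (Embedding.refl L U) 
    (fun n => B (c n) (f (n+1)))
  have hp : ∀ n x, p n (f n x) = c n x := by
    intro n x
    cases n with
    | zero => rfl
    | succ n => exact (DFunLike.congr_fun (hAB (c n) (f (n+1))) x).symm
  have hc : ∀ n x, o n (c n x) = o 0 (c 0 x) := by
    intro n x
    induction n with
    | zero => rfl
    | succ n ih => exact (ho n (c n x)).trans ih
  refine ⟨fun n => (o n).comp (p n), fun n m x => ?_⟩
  simp only [Embedding.comp_apply, hp]
  rw [hc, hc m]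

theorem wide' {L : FirstOrder.Language.{0, 0}} [Countable L.Symbols]
    {U : Type} [L.Structure U] [Countable U] (hU : L.IsUltrahomogeneous U)
    (hAP : ∀ f g : U ↪[L] U, ∃ f' g' : U ↪[L] U, f'.comp f = g'.comp g)
    {T : Type} [Countable T] [Nonempty T]
    (f : T → (U ↪[L] U)) : ∃ f' : T → (U ↪[L] U), ∀ n m x, f' n (f n x) = f' m (f m x) := by
  obtain ⟨u, hu⟩ := exists_surjective_nat T
  choose v hv using hu
  obtain ⟨f', h⟩ := wide hU hAP (f ∘ u)
  refine ⟨f' ∘ v, fun n m x => ?_⟩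
  simpa [hv] using h (v n) (v m) x

/-- Extending countably many automorphisms at once to a proper extension. -/
theorem step {L : FirstOrder.Language.{0, 0}} [Countable L.Symbols]
    {U : Type} [L.Structure U] [Countable U] (hU : L.IsUltrahomogeneous U)
    (hAP : ∀ f g : U ↪[L] U, ∃ f' g' : U ↪[L] U, f'.comp f = g'.comp g)
    (hne : ∃ e : U ↪[L] U, ¬ Function.Surjective e)
    {T : Type} [Countable T] (h : T → (U ≃[L] U)) :
    ∃ (e : U ↪[L] U) (h' : T → (U ≃[L] U)), ¬ Function.Surjective e ∧
      ∀ t x, h' t (e x) = e (h t x) := by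
  obtain ⟨e₀, he₀⟩ := hne
  choose W hW using fun f => wide' (T := Option T) hU hAP f
  let F : ℕ → Option T → (U ↪[L] U) := fun n =>
    Nat.rec (fun j => Option.casesOn j e₀ (fun t => e₀.comp (h t).toEmbedding)) (fun _ f => W f) n
  have hF : ∀ n i j x, F (n+1) i (F n i x) = F (n+1) j (F n j x) := fun n i j x => hW (F n) i j x
  obtain ⟨o, ho, hs, hl⟩ := lim_iso hU (fun n => F n none)
  have key : ∀ (t : T) (b : Bool), ∃ k : U ↪[L] U, ∀ n x, n.bodd = b →
      k (o n x) = o (n+1) (F n (some t) x) := by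
    intro t b
    obtain ⟨k, hk⟩ := hl (fun n => if n.bodd = b then (o (n+1)).comp (F n (some t))
      else (o (n+2)).comp ((F (n+1) (some t)).comp (F n none))) (by
        intro n x
        by_cases hb : n.bodd = b
        · have h1 : (n+1).bodd ≠ b := by simp [Nat.bodd_succ, hb]
          simp only [hb, h1, if_true, if_false, Embedding.comp_apply]
          rw [hF n none (some t), hF (n+1) (some t) none, ho, ho]
        · have h1 : (n+1).bodd = b := by
            rw [Nat.bodd_succ]; cases b <;> simpa using hb
          simp only [hb, h1, if_true, if_false, Embedding.comp_apply])
    refine ⟨k, fun n x hn => ?_⟩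
    rw [hk, if_pos hn]; rfl
  choose k hk using key
  have hcomp : ∀ t b z, k t (!b) (k t b z) = z := by
    intro t b z
    obtain ⟨n, x, rfl⟩ := hs z
    have main : ∀ n x, n.bodd = b → k t (!b) (k t b (o n x)) = o n x := by
      intro n x hn
      rw [hk t b n x hn, hk t (!b) (n+1) _ (by simp [hn]), hF n _ none, ho, ho]
    by_cases hb : n.bodd = b
    · exact main n x hb
    · rw [← ho n x]
      exact main (n+1) _ (by rw [Nat.bodd_succ]; cases b <;> simpa using hb)
  refine ⟨o 0, fun t => ⟨⟨k t false, k t true, hcomp t false, hcomp t true⟩,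
    (k t false).map_fun', (k t false).map_rel'⟩, ?_, ?_⟩
  · intro hsurj
    apply he₀
    intro y
    obtain ⟨x, hx⟩ := hsurj (o 1 y)
    exact ⟨x, (o 1).injective ((ho 0 x).trans hx)⟩
  · intro t x
    change k t false (o 0 x) = _
    rw [hk t false 0 x rfl]
    exact ho 0 (h t x)


/-- The general construction of a structure of size `ℵ₁` from countable proper extensions. -/
theorem big {L : FirstOrder.Language.{0, 0}} (K : ∀ (M : Type), L.Structure M → Prop)
    (hlim : ∀ (N : Type) [iN : L.Structure N] (ι : Type) (M : ι → Type) [iM : ∀ i, L.Structure (M i)]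
      (e : ∀ i, M i ↪[L] N), (∀ s : Set N, s.Finite → ∃ i, s ⊆ Set.range (e i)) →
      (∀ i, K (M i) (iM i)) → K N iN)
    (hstep : ∀ (M : Type) [iM : L.Structure M] [Countable M], K M iM →
      ∃ (N : Type) (iN : L.Structure N) (_ : Countable N) (e : M ↪[L] N), K N iN ∧
        ¬ Function.Surjective e)
    (hex : ∃ (M : Type) (iM : L.Structure M), Countable M ∧ K M iM) :
    ∃ (N : Type) (iN : L.Structure N), K N iN ∧ #N = aleph 1 := by
  classical
  obtain ⟨κ, hκ⟩ : ∃ κ : Type, #κ = aleph 1 := ⟨_, Cardinal.mk_out _⟩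
  have hκu : Uncountable κ := by
    rw [← not_countable_iff, ← Cardinal.mk_le_aleph0_iff, hκ, not_le]
    exact Cardinal.aleph0_lt_aleph_one
  let P := Σ A : {A : Set κ // A.Countable}, {s : L.Structure A.1 // K A.1 s}
  let str : ∀ p : P, L.Structure p.1.1 := fun p => p.2.1
  let le : P → P → Prop := fun p q => ∃ e : p.1.1 ↪[L] q.1.1, ∀ x, (e x : κ) = x
  -- placing a countable structure inside `κ`
  have place : ∀ (V : Type) [iV : L.Structure V] [Countable V] (ψ : V → κ), Function.Injective ψ →
      K V iV → ∃ q : P, ∃ t : V ≃[L] q.1.1, ∀ v, (t v : κ) = ψ v := by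
    intro V iV _ ψ hψ hK
    let E : V ≃ Set.range ψ := _root_.Equiv.ofInjective ψ hψ
    letI : L.Structure (Set.range ψ) := E.inducedStructure
    have hK' : K (Set.range ψ) inferInstance := by
      refine hlim _ Unit (fun _ => V) (fun _ => E.inducedStructureEquiv.toEmbedding) ?_ 
        (fun _ => hK)
      intro s _
      refine ⟨(), fun x _ => ?_⟩
      exact ⟨E.symm x, E.apply_symm_apply x⟩
    exact ⟨⟨⟨Set.range ψ, Set.countable_range ψ⟩, ⟨inferInstance, hK'⟩⟩,
      E.inducedStructureEquiv, fun v => rfl⟩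
  have hPne : Nonempty P := by
    obtain ⟨M, iM, hM, hK⟩ := hex
    have : #M ≤ #κ := (Cardinal.mk_le_aleph0_iff.2 hM).trans
      (by rw [hκ]; exact Cardinal.aleph0_lt_aleph_one.le)
    obtain ⟨ψ⟩ := Cardinal.le_def M κ |>.1 this
    exact ⟨(place M ψ ψ.injective hK).choose⟩
  letI : Preorder P :=
    { le := le
      le_refl := fun p => ⟨Embedding.refl L _, fun x => rfl⟩
      le_trans := by
        rintro p q r ⟨e, he⟩ ⟨f, hf⟩
        exact ⟨f.comp e, fun x => by rw [Embedding.comp_apply, hf, he]⟩ }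
  obtain ⟨C, hC⟩ : ∃ C : Set P, IsMaxChain (· ≤ ·) C := ⟨_, maxChain_spec⟩
  have hCne : Nonempty C := by
    by_contra hcon
    rw [Set.nonempty_coe_sort, Set.not_nonempty_iff_eq_empty] at hcon
    obtain ⟨p⟩ := hPne
    have := hC.2 (t := {p}) (Set.subsingleton_singleton.isChain) (by simp [hcon])
    rw [hcon] at this
    exact (Set.singleton_ne_empty p) this.symm
  have hdir : IsDirectedOrder C := by
    refine ⟨fun a b => ?_⟩
    rcases hC.1.total a.2 b.2 with h | h
    · exact ⟨b, h, le_refl b⟩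
    · exact ⟨a, le_refl a, h⟩
  let G : C → Type := fun p => p.1.1.1
  letI : ∀ p, L.Structure (G p) := fun p => str p.1
  let f : ∀ i j, i ≤ j → G i ↪[L] G j := fun i j h => Classical.choose (h : le i.1 j.1)
  have hf : ∀ i j (h : i ≤ j) (x : G i), ((f i j h x : G j).1 : κ) = x.1 := fun i j h =>
    Classical.choose_spec (h : le i.1 j.1)
  haveI : DirectedSystem G fun i j h => f i j h :=
    ⟨fun i x => Subtype.ext (hf _ _ _ _),
     fun i j k hij hjk x => Subtype.ext (by rw [hf, hf, hf])⟩
  let N := Language.DirectLimit G f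
  have hKN : K N inferInstance := hlim N C G (fun i => Language.DirectLimit.of L C G f i)
    (fun s hs => factor_lim_finite G f s hs) (fun i => i.1.2.2)
  -- the canonical injection into `κ`
  obtain ⟨φ, hφ, hφi⟩ : ∃ φ : N → κ, (∀ i (x : G i), φ (Language.DirectLimit.of L C G f i x) = x.1)
      ∧ Function.Injective φ := by
    choose I x hx using fun z : N => Language.DirectLimit.exists_of z
    have hinj : ∀ i j (x : G i) (y : G j), Language.DirectLimit.of L C G f i x =
        Language.DirectLimit.of L C G f j y ↔ x.1 = y.1 := by
      intro i j x y
      obtain ⟨k, hik, hjk⟩ := directed_of (· ≤ ·) i j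
      rw [← Language.DirectLimit.of_f (hij := hik), ← Language.DirectLimit.of_f (hij := hjk),
        (Language.DirectLimit.of L C G f k).injective.eq_iff, Subtype.ext_iff, hf, hf]
    refine ⟨fun z => (x z).1, ?_, ?_⟩
    · intro i y
      exact (hinj _ _ _ _).1 (hx _)
    · intro a b hab
      have := (hinj (I a) (I b) (x a) (x b)).2 hab
      rwa [hx, hx] at this
  have hN1 : ¬ Countable N := by
    intro hcount
    obtain ⟨V, iV, hV, e, hKV, hns⟩ := hstep N hKN
    have hcompl : ℵ₀ ≤ #((Set.range φ)ᶜ : Set κ) := by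
      rw [← Cardinal.infinite_iff]
      by_contra hcon
      rw [not_infinite_iff_finite] at hcon
      have h1 : ((Set.range φ)ᶜ : Set κ).Countable := Set.to_countable _
      have h2 := (Set.countable_range φ).union h1
      rw [Set.union_compl_self, Set.countable_univ_iff] at h2
      exact (not_countable_iff.2 hκu) h2
    obtain ⟨j⟩ := (Cardinal.le_def V _).1 ((Cardinal.mk_le_aleph0_iff.2 hV).trans hcompl)
    obtain ⟨ψ, hψe, hψi⟩ : ∃ ψ : V → κ, (∀ z, ψ (e z) = φ z) ∧ Function.Injective ψ := by
      refine ⟨fun v => if h : ∃ z, e z = v then φ h.choose else (j v).1, ?_, ?_⟩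
      · intro z
        have h : ∃ z', e z' = e z := ⟨z, rfl⟩
        simp only [dif_pos h]
        exact congrArg φ (e.injective h.choose_spec)
      · intro a b hab
        by_cases ha : ∃ z, e z = a <;> by_cases hb : ∃ z, e z = b
        · simp only [dif_pos ha, dif_pos hb] at hab
          rw [← ha.choose_spec, ← hb.choose_spec, hφi hab]
        · simp only [dif_pos ha, dif_neg hb] at hab
          exact absurd ⟨_, hab⟩ (j b).2
        · simp only [dif_neg ha, dif_pos hb] at hab
          exact absurd ⟨_, hab.symm⟩ (j a).2
        · simp only [dif_neg ha, dif_neg hb] at hab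
          exact j.injective (Subtype.ext hab)
    obtain ⟨q, t, ht⟩ := place V ψ hψi hKV
    have hub : ∀ p ∈ C, p ≤ q := by
      intro p hp
      refine ⟨(t.toEmbedding.comp e).comp (Language.DirectLimit.of L C G f ⟨p, hp⟩), fun x => ?_⟩
      exact (ht _).trans ((hψe _).trans (hφ ⟨p, hp⟩ x))
    have hqC : q ∈ C := by
      have := hC.2 (t := insert q C) (hC.1.insert fun b hb _ => Or.inr (hub b hb))
        (Set.subset_insert _ _)
      rw [this]; exact Set.mem_insert _ _
    apply hns
    intro v
    refine ⟨Language.DirectLimit.of L C G f ⟨q, hqC⟩ (t v), hψi ?_⟩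
    rw [hψe, hφ]
    exact ht v
  refine ⟨N, inferInstance, hKN, le_antisymm ?_ ?_⟩
  · rw [← hκ]; exact Cardinal.mk_le_of_injective hφi
  · rw [← Cardinal.succ_aleph0, Order.succ_le_iff, ← not_le, Cardinal.mk_le_aleph0_iff]
    exact hN1

/-- `b` is the image of `a` under an isomorphism of generated substructures. -/
def IsTask (L : FirstOrder.Language.{0, 0}) {M : Type} [L.Structure M] {n : ℕ} (a b : Fin n → M) :
    Prop :=
  ∃ (B : Type) (_ : L.Structure B) (s : Fin n → B) (p q : B ↪[L] M),
    Substructure.closure L (Set.range s) = ⊤ ∧ (∀ i, p (s i) = a i) ∧ (∀ i, q (s i) = b i)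

structure Good (L : FirstOrder.Language.{0, 0}) (U : Type) [L.Structure U] (M : Type)
    [L.Structure M] (H G : ∀ n, (Fin n → M) → (Fin n → M) → M → M) : Prop where
  age : L.age M = L.age U
  hg : ∀ n a b y, H n a b (G n a b y) = y
  gh : ∀ n a b y, G n a b (H n a b y) = y
  map_fun : ∀ n a b k (f : L.Functions k) x, H n a b (funMap f x) = funMap f (H n a b ∘ x)
  map_rel : ∀ n a b k (r : L.Relations k) x, RelMap r (H n a b ∘ x) ↔ RelMap r x
  task : ∀ n a b, IsTask L a b → ∀ i, H n a b (a i) = b i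

def Good.equiv {L : FirstOrder.Language.{0, 0}} {U : Type} [L.Structure U] {M : Type}
    [L.Structure M] {H G : ∀ n, (Fin n → M) → (Fin n → M) → M → M} (h : Good L U M H G)
    (n : ℕ) (a b : Fin n → M) : M ≃[L] M :=
  ⟨⟨H n a b, G n a b, h.gh n a b, h.hg n a b⟩, fun f x => h.map_fun n a b _ f x,
    fun r x => h.map_rel n a b _ r x⟩

theorem isTask_of_embedding {L : FirstOrder.Language.{0, 0}} {M : Type} [L.Structure M]
    {S : L.Substructure M} (hS : S.FG) (f : S ↪[L] M) :
    ∃ (n : ℕ) (s : Fin n → S), Substructure.closure L (Set.range s) = ⊤ ∧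
      IsTask L (fun i => (s i : M)) (fun i => f (s i)) := by
  obtain ⟨A, hA⟩ := ((Substructure.fg_iff_structure_fg _).1 hS).out
  let s : Fin A.card → S := fun i => (A.equivFin.symm i).1
  have hs : Set.range s = A := by
    ext x
    constructor
    · rintro ⟨i, rfl⟩; exact (A.equivFin.symm i).2
    · intro hx; exact ⟨A.equivFin ⟨x, hx⟩, by simp [s]⟩
  have hs' : Substructure.closure L (Set.range s) = ⊤ := by rw [hs, hA]
  exact ⟨_, s, hs', S, inferInstance, s, S.subtype, f, hs', fun i => rfl, fun i => rfl⟩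

theorem Good.homog {L : FirstOrder.Language.{0, 0}} {U : Type} [L.Structure U] {M : Type}
    [L.Structure M] {H G : ∀ n, (Fin n → M) → (Fin n → M) → M → M} (h : Good L U M H G) :
    L.IsUltrahomogeneous M := by
  intro S hS f
  obtain ⟨n, s, hs, ht⟩ := isTask_of_embedding hS f
  refine ⟨h.equiv n (fun i => (s i : M)) (fun i => f (s i)), ?_⟩
  have := Hom.eq_of_eqOn_dense hs (f := f.toHom)
    (g := ((h.equiv n (fun i => (s i : M)) (fun i => f (s i))).toEmbedding.comp S.subtype).toHom)
    (by
      rintro _ ⟨i, rfl⟩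
      exact (h.task _ _ _ ht i).symm)
  ext x
  exact DFunLike.congr_fun this x

/-- In an ultrahomogeneous structure, tasks are performed by automorphisms. -/
theorem task_equiv {L : FirstOrder.Language.{0, 0}} {M : Type} [L.Structure M]
    (hM : L.IsUltrahomogeneous M) {n : ℕ} (a b : Fin n → M) :
    ∃ h : M ≃[L] M, IsTask L a b → ∀ i, h (a i) = b i := by
  by_cases ht : IsTask L a b
  · obtain ⟨B, _, s, p, q, hs, hp, hq⟩ := ht
    have hB : Structure.FG L B := ⟨Substructure.fg_def.2 ⟨_, Set.finite_range s, hs⟩⟩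
    obtain ⟨g, hg⟩ := hM p.toHom.range (hB.range p.toHom) (q.comp p.equivRange.symm.toEmbedding)
    refine ⟨g, fun _ i => ?_⟩
    have := DFunLike.congr_fun hg (p.equivRange (s i))
    simp only [Embedding.comp_apply] at this
    rw [← hp, ← hq]
    have h2 : p.equivRange.symm.toEmbedding (p.equivRange (s i)) = s i :=
      p.equivRange.symm_apply_apply _
    rw [h2] at this
    exact this.symm
  · exact ⟨Language.Equiv.refl L M, fun h => absurd h ht⟩

theorem IsTask.pull {L : FirstOrder.Language.{0, 0}} {M N : Type} [L.Structure M] [L.Structure N]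
    (e : M ↪[L] N) {n : ℕ} {a b : Fin n → M} {a' b' : Fin n → N} (ha : ∀ i, e (a i) = a' i)
    (hb : ∀ i, e (b i) = b' i) (h : IsTask L a' b') : IsTask L a b := by
  obtain ⟨B, _, s, p, q, hs, hp, hq⟩ := h
  obtain ⟨p', rfl⟩ := factor e p _ hs (by rintro _ ⟨i, rfl⟩; exact ⟨a i, by rw [ha, hp]⟩)
  obtain ⟨q', rfl⟩ := factor e q _ hs (by rintro _ ⟨i, rfl⟩; exact ⟨b i, by rw [hb, hq]⟩)
  refine ⟨B, _, s, p', q', hs, fun i => e.injective ?_, fun i => e.injective ?_⟩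
  · rw [ha, ← hp]; rfl
  · rw [hb, ← hq]; rfl

theorem Good.lim {L : FirstOrder.Language.{0, 0}} {U : Type} [L.Structure U] {N : Type}
    [L.Structure N] {H G : ∀ n, (Fin n → N) → (Fin n → N) → N → N}
    {ι : Type} {M : ι → Type} [∀ i, L.Structure (M i)]
    {H' G' : ∀ j n, (Fin n → M j) → (Fin n → M j) → M j → M j}
    (e : ∀ j, M j ↪[L] N) (hcov : ∀ s : Set N, s.Finite → ∃ j, s ⊆ Set.range (e j))
    (hH : ∀ j n a b x, e j (H' j n a b x) = H n (e j ∘ a) (e j ∘ b) (e j x))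
    (hG : ∀ j n a b x, e j (G' j n a b x) = G n (e j ∘ a) (e j ∘ b) (e j x))
    (hM : ∀ j, Good L U (M j) (H' j) (G' j)) : Good L U N H G := by
  have cov : ∀ (n k : ℕ) (a b : Fin n → N) (x : Fin k → N), ∃ j, ∃ (a' b' : Fin n → M j)
      (x' : Fin k → M j), a = e j ∘ a' ∧ b = e j ∘ b' ∧ x = e j ∘ x' := by
    intro n k a b x
    obtain ⟨j, hj⟩ := hcov (Set.range a ∪ Set.range b ∪ Set.range x)
      (((Set.finite_range a).union (Set.finite_range b)).union (Set.finite_range x))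
    choose a' ha using fun i => hj (Or.inl (Or.inl ⟨i, rfl⟩) : a i ∈ _)
    choose b' hb using fun i => hj (Or.inl (Or.inr ⟨i, rfl⟩) : b i ∈ _)
    choose x' hx using fun i => hj (Or.inr ⟨i, rfl⟩ : x i ∈ _)
    exact ⟨j, a', b', x', funext fun i => (ha i).symm, funext fun i => (hb i).symm,
      funext fun i => (hx i).symm⟩
  have cov1 : ∀ (n : ℕ) (a b : Fin n → N) (x : N), ∃ j, ∃ (a' b' : Fin n → M j)
      (x' : M j), a = e j ∘ a' ∧ b = e j ∘ b' ∧ x = e j x' := by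
    intro n a b x
    obtain ⟨j, a', b', x', ha, hb, hx⟩ := cov n 1 a b (fun _ => x)
    exact ⟨j, a', b', x' 0, ha, hb, congrFun hx 0⟩
  refine ⟨?_, ?_, ?_, ?_, ?_, ?_⟩
  · ext B
    constructor
    · rintro ⟨hB, ⟨p⟩⟩
      obtain ⟨s, hs⟩ := hB.out
      obtain ⟨j, hj⟩ := hcov (p '' s) (s.finite_toSet.image p)
      obtain ⟨p', -⟩ := factor (e j) p s hs fun x hx => hj ⟨x, hx, rfl⟩
      rw [← (hM j).age]
      exact ⟨hB, ⟨p'⟩⟩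
    · intro hB
      obtain ⟨j, -⟩ := hcov ∅ Set.finite_empty
      rw [← (hM j).age] at hB
      exact ⟨hB.1, hB.2.map (e j).comp⟩
  · intro n a b y
    obtain ⟨j, a, b, y, rfl, rfl, rfl⟩ := cov1 n a b y
    rw [← hG, ← hH, (hM j).hg]
  · intro n a b y
    obtain ⟨j, a, b, y, rfl, rfl, rfl⟩ := cov1 n a b y
    rw [← hH, ← hG, (hM j).gh]
  · intro n a b k f x
    obtain ⟨j, a, b, x, rfl, rfl, rfl⟩ := cov n k a b x
    have : H n (e j ∘ a) (e j ∘ b) ∘ e j ∘ x = e j ∘ (H' j n a b ∘ x) :=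
      funext fun i => (hH j n a b (x i)).symm
    rw [this, ← Embedding.map_fun, ← Embedding.map_fun, ← hH, (hM j).map_fun]
  · intro n a b k r x
    obtain ⟨j, a, b, x, rfl, rfl, rfl⟩ := cov n k a b x
    have : H n (e j ∘ a) (e j ∘ b) ∘ e j ∘ x = e j ∘ (H' j n a b ∘ x) :=
      funext fun i => (hH j n a b (x i)).symm
    rw [this, Embedding.map_rel, Embedding.map_rel, (hM j).map_rel]
  · intro n a b ht i
    obtain ⟨j, a, b, -, rfl, rfl, -⟩ := cov n 0 a b Fin.elim0
    have := (hM j).task n a b (ht.pull (e j) (fun _ => rfl) (fun _ => rfl)) i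
    simp only [Function.comp_apply]
    rw [← hH, this]

/-- Functions of arity `k` added to the language. -/
abbrev Sym (k : ℕ) : Type := Bool × {n : ℕ // Fintype.card (Fin n ⊕ Fin n ⊕ Unit) = k}

/-- The fixed numbering of the arguments. -/
noncomputable def num {k : ℕ} (n : ℕ) (h : Fintype.card (Fin n ⊕ Fin n ⊕ Unit) = k) :
    (Fin n ⊕ Fin n ⊕ Unit) ≃ Fin k :=
  (Fintype.equivFin _).trans (finCongr h)

/-- The language with symbols for the automorphisms. -/
def Lx (L : FirstOrder.Language.{0, 0}) : FirstOrder.Language.{0, 0} :=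
  ⟨fun k => L.Functions k ⊕ Sym k, L.Relations⟩

@[reducible]
def red (L : FirstOrder.Language.{0, 0}) (M : Type) (i : (Lx L).Structure M) : L.Structure M where
  funMap {k} f x := i.funMap (n := k) (Sum.inl f) x
  RelMap {k} r x := i.RelMap (n := k) r x

/-- The reading of the new symbols. -/
noncomputable def HG (L : FirstOrder.Language.{0, 0}) (M : Type) (i : (Lx L).Structure M) (c : Bool)
    (n : ℕ) (a b : Fin n → M) (y : M) : M :=
  i.funMap (n := Fintype.card (Fin n ⊕ Fin n ⊕ Unit))
    (Sum.inr (c, ⟨n, rfl⟩))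
    (Sum.elim a (Sum.elim b fun _ => y) ∘ (num n rfl).symm)

@[reducible]
noncomputable def mk (L : FirstOrder.Language.{0, 0}) (M : Type) [L.Structure M]
    (H : Bool → ∀ n, (Fin n → M) → (Fin n → M) → M → M) : (Lx L).Structure M where
  funMap {_} f x := match f with
    | Sum.inl f => funMap f x
    | Sum.inr (c, ⟨n, h⟩) => H c n (fun i => x (num n h (Sum.inl i)))
        (fun i => x (num n h (Sum.inr (Sum.inl i)))) (x (num n h (Sum.inr (Sum.inr ()))))
  RelMap {k} r x := RelMap (L := L) (n := k) r x

theorem red_mk (L : FirstOrder.Language.{0, 0}) (M : Type) [i : L.Structure M]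
    (H : Bool → ∀ n, (Fin n → M) → (Fin n → M) → M → M) : red L M (mk L M H) = i := rfl

theorem HG_mk (L : FirstOrder.Language.{0, 0}) (M : Type) [i : L.Structure M]
    (H : Bool → ∀ n, (Fin n → M) → (Fin n → M) → M → M) : HG L M (mk L M H) = H := by
  funext c n a b y
  change H c n (fun i => (Sum.elim a (Sum.elim b fun _ => y) ∘ (num n rfl).symm) _)
    (fun i => (Sum.elim a (Sum.elim b fun _ => y) ∘ (num n rfl).symm) _)
    ((Sum.elim a (Sum.elim b fun _ => y) ∘ (num n rfl).symm) _) = _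
  simp

def redEmb (L : FirstOrder.Language.{0, 0}) {M N : Type} [i : (Lx L).Structure M]
    [j : (Lx L).Structure N] (e : M ↪[Lx L] N) :
    @Language.Embedding L M N (red L M i) (red L N j) :=
  letI := red L M i
  letI := red L N j
  ⟨e.toEmbedding, fun {k} f x => e.map_fun' (n := k) (Sum.inl f) x,
    fun {k} r x => e.map_rel' (n := k) r x⟩

theorem HG_emb (L : FirstOrder.Language.{0, 0}) {M N : Type} [i : (Lx L).Structure M]
    [j : (Lx L).Structure N] (e : M ↪[Lx L] N) (c : Bool) (n : ℕ) (a b : Fin n → M) (y : M) :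
    e (HG L M i c n a b y) = HG L N j c n (e ∘ a) (e ∘ b) (e y) := by
  unfold HG
  refine (e.map_fun' _ _).trans ?_
  congr 1
  funext k
  simp only [Function.comp_apply]
  rcases (num n rfl).symm k with u | u | u <;> rfl

def KK (L : FirstOrder.Language.{0, 0}) (U : Type) [L.Structure U] (M : Type)
    (i : (Lx L).Structure M) : Prop :=
  @Good L U _ M (red L M i) (HG L M i true) (HG L M i false)

/-- from automorphisms to a `KK` structure -/
theorem KK_mk (L : FirstOrder.Language.{0, 0}) (U : Type) [L.Structure U] (V : Type)
    [L.Structure V] (hage : L.age V = L.age U)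
    (h : ∀ n, (Fin n → V) → (Fin n → V) → (V ≃[L] V))
    (ht : ∀ n a b, IsTask L a b → ∀ i, h n a b (a i) = b i) :
    KK L U V (mk L V fun c n a b => bif c then h n a b else (h n a b).symm) := by
  unfold KK
  rw [HG_mk]
  exact ⟨hage, fun n a b y => (h n a b).apply_symm_apply y,
    fun n a b y => (h n a b).symm_apply_apply y, fun n a b k f x => (h n a b).map_fun f x,
    fun n a b k r x => (h n a b).map_rel r x, ht⟩

end UHAux
open UHAux in
theorem statement0 (L : FirstOrder.Language.{0, 0}) [Countable L.Symbols]
    (U : Type) [L.Structure U] [Countable U]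
    (hU : L.IsUltrahomogeneous U)
    (hAP : ∀ f g : U ↪[L] U, ∃ f' g' : U ↪[L] U, f'.comp f = g'.comp g)
    (hne : ∃ e : U ↪[L] U, ¬ Function.Surjective e) :
    ∃ N : Bundled.{0} L.Structure, #N = aleph 1 ∧
      L.IsUltrahomogeneous N ∧ L.age N = L.age U := by
  classical
  suffices hmain : ∃ (N : Type) (iN : (Lx L).Structure N), KK L U N iN ∧ #N = aleph 1 by
    obtain ⟨N, iN, hK, hc⟩ := hmain
    letI := red L N iN
    exact ⟨⟨N, red L N iN⟩, hc, Good.homog hK, Good.age hK⟩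
  refine big (L := Lx L) (KK L U) ?_ ?_ ?_
  · intro N iN ι M iM e hcov hM
    letI := red L N iN
    letI := fun i => red L (M i) (iM i)
    exact Good.lim (fun j => redEmb L (e j)) hcov (fun j n a b x => HG_emb L (e j) true n a b x)
      (fun j n a b x => HG_emb L (e j) false n a b x) hM
  · intro M iM hcM hK
    letI := red L M iM
    obtain ⟨θ⟩ := fraisse_iso hU (Good.homog hK) (Good.age hK)
    let T := Σ n, (Fin n → M) × (Fin n → M)
    let hM : T → (M ≃[L] M) := fun t => Good.equiv hK t.1 t.2.1 t.2.2
    obtain ⟨e, h', hns, he⟩ := step hU hAP hne (T := T)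
      (fun t => (θ.comp (hM t)).comp θ.symm)
    let e' : M ↪[L] U := e.comp θ.toEmbedding
    have he' : ∀ t x, h' t (e' x) = e' (hM t x) := by
      intro t x
      have := he t (θ x)
      simp only [Language.Equiv.comp_apply, Language.Equiv.symm_apply_apply] at this
      exact this
    have hns' : ¬ Function.Surjective e' := by
      intro hs
      apply hns
      intro y
      obtain ⟨x, hx⟩ := hs y
      exact ⟨θ x, hx⟩
    have hex : ∀ n (a b : Fin n → U), ∃ h : U ≃[L] U, (IsTask L a b → ∀ i, h (a i) = b i) ∧
        ∀ a₀ b₀ : Fin n → M, a = e' ∘ a₀ → b = e' ∘ b₀ → ∀ x, h (e' x) = e' (hM ⟨n, a₀, b₀⟩ x) := by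
      intro n a b
      by_cases hab : ∃ a₀ b₀ : Fin n → M, a = e' ∘ a₀ ∧ b = e' ∘ b₀
      · obtain ⟨a₀, b₀, rfl, rfl⟩ := hab
        refine ⟨h' ⟨n, a₀, b₀⟩, fun ht i => ?_, fun a₁ b₁ h1 h2 x => ?_⟩
        · have ht' := ht.pull e' (a := a₀) (b := b₀) (fun _ => rfl) (fun _ => rfl)
          have := Good.task hK n a₀ b₀ ht' i
          simp only [Function.comp_apply]
          rw [he']
          exact congrArg e' this
        · obtain rfl := e'.injective.comp_left h1
          obtain rfl := e'.injective.comp_left h2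
          exact he' _ x
      · obtain ⟨h, hh⟩ := task_equiv hU a b
        exact ⟨h, hh, fun a₀ b₀ h1 h2 => absurd ⟨a₀, b₀, h1, h2⟩ hab⟩
    choose h ht hext using hex
    refine ⟨U, mk L U fun c n a b => bif c then h n a b else (h n a b).symm, inferInstance, ?_,
      KK_mk L U U rfl h ht, ?_⟩
    · letI := mk L U fun c n a b => bif c then ⇑(h n a b) else ⇑(h n a b).symm
      have hH : ∀ c n a b y, e' (HG L M iM c n a b y) =
          (bif c then ⇑(h n (e' ∘ a) (e' ∘ b)) else ⇑(h n (e' ∘ a) (e' ∘ b)).symm) (e' y) := by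
        intro c n a b y
        cases c with
        | true => exact (hext n _ _ a b rfl rfl y).symm
        | false =>
          have h1 := hext n _ _ a b rfl rfl (HG L M iM false n a b y)
          have h2 : hM ⟨n, a, b⟩ (HG L M iM false n a b y) = y := Good.hg hK n a b y
          rw [h2] at h1
          simp only [cond_false]
          rw [← h1, Language.Equiv.symm_apply_apply]
      refine ⟨e'.toEmbedding, ?_, ?_⟩
      · intro k f x
        rcases f with f | ⟨c, n, rfl⟩
        · exact e'.map_fun f x
        · have h3 := hH c n (fun i => x (num n rfl (Sum.inl i)))
            (fun i => x (num n rfl (Sum.inr (Sum.inl i)))) (x (num n rfl (Sum.inr (Sum.inr ()))))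
          have hx : (Sum.elim (fun i => x (num n rfl (Sum.inl i)))
              (Sum.elim (fun i => x (num n rfl (Sum.inr (Sum.inl i))))
              fun _ => x (num n rfl (Sum.inr (Sum.inr ()))))) ∘ (num n rfl).symm = x := by
            rw [_root_.Equiv.comp_symm_eq]
            funext u
            rcases u with u | u | u <;> rfl
          unfold HG at h3
          rw [hx] at h3
          exact h3
      · intro k r x
        exact e'.map_rel (n := k) r x
    · exact hns'
  · choose h ht using fun n (a b : Fin n → U) => task_equiv hU a b
    exact ⟨U, _, inferInstance, KK_mk L U U rfl h ht⟩
end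

section
/- Let L be a countable first-order language, let U be a countable ultrahomogeneous L-structure, and let S be a set of self-embeddings of U that contains the identity map and all automorphisms of U, is closed under composition, contains at least one non-surjective embedding, and has the amalgamation property: for all f, g ∈ S there exist f', g' ∈ S with f' ∘ f = g' ∘ g. Then there exists an ultrahomogeneous L-structure W of cardinality ℵ₁ with the same age as U, such that W is the union of an increasing chain, indexed by the countable ordinals, of substructures each of which is isomorphic to U. -/
open FirstOrder Language Cardinal CategoryTheory
/-- Every finite subset of `W` lies in a copy of `U`. -/
def LocU (L : FirstOrder.Language.{0, 0}) (U W : Type) [L.Structure U] [L.Structure W] : Prop :=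
  ∀ s : Finset W, ∃ j : U ↪[L] W, ∀ x ∈ s, x ∈ Set.range j

section LocU
variable {L : FirstOrder.Language.{0, 0}} {U W : Type} [L.Structure U] [L.Structure W]

theorem LocU.sub (h : LocU L U W) (T : L.Substructure W) (hT : T.FG) :
    ∃ j : U ↪[L] W, T ≤ j.toHom.range := by
  obtain ⟨s, rfl⟩ := hT
  obtain ⟨j, hj⟩ := h s
  refine ⟨j, Substructure.closure_le.2 ?_⟩
  intro x hx
  obtain ⟨u, hu⟩ := hj x hx
  exact ⟨u, hu⟩

/-- Pull back an embedding along another one containing its range. -/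
theorem emb_factor {M : Type} [L.Structure M] (f : M ↪[L] W) (j : U ↪[L] W)
    (h : ∀ x, f x ∈ j.toHom.range) : ∃ f0 : M ↪[L] U, ∀ x, j (f0 x) = f x := by
  refine ⟨j.equivRange.symm.toEmbedding.comp (Embedding.codRestrict _ f h), fun x => ?_⟩
  have : (j.equivRange (j.equivRange.symm (Embedding.codRestrict _ f h x)) : W) = f x := by
    rw [Language.Equiv.apply_symm_apply]; rfl
  rwa [Embedding.equivRange_apply] at this

theorem LocU.age (h : LocU L U W) : L.age W = L.age U := by
  ext N
  constructor
  · rintro ⟨hN, ⟨f⟩⟩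
    obtain ⟨j, hj⟩ := h.sub f.toHom.range (hN.range _)
    obtain ⟨f0, -⟩ := emb_factor f j (fun x => hj ⟨x, rfl⟩)
    exact ⟨hN, ⟨f0⟩⟩
  · rintro ⟨hN, ⟨f⟩⟩
    obtain ⟨j, -⟩ := h ∅
    exact ⟨hN, ⟨j.comp f⟩⟩

theorem LocU.iso [Countable U] [Countable W] (hU : L.IsUltrahomogeneous U) (h : LocU L U W) :
    Nonempty (W ≃[L] U) := by
  have hUc : Structure.CG L U := Structure.cg_of_countable
  have hWc : Structure.CG L W := Structure.cg_of_countable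
  have h1 : L.IsExtensionPair W U := by
    rw [isExtensionPair_iff_exists_embedding_closure_singleton_sup]
    intro S hS f m
    obtain ⟨j, hj⟩ := h.sub (Substructure.closure L {m} ⊔ S)
      ((Substructure.fg_closure_singleton m).sup hS)
    obtain ⟨f0, -⟩ := emb_factor (Substructure.subtype (Substructure.closure L {m} ⊔ S)) j
      (fun x => hj x.2)
    exact hU.extend_embedding ((Substructure.fg_iff_structure_fg S).1 hS) f
      (Substructure.inclusion le_sup_right) (h := ⟨f0⟩)
  have h2 : L.IsExtensionPair U W := by
    rw [isExtensionPair_iff_exists_embedding_closure_singleton_sup]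
    intro S hS f m
    have hS' := (Substructure.fg_iff_structure_fg S).1 hS
    obtain ⟨j, hj⟩ := h.sub f.toHom.range (hS'.range _)
    obtain ⟨f0, hf0⟩ := emb_factor f j (fun x => hj ⟨x, rfl⟩)
    obtain ⟨f', hf'⟩ := hU.extend_embedding hS' f0
      (Substructure.inclusion (le_sup_right : S ≤ Substructure.closure L {m} ⊔ S))
      (h := ⟨Substructure.subtype _⟩)
    refine ⟨j.comp f', ?_⟩
    ext x
    rw [← hf0, hf']
    rfl
  obtain ⟨j, -⟩ := h ∅
  obtain ⟨g, -⟩ := equiv_between_cg hUc hWc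
    ⟨⟨⊥, _, (j.comp (Substructure.subtype ⊥)).equivRange⟩, Substructure.fg_bot⟩ h2 h1
  exact ⟨g.symm⟩

theorem ultrahom_iso (e : W ≃[L] U) (hU : L.IsUltrahomogeneous U) : L.IsUltrahomogeneous W := by
  intro S hS f
  have hS' := (Substructure.fg_iff_structure_fg S).1 hS
  obtain ⟨g, hg⟩ := hU ((e.toEmbedding.comp S.subtype).toHom.range) (hS'.range _)
    ((e.toEmbedding.comp f).comp (e.toEmbedding.comp S.subtype).equivRange.symm.toEmbedding)
  refine ⟨(e.symm.comp g).comp e, ?_⟩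
  ext x
  have := congr_fun (congr_arg DFunLike.coe hg) ((e.toEmbedding.comp S.subtype).equivRange x)
  simp only [Embedding.comp_apply, Language.Equiv.coe_toEmbedding, Language.Equiv.symm_apply_apply] at this
  apply e.injective
  rw [this]
  simp
  rfl

end LocU

section Step
variable {L : FirstOrder.Language.{0, 0}} {U : Type} [L.Structure U]

/-- A set of self-embeddings that is a monoid with amalgamation. -/
structure AmalgMonoid (T : Set (U ↪[L] U)) : Prop where
  one : Embedding.refl L U ∈ T
  comp : ∀ f ∈ T, ∀ g ∈ T, Embedding.comp f g ∈ T
  amalg : ∀ f ∈ T, ∀ g ∈ T, ∃ f' ∈ T, ∃ g' ∈ T, Embedding.comp f' f = Embedding.comp g' g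

theorem exists_countable_amalg {S : Set (U ↪[L] U)} (hS : AmalgMonoid S)
    {H : Set (U ↪[L] U)} (hH : H.Countable) (hHS : H ⊆ S) :
    ∃ T : Set (U ↪[L] U), T.Countable ∧ H ⊆ T ∧ AmalgMonoid T := by
  have h1 : ∀ f g : U ↪[L] U, ∃ p : (U ↪[L] U) × (U ↪[L] U), f ∈ S → g ∈ S →
      p.1 ∈ S ∧ p.2 ∈ S ∧ Embedding.comp p.1 f = Embedding.comp p.2 g := by
    intro f g
    by_cases h : f ∈ S ∧ g ∈ S
    · obtain ⟨f', hf', g', hg', e⟩ := hS.amalg f h.1 g h.2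
      exact ⟨(f', g'), fun _ _ => ⟨hf', hg', e⟩⟩
    · exact ⟨(f, g), fun a b => (h ⟨a, b⟩).elim⟩
  choose a ha using h1
  let F : Set (U ↪[L] U) → Set (U ↪[L] U) := fun X =>
    X ∪ (Set.image2 (fun f g => Embedding.comp f g) X X ∪
      (Set.image2 (fun f g => (a f g).1) X X ∪ Set.image2 (fun f g => (a f g).2) X X))
  let T : ℕ → Set (U ↪[L] U) := fun n => F^[n] (insert (Embedding.refl L U) H)
  have hT : ∀ n, T (n + 1) = F (T n) := fun n => Function.iterate_succ_apply' _ _ _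
  have hmono : Monotone T := by
    refine monotone_nat_of_le_succ fun n => ?_
    rw [hT]
    exact Set.subset_union_left
  have hTS : ∀ n, T n ⊆ S := by
    intro n
    induction n with
    | zero => exact Set.insert_subset hS.one hHS
    | succ n ih =>
      rw [hT]
      refine Set.union_subset ih (Set.union_subset ?_ (Set.union_subset ?_ ?_))
      · rintro _ ⟨f, hf, g, hg, rfl⟩
        exact hS.comp _ (ih hf) _ (ih hg)
      · rintro _ ⟨f, hf, g, hg, rfl⟩
        exact (ha f g (ih hf) (ih hg)).1
      · rintro _ ⟨f, hf, g, hg, rfl⟩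
        exact (ha f g (ih hf) (ih hg)).2.1
  have hTc : ∀ n, (T n).Countable := by
    intro n
    induction n with
    | zero => exact hH.insert _
    | succ n ih =>
      rw [hT]
      exact ih.union ((ih.image2 ih _).union ((ih.image2 ih _).union (ih.image2 ih _)))
  have hboth : ∀ f ∈ ⋃ n, T n, ∀ g ∈ ⋃ n, T n, ∃ n, f ∈ T n ∧ g ∈ T n := by
    intro f hf g hg
    obtain ⟨n, hn⟩ := Set.mem_iUnion.1 hf
    obtain ⟨m, hm⟩ := Set.mem_iUnion.1 hg
    exact ⟨max n m, hmono (le_max_left _ _) hn, hmono (le_max_right _ _) hm⟩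
  refine ⟨⋃ n, T n, Set.countable_iUnion hTc, ?_, ?_, ?_, ?_⟩
  · exact fun x hx => Set.mem_iUnion.2 ⟨0, Or.inr hx⟩
  · exact Set.mem_iUnion.2 ⟨0, Or.inl rfl⟩
  · intro f hf g hg
    obtain ⟨n, hn, hm⟩ := hboth f hf g hg
    refine Set.mem_iUnion.2 ⟨n + 1, ?_⟩
    rw [hT]
    exact Or.inr (Or.inl ⟨f, hn, g, hm, rfl⟩)
  · intro f hf g hg
    obtain ⟨n, hn, hm⟩ := hboth f hf g hg
    refine ⟨(a f g).1, Set.mem_iUnion.2 ⟨n + 1, ?_⟩, (a f g).2, Set.mem_iUnion.2 ⟨n + 1, ?_⟩,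
      (ha f g (hTS n hn) (hTS n hm)).2.2⟩
    · rw [hT]
      exact Or.inr (Or.inr (Or.inl ⟨f, hn, g, hm, rfl⟩))
    · rw [hT]
      exact Or.inr (Or.inr (Or.inr ⟨f, hn, g, hm, rfl⟩))

/-- composites of a sequence of self-embeddings -/
abbrev embSq (u : ℕ → (U ↪[L] U)) (m n : ℕ) (h : m ≤ n) : U ↪[L] U :=
  DirectedSystem.natLERec (G' := fun _ => U) u m n h

theorem embSq_self (u : ℕ → (U ↪[L] U)) (m : ℕ) : embSq u m m le_rfl = Embedding.refl L U := by
  unfold embSq DirectedSystem.natLERec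
  rw [Nat.leRecOn_self]

theorem embSq_succ (u : ℕ → (U ↪[L] U)) (m n : ℕ) (h : m ≤ n) :
    embSq u m (n + 1) (h.trans n.le_succ) = (u n).comp (embSq u m n h) := by
  unfold embSq DirectedSystem.natLERec
  rw [Nat.leRecOn_succ h]

theorem embSq_mem {T : Set (U ↪[L] U)} (hT : AmalgMonoid T) {u : ℕ → (U ↪[L] U)}
    (hu : ∀ n, u n ∈ T) (m n : ℕ) (h : m ≤ n) : embSq u m n h ∈ T := by
  induction n, h using Nat.le_induction with
  | base => rw [embSq_self]; exact hT.one
  | succ n h ih => rw [embSq_succ u _ _ h]; exact hT.comp _ (hu n) _ ih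

theorem exists_generic {T : Set (U ↪[L] U)} (hT : AmalgMonoid T) (hc : T.Countable) :
    ∃ u : ℕ → (U ↪[L] U), (∀ n, u n ∈ T) ∧
      ∀ n, ∀ f ∈ T, ∃ (m : ℕ) (h : n ≤ m), ∃ f' ∈ T, Embedding.comp f' f = embSq u n m h := by
  obtain ⟨t, ht⟩ := hc.exists_eq_range ⟨_, hT.one⟩
  have htT : ∀ k, t k ∈ T := fun k => ht ▸ Set.mem_range_self k
  have h1 : ∀ f g : T, ∃ p : T × T, Embedding.comp p.1.1 f.1 = Embedding.comp p.2.1 g.1 := by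
    intro f g
    obtain ⟨f', hf', g', hg', e⟩ := hT.amalg f.1 f.2 g.1 g.2
    exact ⟨(⟨f', hf'⟩, ⟨g', hg'⟩), e⟩
  choose a ha using h1
  let nxt : ℕ → (ℕ → T) → T := fun j σ => (a ⟨t j.unpair.2, htT _⟩ (σ j.unpair.1)).2
  let σ : ℕ → ℕ → T := fun j => Nat.rec (fun _ => ⟨_, hT.one⟩)
    (fun j s i => if i ≤ j then ⟨(nxt j s).1.comp (s i).1, hT.comp _ (nxt j s).2 _ (s i).2⟩
      else ⟨_, hT.one⟩) j
  have hσ0 : ∀ i, (σ 0 i).1 = Embedding.refl L U := fun i => rfl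
  have hσ1 : ∀ j i, i ≤ j → (σ (j + 1) i).1 = (nxt j (σ j)).1.comp (σ j i).1 := by
    intro j i h
    change (if i ≤ j then _ else _ : T).1 = _
    rw [if_pos h]
  have hσ2 : ∀ j, (σ (j + 1) (j + 1)).1 = Embedding.refl L U := by
    intro j
    change (if j + 1 ≤ j then _ else _ : T).1 = _
    rw [if_neg (by omega)]
  let u : ℕ → (U ↪[L] U) := fun j => (nxt j (σ j)).1
  have hs : ∀ i j (h : i ≤ j), embSq u i j h = (σ j i).1 := by
    intro i j h
    induction j, h using Nat.le_induction with
    | base =>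
      rw [embSq_self]
      cases i with
      | zero => rfl
      | succ i => rw [hσ2]
    | succ j h ih => rw [embSq_succ u _ _ h, hσ1 _ _ h, ih]
  refine ⟨u, fun n => (nxt n (σ n)).2, ?_⟩
  intro n f hf
  rw [ht] at hf
  obtain ⟨k, rfl⟩ := hf
  have hn : n ≤ Nat.pair n k := Nat.left_le_pair n k
  refine ⟨Nat.pair n k + 1, hn.trans (Nat.le_succ _),
    (a ⟨t k, htT _⟩ (σ (Nat.pair n k) n)).1.1, Subtype.mem _, ?_⟩
  rw [ha, embSq_succ u _ _ hn, hs]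
  simp only [u, nxt, Nat.unpair_pair]


theorem emb_bij {M N : Type} [L.Structure M] [L.Structure N] (F : M ↪[L] N)
    (h : Function.Surjective F) : ∃ G : M ≃[L] N, ∀ x, G x = F x :=
  ⟨⟨_root_.Equiv.ofBijective F ⟨F.injective, h⟩, F.map_fun', F.map_rel'⟩, fun _ => rfl⟩

/-- Spans `V ← U → V` with legs in a given set, ordered by factorization. -/
structure Span {V : Type} [L.Structure V] (A : Set (U ↪[L] V)) where
  l : U ↪[L] V
  r : U ↪[L] V
  hl : l ∈ A
  hr : r ∈ A

instance {V : Type} [L.Structure V] (A : Set (U ↪[L] V)) : Preorder (Span A) where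
  le p q := ∃ t : U ↪[L] U, (∀ x, q.l (t x) = p.l x) ∧ ∀ x, q.r (t x) = p.r x
  le_refl p := ⟨Embedding.refl L U, fun _ => rfl, fun _ => rfl⟩
  le_trans := by
    rintro p q r ⟨t, h1, h2⟩ ⟨s, h3, h4⟩
    exact ⟨s.comp t, fun x => by simp [h1, h3], fun x => by simp [h2, h4]⟩

theorem span_equiv {V : Type} [L.Structure V] [Countable V] (A : Set (U ↪[L] V))
    (hA : ∀ a ∈ A, ∀ b ∈ A, ∀ x : V, ∃ a' ∈ A, ∃ b' ∈ A, ∃ t : U ↪[L] U,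
      (∀ x, a' (t x) = a x) ∧ (∀ x, b' (t x) = b x) ∧ x ∈ Set.range a')
    (a : U ↪[L] V) (ha : a ∈ A) (b : U ↪[L] V) (hb : b ∈ A) :
    ∃ g : V ≃[L] V, ∀ x, g (a x) = b x := by
  let _ : Encodable V := Encodable.ofCountable V
  let D : V ⊕ V → Order.Cofinal (Span A) := fun p => Sum.recOn p
    (fun x => ⟨{s | x ∈ Set.range s.l}, fun s => by
      obtain ⟨a', ha', b', hb', t, h1, h2, h3⟩ := hA s.l s.hl s.r s.hr x
      exact ⟨⟨a', b', ha', hb'⟩, h3, t, h1, h2⟩⟩)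
    (fun x => ⟨{s | x ∈ Set.range s.r}, fun s => by
      obtain ⟨a', ha', b', hb', t, h1, h2, h3⟩ := hA s.r s.hr s.l s.hl x
      exact ⟨⟨b', a', hb', ha'⟩, h3, t, h2, h1⟩⟩)
  let p : ℕ → Span A := Order.sequenceOfCofinals ⟨a, b, ha, hb⟩ D
  have hp : ∀ n, p n ≤ p (n + 1) := fun n =>
    Order.sequenceOfCofinals.monotone _ D (Nat.le_succ n)
  have hmem : ∀ i, p (Encodable.encode i + 1) ∈ (D i).carrier := fun i =>
    Order.sequenceOfCofinals.encode_mem _ D i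
  choose t ht1 ht2 using hp
  have hl : ∀ i j (h : i ≤ j) x, (p j).l (embSq t i j h x) = (p i).l x := by
    intro i j h x
    induction j, h using Nat.le_induction with
    | base => rw [embSq_self]; rfl
    | succ j h ih => rw [embSq_succ t _ _ h, Embedding.comp_apply, ht1, ih]
  have hr : ∀ i j (h : i ≤ j) x, (p j).r (embSq t i j h x) = (p i).r x := by
    intro i j h x
    induction j, h using Nat.le_induction with
    | base => rw [embSq_self]; rfl
    | succ j h ih => rw [embSq_succ t _ _ h, Embedding.comp_apply, ht2, ih]
  let Fl := Language.DirectLimit.lift L ℕ (fun _ => U) (embSq t) (fun n => (p n).l) hl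
  let Fr := Language.DirectLimit.lift L ℕ (fun _ => U) (embSq t) (fun n => (p n).r) hr
  obtain ⟨Gl, hGl⟩ := emb_bij Fl (by
    intro x
    obtain ⟨y, hy⟩ : x ∈ Set.range (p (Encodable.encode (Sum.inl x : V ⊕ V) + 1)).l :=
      hmem (Sum.inl x)
    exact ⟨Language.DirectLimit.of L ℕ (fun _ => U) (embSq t) _ y, by
      simp only [Fl]; rw [Language.DirectLimit.lift_of]; exact hy⟩)
  obtain ⟨Gr, hGr⟩ := emb_bij Fr (by
    intro x
    obtain ⟨y, hy⟩ : x ∈ Set.range (p (Encodable.encode (Sum.inr x : V ⊕ V) + 1)).r :=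
      hmem (Sum.inr x)
    exact ⟨Language.DirectLimit.of L ℕ (fun _ => U) (embSq t) _ y, by
      simp only [Fr]; rw [Language.DirectLimit.lift_of]; exact hy⟩)
  refine ⟨Gr.comp Gl.symm, fun x => ?_⟩
  have e1 : Gl (Language.DirectLimit.of L ℕ (fun _ => U) (embSq t) 0 x) = a x := by
    rw [hGl]; simp only [Fl]; rw [Language.DirectLimit.lift_of]; rfl
  have e2 : Gr (Language.DirectLimit.of L ℕ (fun _ => U) (embSq t) 0 x) = b x := by
    rw [hGr]; simp only [Fr]; rw [Language.DirectLimit.lift_of]; rfl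
  rw [← e1, Language.Equiv.comp_apply, Language.Equiv.symm_apply_apply, e2]

theorem step [Countable U] (hU : L.IsUltrahomogeneous U) {S : Set (U ↪[L] U)}
    (hS : AmalgMonoid S) (haut : ∀ g : U ≃[L] U, g.toEmbedding ∈ S)
    (hne : ∃ e ∈ S, ¬ Function.Surjective e) {K : Type} [Countable K] (h : K → (U ≃[L] U)) :
    ∃ (V : Type) (_ : L.Structure V), Nonempty (V ≃[L] U) ∧
      ∃ e : U ↪[L] V, ¬ Function.Surjective e ∧
        ∀ k, ∃ g : V ≃[L] V, ∀ x, g (e x) = e (h k x) := by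
  obtain ⟨e0, he0, hns⟩ := hne
  obtain ⟨T, hTc, hHT, hT⟩ := exists_countable_amalg hS
    (H := insert e0 (Set.range fun k => (h k).toEmbedding))
    ((Set.countable_range _).insert _)
    (Set.insert_subset he0 (by rintro _ ⟨k, rfl⟩; exact haut _))
  obtain ⟨u, hu, hgen⟩ := exists_generic hT hTc
  let V := Language.DirectLimit (fun _ : ℕ => U) (embSq u)
  let o : ℕ → (U ↪[L] V) := Language.DirectLimit.of L ℕ (fun _ => U) (embSq u)
  have ho : ∀ i j (h : i ≤ j) x, o j (embSq u i j h x) = o i x := fun i j h x =>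
    Language.DirectLimit.of_f (G := fun _ : ℕ => U) (f := embSq u)
  have hex : ∀ v : V, ∃ n x, o n x = v := fun v => Language.DirectLimit.exists_of v
  have hexn : ∀ v : V, ∀ m, ∃ n, m ≤ n ∧ ∃ x, o n x = v := by
    intro v m
    obtain ⟨n, x, hx⟩ := hex v
    exact ⟨max m n, le_max_left _ _, embSq u n _ (le_max_right _ _) x, by rw [ho, hx]⟩
  clear_value o
  have hVc : Countable V := by
    have : Function.Surjective (fun p : ℕ × U => o p.1 p.2) := fun v => by
      obtain ⟨n, x, hx⟩ := hex v
      exact ⟨(n, x), hx⟩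
    exact this.countable
  have hloc : LocU L U V := by
    intro s
    have : ∃ n, ∀ v ∈ s, ∃ x, o n x = v := by
      classical
      induction s using Finset.induction_on with
      | empty => exact ⟨0, by simp⟩
      | insert v s _ ih =>
        obtain ⟨n, hn⟩ := ih
        obtain ⟨m, hm, x, hx⟩ := hexn v n
        refine ⟨m, ?_⟩
        intro w hw
        rcases Finset.mem_insert.1 hw with rfl | hw
        · exact ⟨x, hx⟩
        · obtain ⟨y, hy⟩ := hn w hw
          exact ⟨embSq u n m hm y, by rw [ho, hy]⟩
    obtain ⟨n, hn⟩ := this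
    exact ⟨o n, hn⟩
  refine ⟨V, inferInstance, hloc.iso hU, o 0, ?_, ?_⟩
  · intro hsurj
    obtain ⟨m, hm, f', hf', e⟩ := hgen 0 e0 (hHT (Set.mem_insert _ _))
    apply hns
    intro y
    obtain ⟨x, hx⟩ := hsurj (o m (f' y))
    refine ⟨x, ?_⟩
    rw [← ho 0 m hm, ← e, Embedding.comp_apply] at hx
    exact f'.injective ((o m).injective hx)
  · intro k
    refine span_equiv {a : U ↪[L] V | ∃ n, ∃ f ∈ T, a = (o n).comp f} ?_ (o 0) ?_
      ((o 0).comp (h k).toEmbedding) ?_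
    · rintro a ⟨n, f, hf, rfl⟩ b ⟨l, g, hg, rfl⟩ x
      obtain ⟨N, hN, y, hy⟩ := hexn x n
      have hF := hT.comp _ (embSq_mem hT hu n N hN) _ hf
      obtain ⟨f', hf', g', hg', e1⟩ := hT.amalg _ hF g hg
      obtain ⟨m, hm, g'', hg'', e2⟩ := hgen l g' hg'
      refine ⟨o N, ⟨N, Embedding.refl L U, hT.one, rfl⟩, (o m).comp (g''.comp f'),
        ⟨m, _, hT.comp _ hg'' _ hf', rfl⟩,
        (embSq u n N hN).comp f, ?_, ?_, ⟨y, hy⟩⟩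
      · intro x
        simp only [Embedding.comp_apply]
        rw [ho]
      · intro x
        have e1' := congr_fun (congr_arg DFunLike.coe e1) x
        have e2' := congr_fun (congr_arg DFunLike.coe e2) (g x)
        simp only [Embedding.comp_apply] at e1' e2' ⊢
        rw [e1', e2', ho]
    · exact ⟨0, _, hT.one, rfl⟩
    · exact ⟨0, _, hHT (Set.mem_insert_of_mem _ ⟨k, rfl⟩), rfl⟩

end Step

section Chain

/-- `g` maps the first to the second coordinate for every pair in the list. -/
def Good {X : Type} {A : Set X} (g : A → A) (y : List (X × X)) : Prop :=
  ∀ z ∈ y, ∃ a : A, (a : X) = z.1 ∧ (g a : X) = z.2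

/-- A copy of `U` on a subset of `X`, with a marked automorphism for every finite partial
isomorphism. -/
structure Pt (L : FirstOrder.Language.{0, 0}) (U : Type) [L.Structure U] (X : Type) where
  A : Set X
  [str : L.Structure A]
  iso : Nonempty (A ≃[L] U)
  act : List (X × X) → (A ≃[L] A)
  full : ∀ y (g : A ≃[L] A), Good g y → Good (act y) y

attribute [instance] Pt.str

variable {L : FirstOrder.Language.{0, 0}} {U : Type} [L.Structure U] {X : Type}

/-- `g` extends the marked automorphism of `p` at `y`, if that one is good. -/
def Compat (p : Pt L U X) {B : Set X} (y : List (X × X)) (g : B → B) : Prop :=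
  Good (p.act y) y → ∀ (a : p.A) (b : B), (a : X) = b → (p.act y a : X) = g b

/-- Inclusion is an embedding. -/
def Incl (L : FirstOrder.Language.{0, 0}) {X : Type} (A B : Set X)
    [L.Structure A] [L.Structure B] : Prop :=
  ∃ e : A ↪[L] B, ∀ a, (e a : X) = a

def Pt.le (p q : Pt L U X) : Prop :=
  Incl L p.A q.A ∧ ∀ y, Compat p y (q.act y)

theorem Incl.sub {A B : Set X} [L.Structure A] [L.Structure B] (h : Incl L A B) : A ⊆ B := by
  obtain ⟨e, he⟩ := h
  intro x hx
  have := (e ⟨x, hx⟩).2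
  rwa [he ⟨x, hx⟩] at this

theorem Compat.good {p : Pt L U X} {B : Set X} (h0 : p.A ⊆ B) {y : List (X × X)} {g : B → B}
    (h : Compat p y g) (hg : Good (p.act y) y) : Good g y := by
  intro z hz
  obtain ⟨a, h1, h2⟩ := hg z hz
  exact ⟨⟨a, h0 a.2⟩, h1, by rw [← h2]; exact (h hg a ⟨a, h0 a.2⟩ rfl).symm⟩

theorem Pt.le_trans {p q r : Pt L U X} (h : p.le q) (h' : q.le r) : p.le r := by
  obtain ⟨⟨e, he⟩, h2⟩ := h
  obtain ⟨⟨e', he'⟩, h2'⟩ := h'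
  refine ⟨⟨e'.comp e, fun a => by simp [he, he']⟩, ?_⟩
  intro y hg a b hab
  have hs : p.A ⊆ q.A := Incl.sub ⟨e, he⟩
  rw [h2 y hg a ⟨a, hs a.2⟩ rfl]
  exact h2' y ((h2 y).good hs hg) _ _ hab

theorem Pt.le_refl (p : Pt L U X) : p.le p := by
  refine ⟨⟨Embedding.refl L _, fun _ => rfl⟩, ?_⟩
  intro y _ a b hab
  rw [Subtype.ext hab]

/-- Bundling an upper bound. -/
theorem Pt.bundle {ι : Type*} (F : ι → Pt L U X) (B : Set X) [L.Structure B]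
    (hiso : Nonempty (B ≃[L] U)) (hi : ∀ i, Incl L (F i).A B)
    (hc : ∀ y, ∃ g : B ≃[L] B, ∀ i, Compat (F i) y g) :
    ∃ q : Pt L U X, q.A = B ∧ ∀ i, (F i).le q := by
  have key : ∀ y, ∃ g : B ≃[L] B, (∀ i, Compat (F i) y g) ∧
      ∀ g' : B ≃[L] B, Good g' y → Good g y := by
    intro y
    by_cases h : ∃ i, Good ((F i).act y) y
    · obtain ⟨i, h⟩ := h
      obtain ⟨g, hg⟩ := hc y
      exact ⟨g, hg, fun _ _ => (hg i).good (hi i).sub h⟩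
    · by_cases h' : ∃ g' : B ≃[L] B, Good g' y
      · obtain ⟨g', h'⟩ := h'
        exact ⟨g', fun i hgi => (h ⟨i, hgi⟩).elim, fun _ _ => h'⟩
      · exact ⟨Language.Equiv.refl L B, fun i hgi => (h ⟨i, hgi⟩).elim,
          fun g' hg' => (h' ⟨g', hg'⟩).elim⟩
  choose act h1 h2 using key
  exact ⟨⟨B, hiso, act, h2⟩, rfl, fun i => ⟨hi i, fun y => h1 y i⟩⟩

theorem chain_union {ι : Type*} [LinearOrder ι] [Nonempty ι] (F : ι → Pt L U X)
    (hF : ∀ i j, i ≤ j → (F i).le (F j)) :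
    ∃ _ : L.Structure (⋃ i, (F i).A : Set X), (∀ i, Incl L (F i).A (⋃ i, (F i).A : Set X)) ∧
      ∀ y, ∃ g : (⋃ i, (F i).A : Set X) ≃[L] (⋃ i, (F i).A : Set X), ∀ i, Compat (F i) y g := by
  choose e he using fun i j h => (hF i j h).1
  have hds : DirectedSystem (fun i => (F i).A) (fun i j h => e i j h) :=
    ⟨fun i x => Subtype.ext (he _ _ _ _), fun i j k h1 h2 x => Subtype.ext (by simp only [he])⟩
  let o := Language.DirectLimit.of L ι (fun i => (F i).A) e
  have ho : ∀ i j (h : i ≤ j) x, o j (e i j h x) = o i x := fun i j h x =>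
    Language.DirectLimit.of_f (G := fun i => (F i).A) (f := e)
  have hex : ∀ v, ∃ i x, o i x = v := fun v => Language.DirectLimit.exists_of v
  have key : ∀ i j (a : (F i).A) (b : (F j).A), o i a = o j b ↔ (a : X) = b := by
    intro i j a b
    rw [← ho i (max i j) (le_max_left _ _), ← ho j (max i j) (le_max_right _ _),
      (o (max i j)).injective.eq_iff, Subtype.ext_iff, he, he]
  have hB : ∀ b : (⋃ i, (F i).A : Set X), ∃ i, (b : X) ∈ (F i).A :=
    fun b => Set.mem_iUnion.1 b.2
  choose ix hix using hB
  let ψ : (⋃ i, (F i).A : Set X) → Language.DirectLimit (fun i => (F i).A) e :=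
    fun b => o (ix b) ⟨b, hix b⟩
  have hψ : Function.Bijective ψ := by
    constructor
    · intro b c hbc
      exact Subtype.ext ((key _ _ _ _).1 hbc)
    · intro v
      obtain ⟨i, x, rfl⟩ := hex v
      exact ⟨⟨x, Set.mem_iUnion.2 ⟨i, x.2⟩⟩, (key _ _ _ _).2 rfl⟩
  let w := (_root_.Equiv.ofBijective ψ hψ).symm
  let str : L.Structure (⋃ i, (F i).A : Set X) := w.inducedStructure
  let w' : Language.DirectLimit (fun i => (F i).A) e ≃[L] (⋃ i, (F i).A : Set X) :=
    w.inducedStructureEquiv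
  have hw : ∀ i a, (w' (o i a) : X) = a := by
    intro i a
    have : ψ (w (o i a)) = o i a := 
      (_root_.Equiv.ofBijective ψ hψ).apply_symm_apply (o i a)
    exact (key _ _ _ _).1 this
  let inc : ∀ i, (F i).A ↪[L] (⋃ i, (F i).A : Set X) := fun i => w'.toEmbedding.comp (o i)
  have hinc : ∀ i a, (inc i a : X) = a := fun i a => hw i a
  refine ⟨str, fun i => ⟨inc i, hinc i⟩, ?_⟩
  intro y
  by_cases h : ∃ i, Good ((F i).act y) y
  swap
  · exact ⟨Language.Equiv.refl L _, fun i hi => (h ⟨i, hi⟩).elim⟩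
  obtain ⟨i0, h0⟩ := h
  have hgood : ∀ i, i0 ≤ i → Good ((F i).act y) y := fun i hi =>
    ((hF i0 i hi).2 y).good (hF i0 i hi).1.sub h0
  have hcomp : ∀ i j, i0 ≤ i → i0 ≤ j → ∀ (a : (F i).A) (b : (F j).A), (a : X) = b →
      ((F i).act y a : X) = (F j).act y b := by
    intro i j hi hj a b hab
    rcases le_total i j with h | h
    · exact (hF i j h).2 y (hgood i hi) a b hab
    · exact ((hF j i h).2 y (hgood j hj) b a hab.symm).symm
  let G : ∀ i, (F i).A ↪[L] (⋃ i, (F i).A : Set X) := fun i =>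
    (inc (max i i0)).comp (((F (max i i0)).act y).toEmbedding.comp (e i _ (le_max_left _ _)))
  have hG : ∀ i a, (G i a : X) = (F (max i i0)).act y (e i _ (le_max_left _ _) a) :=
    fun i a => hinc _ _
  let H := Language.DirectLimit.lift L ι (fun i => (F i).A) e G (by
    intro i j hij x
    apply Subtype.ext
    rw [hG, hG]
    exact hcomp _ _ (le_max_right _ _) (le_max_right _ _) _ _ (by simp only [he]))
  have hH : ∀ i a, H (o i a) = G i a := fun i a => Language.DirectLimit.lift_of ..
  obtain ⟨H', hH'⟩ := emb_bij (H.comp w'.symm.toEmbedding) (by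
    intro b
    let k := max (ix b) i0
    let b' : (F k).A := ⟨b, (hF _ k (le_max_left _ _)).1.sub (hix b)⟩
    refine ⟨w' (o k (((F k).act y).symm b')), Subtype.ext ?_⟩
    have : H.comp w'.symm.toEmbedding (w' (o k (((F k).act y).symm b'))) =
        H (o k (((F k).act y).symm b')) := by
      simp only [Embedding.comp_apply, Language.Equiv.coe_toEmbedding,
        Language.Equiv.symm_apply_apply]
    rw [this, hH, hG, hcomp _ k (le_max_right _ _) (le_max_right _ _) _
      (((F k).act y).symm b') (he _ _ _ _), Language.Equiv.apply_symm_apply])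
  refine ⟨H', fun i hi a b hab => ?_⟩
  have hb : b = w' (o i a) := Subtype.ext (by rw [hw, hab])
  have : H.comp w'.symm.toEmbedding (w' (o i a)) = H (o i a) := by
    simp only [Embedding.comp_apply, Language.Equiv.coe_toEmbedding,
      Language.Equiv.symm_apply_apply]
  rw [hH', hb, this, hH, hG]
  exact (hF i _ (le_max_left _ _)).2 y hi _ _ (he _ _ _ _).symm

theorem finite_in_chain {ι : Type*} [LinearOrder ι] [Nonempty ι] (F : ι → Pt L U X)
    (hF : ∀ i j, i ≤ j → (F i).le (F j)) (s : Finset X) (hs : ∀ x ∈ s, x ∈ ⋃ i, (F i).A) :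
    ∃ i, ∀ x ∈ s, x ∈ (F i).A := by
  classical
  induction s using Finset.induction_on with
  | empty => exact ⟨Classical.arbitrary ι, by simp⟩
  | insert v s _ ih =>
    obtain ⟨n, hn⟩ := ih (fun x hx => hs x (Finset.mem_insert_of_mem hx))
    obtain ⟨m, hm⟩ := Set.mem_iUnion.1 (hs v (Finset.mem_insert_self _ _))
    refine ⟨max n m, fun w hw => ?_⟩
    rcases Finset.mem_insert.1 hw with rfl | hw
    · exact (hF _ _ (le_max_right _ _)).1.sub hm
    · exact (hF _ _ (le_max_left _ _)).1.sub (hn w hw)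

theorem chain_locU {ι : Type*} [LinearOrder ι] [Nonempty ι] (F : ι → Pt L U X)
    (hF : ∀ i j, i ≤ j → (F i).le (F j)) [L.Structure (⋃ i, (F i).A : Set X)]
    (hi : ∀ i, Incl L (F i).A (⋃ i, (F i).A : Set X)) :
    LocU L U (⋃ i, (F i).A : Set X) := by
  classical
  intro s
  obtain ⟨i, h⟩ := finite_in_chain F hF (s.image Subtype.val) (by
    intro x hx
    obtain ⟨a, -, rfl⟩ := Finset.mem_image.1 hx
    exact a.2)
  obtain ⟨e, he⟩ := hi i
  obtain ⟨w⟩ := (F i).iso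
  refine ⟨e.comp w.symm.toEmbedding, fun x hx => ?_⟩
  have hx' := h x (Finset.mem_image_of_mem _ hx)
  exact ⟨w ⟨x, hx'⟩, by
    simp only [Embedding.comp_apply, Language.Equiv.coe_toEmbedding,
      Language.Equiv.symm_apply_apply]
    exact Subtype.ext (he _)⟩

theorem Pt.countable [Countable U] (p : Pt L U X) : p.A.Countable := by
  obtain ⟨w⟩ := p.iso
  exact Set.countable_coe_iff.1 w.injective.countable

theorem chain_bound [Countable U] (hU : L.IsUltrahomogeneous U) {ι : Type*} [LinearOrder ι]
    [Nonempty ι] [Countable ι] (F : ι → Pt L U X)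
    (hF : ∀ i j, i ≤ j → (F i).le (F j)) : ∃ q : Pt L U X, ∀ i, (F i).le q := by
  obtain ⟨_, h1, h2⟩ := chain_union F hF
  have : Countable (⋃ i, (F i).A : Set X) :=
    (Set.countable_iUnion fun i => (F i).countable).to_subtype
  obtain ⟨q, -, hq⟩ := Pt.bundle F _ ((chain_locU F hF h1).iso hU) h1 h2
  exact ⟨q, hq⟩

end Chain

section Final
variable {L : FirstOrder.Language.{0, 0}} {U : Type} [L.Structure U] {X : Type}

/-- Realize an extension of `A ⊆ X` inside `X`. -/
theorem exists_realize {A : Set X} (hA : A.Countable) (hX : Uncountable X) {V : Type} [Countable V]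
    (e : A → V) (he : Function.Injective e) :
    ∃ j : V → X, Function.Injective j ∧ ∀ a, j (e a) = a := by
  classical
  have hinf : Infinite (Aᶜ : Set X) := by
    rw [Set.infinite_coe_iff]
    intro hfin
    have : (Set.univ : Set X).Countable := by
      rw [← Set.union_compl_self A]
      exact hA.union hfin.countable
    exact (not_countable_iff.2 hX) (Set.countable_univ_iff.1 this)
  obtain ⟨c, hc⟩ := exists_injective_nat V
  let n := Infinite.natEmbedding (Aᶜ : Set X)
  have hj : ∀ v, ∃ x : X, (∀ a, e a = v → x = a) ∧ ((∀ a, e a ≠ v) → x = n (c v)) := by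
    intro v
    by_cases h : ∃ a, e a = v
    · obtain ⟨a, rfl⟩ := h
      exact ⟨a, fun b hb => by rw [he hb], fun hb => (hb a rfl).elim⟩
    · push Not at h
      exact ⟨n (c v), fun a ha => (h a ha).elim, fun _ => rfl⟩
  choose j hj1 hj2 using hj
  refine ⟨j, ?_, fun a => hj1 _ a rfl⟩
  intro v w hvw
  by_cases hv : ∃ a, e a = v <;> by_cases hw : ∃ a, e a = w
  · obtain ⟨a, rfl⟩ := hv
    obtain ⟨b, rfl⟩ := hw
    rw [hj1 _ a rfl, hj1 _ b rfl] at hvw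
    rw [Subtype.ext hvw]
  · obtain ⟨a, rfl⟩ := hv
    push Not at hw
    rw [hj1 _ a rfl, hj2 _ hw] at hvw
    exact ((n (c w)).2 (hvw ▸ a.2)).elim
  · obtain ⟨a, rfl⟩ := hw
    push Not at hv
    rw [hj1 _ a rfl, hj2 _ hv] at hvw
    exact ((n (c v)).2 (hvw ▸ a.2)).elim
  · push Not at hv hw
    rw [hj2 _ hv, hj2 _ hw] at hvw
    exact hc (n.injective (Subtype.ext hvw))

theorem Pt.extend [Countable U] (hX : Uncountable X) (hU : L.IsUltrahomogeneous U)
    {S : Set (U ↪[L] U)}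
    (hS : AmalgMonoid S) (haut : ∀ g : U ≃[L] U, g.toEmbedding ∈ S)
    (hne : ∃ e ∈ S, ¬ Function.Surjective e) (p : Pt L U X) :
    ∃ q : Pt L U X, p.le q ∧ ∃ x ∈ q.A, x ∉ p.A := by
  have hpc : Countable p.A := p.countable.to_subtype
  obtain ⟨w⟩ := p.iso
  let m : List (p.A × p.A) → List (X × X) := List.map (Prod.map Subtype.val Subtype.val)
  obtain ⟨V, _, ⟨v⟩, e, he, hg⟩ := step hU hS haut hne
    (fun k : List (p.A × p.A) => (w.comp (p.act (m k))).comp w.symm)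
  have hVc : Countable V := v.injective.countable
  obtain ⟨j, hj, hje⟩ := exists_realize p.countable hX (fun a : p.A => e (w a))
    (e.injective.comp w.injective)
  let r := _root_.Equiv.ofInjective j hj
  let str : L.Structure (Set.range j) := r.inducedStructure
  let r' : V ≃[L] (Set.range j) := r.inducedStructureEquiv
  have hr : ∀ v, (r' v : X) = j v := fun v => rfl
  obtain ⟨q, hqA, hq⟩ := Pt.bundle (fun _ : Unit => p) (Set.range j) ⟨v.comp r'.symm⟩
    (fun _ => ⟨r'.toEmbedding.comp (e.comp w.toEmbedding), fun a => hje a⟩) (by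
      intro y
      by_cases hy : Good (p.act y) y
      swap
      · exact ⟨Language.Equiv.refl L _, fun _ h => (hy h).elim⟩
      have : y ∈ Set.range m := by
        rw [Set.range_list_map]
        intro z hz
        obtain ⟨a, h1, h2⟩ := hy z hz
        exact ⟨(a, p.act y a), Prod.ext h1 h2⟩
      obtain ⟨k, rfl⟩ := this
      obtain ⟨g, hgk⟩ := hg k
      refine ⟨(r'.comp g).comp r'.symm, fun _ _ a b hab => ?_⟩
      have hb : b = r' (e (w a)) := Subtype.ext (by rw [hr, hje, hab])
      rw [hb]
      simp only [Language.Equiv.comp_apply, Language.Equiv.symm_apply_apply]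
      rw [hgk, hr]
      simp only [Language.Equiv.comp_apply, Language.Equiv.symm_apply_apply]
      rw [hje])
  refine ⟨q, hq (), ?_⟩
  by_contra! hcon
  apply he
  intro x
  have hx : j x ∈ p.A := hcon (j x) (by rw [hqA]; exact ⟨x, rfl⟩)
  exact ⟨w ⟨j x, hx⟩, hj (hje ⟨j x, hx⟩)⟩

theorem Pt.exists_base [Countable U] (hX : Uncountable X) (hU : L.IsUltrahomogeneous U) :
    Nonempty (Pt L U X) := by
  obtain ⟨j, hj, -⟩ := exists_realize (A := (∅ : Set X)) Set.countable_empty hX (V := U)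
    (fun a => a.2.elim) (fun a => a.2.elim)
  let r := _root_.Equiv.ofInjective j hj
  let str : L.Structure (Set.range j) := r.inducedStructure
  let r' : U ≃[L] (Set.range j) := r.inducedStructureEquiv
  obtain ⟨q, -, -⟩ := Pt.bundle (U := U) (fun x : Empty => (x.elim : Pt L U X)) (Set.range j)
    ⟨r'.symm⟩ (fun x => x.elim) (fun y => ⟨Language.Equiv.refl L _, fun x => x.elim⟩)
  exact ⟨q⟩

theorem exists_chain {I : Type*} [LinearOrder I] [WellFoundedLT I] {P : Type*} [Nonempty P]
    (R : P → P → Prop)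
    (h : ∀ j : I, ∀ f : Set.Iio j → P, (∀ a b, a < b → R (f a) (f b)) → ∃ p, ∀ a, R (f a) p) :
    ∃ f : I → P, ∀ i j, i < j → R (f i) (f j) := by
  classical
  let Φ : ∀ j : I, (∀ i : I, i < j → P) → P := fun j ih =>
    if hp : ∃ p, ∀ i (hi : i < j), R (ih i hi) p then hp.choose else Classical.arbitrary P
  let f : I → P := WellFounded.fix (wellFounded_lt (α := I)) Φ
  have hf : ∀ j, f j = Φ j (fun i _ => f i) := fun j => WellFounded.fix_eq _ _ _
  refine ⟨f, ?_⟩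
  have main : ∀ j, ∀ i, i < j → R (f i) (f j) := by
    intro j
    induction j using WellFoundedLT.induction with
    | ind j ih =>
      have hp : ∃ p, ∀ i (hi : i < j), R (f i) p := by
        obtain ⟨p, hp⟩ := h j (fun a => f a.1) (fun a b hab => ih b.1 b.2 a.1 hab)
        exact ⟨p, fun i hi => hp ⟨i, hi⟩⟩
      intro i hi
      have : f j = hp.choose := by
        rw [hf]
        exact dif_pos hp
      rw [this]
      exact hp.choose_spec i hi
  exact fun i j => main j i

theorem hom_ext {M N : Type} [L.Structure M] [L.Structure N] (hM : L.IsUltrahomogeneous M)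
    (hN : Structure.FG L N) (f g : N ↪[L] M) : ∃ t : M ≃[L] M, ∀ x, t (g x) = f x := by
  obtain ⟨t, ht⟩ := hM g.toHom.range (hN.range _) (f.comp g.equivRange.symm.toEmbedding)
  refine ⟨t, fun x => ?_⟩
  have := congr_fun (congr_arg DFunLike.coe ht) (g.equivRange x)
  simp only [Embedding.comp_apply, Language.Equiv.coe_toEmbedding,
    Language.Equiv.symm_apply_apply] at this
  rw [this]
  rfl

theorem chain_ultrahom {ι : Type*} [LinearOrder ι] [Nonempty ι] (hU : L.IsUltrahomogeneous U)
    (F : ι → Pt L U X)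
    (hF : ∀ i j, i ≤ j → (F i).le (F j)) [L.Structure (⋃ i, (F i).A : Set X)]
    (hi : ∀ i, Incl L (F i).A (⋃ i, (F i).A : Set X))
    (hg : ∀ y, ∃ g : (⋃ i, (F i).A : Set X) ≃[L] (⋃ i, (F i).A : Set X),
      ∀ i, Compat (F i) y g) :
    L.IsUltrahomogeneous (⋃ i, (F i).A : Set X) := by
  classical
  intro S hS f
  have hS' := (Substructure.fg_iff_structure_fg S).1 hS
  obtain ⟨⟨s, hs⟩⟩ := id hS'
  obtain ⟨i, hmem⟩ := finite_in_chain F hF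
    (s.image (fun x : S => (x.1 : X)) ∪ s.image (fun x : S => (f x : X))) (by
      intro x hx
      rcases Finset.mem_union.1 hx with hx | hx
      · obtain ⟨a, -, rfl⟩ := Finset.mem_image.1 hx
        exact a.1.2
      · obtain ⟨a, -, rfl⟩ := Finset.mem_image.1 hx
        exact (f a).2)
  obtain ⟨e, he⟩ := hi i
  have hfac : ∀ g : S ↪[L] (⋃ i, (F i).A : Set X), (∀ x ∈ s, (g x : X) ∈ (F i).A) →
      ∃ g0 : S ↪[L] (F i).A, ∀ x, e (g0 x) = g x := by
    intro g h
    refine emb_factor g e (fun x => ?_)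
    have hle : Substructure.closure L (s : Set S) ≤ e.toHom.range.comap g.toHom := by
      rw [Substructure.closure_le]
      intro z hz
      exact ⟨⟨g z, h z hz⟩, Subtype.ext (he _)⟩
    rw [hs] at hle
    exact hle (Substructure.mem_top x)
  obtain ⟨f0, hf0⟩ := hfac f (fun x hx => hmem _ (Finset.mem_union_right _
    (Finset.mem_image_of_mem (fun x : S => (f x : X)) hx)))
  obtain ⟨g0, hg0⟩ := hfac S.subtype (fun x hx => hmem _ (Finset.mem_union_left _
    (Finset.mem_image_of_mem (fun x : S => (x.1 : X)) hx)))
  obtain ⟨w⟩ := (F i).iso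
  obtain ⟨t, ht⟩ := hom_ext (ultrahom_iso w hU) hS' f0 g0
  let y : List (X × X) := s.toList.map
    (fun x : S => ((x.1 : X), (f x : X)))
  have hgood : Good ((F i).act y) y := by
    apply (F i).full y t
    intro z hz
    obtain ⟨x, -, rfl⟩ := List.mem_map.1 hz
    refine ⟨g0 x, ?_, ?_⟩
    · rw [← he, hg0]; rfl
    · rw [ht, ← he, hf0]
  obtain ⟨g, hgc⟩ := hg y
  refine ⟨g, ?_⟩
  have hgood' : Good g y := (hgc i).good (hi i).sub hgood
  have : f.toHom = (g.toEmbedding.comp S.subtype).toHom := by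
    refine Hom.eq_of_eqOn_dense hs ?_
    intro x hx
    obtain ⟨a, h1, h2⟩ := hgood' _ (List.mem_map.2 ⟨x, Finset.mem_toList.2 hx, rfl⟩)
    have ha : a = x := Subtype.ext h1
    subst ha
    exact Subtype.ext h2.symm
  ext x
  exact congr_arg Subtype.val (congr_fun (congr_arg DFunLike.coe this) x)

end Final

/-- If `U` is a countable ultrahomogeneous structure in a countable language
and `S` is a set of self-embeddings of `U` containing the identity and all automorphisms,
closed under composition, containing a non-surjective embedding, and having the amalgamation
property, then there is an ultrahomogeneous structure `W` of cardinality `ℵ₁` with the same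
age as `U` which is the union of an increasing chain, indexed by the countable ordinals,
of substructures isomorphic to `U`. -/
theorem statement1 (L : FirstOrder.Language.{0, 0}) [Countable L.Symbols]
    (U : Type) [L.Structure U] [Countable U]
    (hU : L.IsUltrahomogeneous U)
    (S : Set (U ↪[L] U))
    (hid : Embedding.refl L U ∈ S)
    (haut : ∀ g : U ≃[L] U, g.toEmbedding ∈ S)
    (hcomp : ∀ f ∈ S, ∀ g ∈ S, Embedding.comp f g ∈ S)
    (hne : ∃ e ∈ S, ¬ Function.Surjective e)
    (hAP : ∀ f ∈ S, ∀ g ∈ S, ∃ f' ∈ S, ∃ g' ∈ S,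
      Embedding.comp f' f = Embedding.comp g' g) :
    ∃ W : Bundled.{0} L.Structure, #W = aleph 1 ∧
      L.IsUltrahomogeneous W ∧ L.age W = L.age U ∧
      ∃ C : {o : Ordinal.{0} // o < (aleph 1).ord} → L.Substructure W,
        Monotone C ∧ (⨆ o, C o = (⊤ : L.Substructure W)) ∧
        ∀ o, Nonempty ((C o) ≃[L] U) := by
  classical
  let X : Type := (aleph 1 : Cardinal.{0}).out
  have hXc : #X = aleph 1 := Cardinal.mk_out _
  have hX : Uncountable X := by
    rw [← Cardinal.aleph0_lt_mk_iff, hXc]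
    exact Cardinal.aleph0_lt_aleph_one
  have hS : AmalgMonoid S := ⟨hid, hcomp, hAP⟩
  have hbase : Nonempty (Pt L U X) := Pt.exists_base hX hU
  let I := {o : Ordinal.{0} // o < (aleph 1).ord}
  have hpos : (0 : Ordinal.{0}) < (aleph 1).ord :=
    (Cardinal.isSuccLimit_ord (aleph0_le_aleph 1)).bot_lt
  have : Nonempty I := ⟨⟨0, hpos⟩⟩
  have hsucc : ∀ o : I, Order.succ o.1 < (aleph 1).ord := fun o =>
    (Cardinal.isSuccLimit_ord (aleph0_le_aleph 1)).succ_lt o.2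
  have hIio : ∀ j : I, Countable (Set.Iio j) := by
    intro j
    have h1 : Countable (Set.Iio j.1) := by
      rw [← Cardinal.mk_le_aleph0_iff, Cardinal.mk_Iio_ordinal, Cardinal.lift_le_aleph0]
      have := Cardinal.lt_ord.1 j.2
      exact Order.lt_succ_iff.1 (this.trans_eq Cardinal.succ_aleph0.symm)
    exact Function.Injective.countable
      (f := fun x : Set.Iio j => (⟨x.1.1, x.2⟩ : Set.Iio j.1)) (by
        intro x y hxy
        have h2 : x.1.1 = y.1.1 := congr_arg (fun z : Set.Iio j.1 => z.1) hxy
        exact Subtype.ext (Subtype.ext h2))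
  obtain ⟨F, hF⟩ := exists_chain (I := I)
    (fun p q : Pt L U X => p.le q ∧ ∃ x ∈ q.A, x ∉ p.A) (by
      intro j f hf
      have := hIio j
      rcases isEmpty_or_nonempty (Set.Iio j) with hE | hE
      · exact ⟨Classical.arbitrary _, fun a => (hE.false a).elim⟩
      · obtain ⟨q, hq⟩ := chain_bound hU f (by
          intro a b hab
          rcases hab.lt_or_eq with h | rfl
          · exact (hf a b h).1
          · exact Pt.le_refl _)
        obtain ⟨r, hr, x, hx, hx'⟩ := Pt.extend hX hU hS haut hne q
        exact ⟨r, fun a => ⟨Pt.le_trans (hq a) hr, x, hx, fun h => hx' ((hq a).1.sub h)⟩⟩)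
  have hle : ∀ i j, i ≤ j → (F i).le (F j) := by
    intro i j hij
    rcases hij.lt_or_eq with h | rfl
    · exact (hF i j h).1
    · exact Pt.le_refl _
  obtain ⟨str, hi, hg⟩ := chain_union F hle
  have hcard : #(⋃ i, (F i).A : Set X) = aleph 1 := by
    apply le_antisymm
    · rw [← hXc]
      exact Cardinal.mk_set_le _
    · by_contra hlt
      rw [not_le, ← Cardinal.succ_aleph0, Order.lt_succ_iff, Cardinal.mk_le_aleph0_iff] at hlt
      choose x hx hx' using fun o : I =>
        (hF o ⟨Order.succ o.1, hsucc o⟩ (Subtype.mk_lt_mk.2 (Order.lt_succ o.1))).2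
      have hlt' : ∀ a b : I, a < b → x a ≠ x b := by
        intro a b hab h
        refine hx' b ?_
        rw [← h]
        exact (hle ⟨Order.succ a.1, hsucc a⟩ b (Subtype.mk_le_mk.2 (Order.succ_le_of_lt (Subtype.coe_lt_coe.2 hab)))).1.sub (hx a)
      have hinj : Function.Injective
          (fun o : I => (⟨x o, Set.mem_iUnion.2 ⟨_, hx o⟩⟩ : (⋃ i, (F i).A : Set X))) := by
        intro a b hab
        have hab' : x a = x b := congr_arg Subtype.val hab
        rcases lt_trichotomy a b with h | h | h
        · exact (hlt' a b h hab').elim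
        · exact h
        · exact (hlt' b a h hab'.symm).elim
      have hIc : Countable I := hinj.countable
      have h2 : #(Set.Iio (aleph 1 : Cardinal.{0}).ord) ≤ ℵ₀ := Cardinal.mk_le_aleph0_iff.2 hIc
      rw [Cardinal.mk_Iio_ordinal, Cardinal.lift_le_aleph0, Cardinal.card_ord] at h2
      exact absurd h2 (not_le.2 Cardinal.aleph0_lt_aleph_one)
  refine ⟨⟨(⋃ i, (F i).A : Set X), str⟩, hcard, chain_ultrahom hU F hle hi hg,
    (chain_locU F hle hi).age, ?_⟩
  choose e he using hi
  refine ⟨fun o => (e o).toHom.range, ?_, ?_, ?_⟩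
  · rintro a b hab _ ⟨z, rfl⟩
    exact ⟨⟨z, (hle a b hab).1.sub z.2⟩, Subtype.ext ((he b _).trans (he a z).symm)⟩
  · rw [eq_top_iff]
    intro z _
    obtain ⟨o, ho⟩ := Set.mem_iUnion.1 z.2
    exact le_iSup (fun o => (e o).toHom.range) o ⟨⟨z, ho⟩, Subtype.ext (he o _)⟩
  · intro o
    obtain ⟨w⟩ := (F o).iso
    exact ⟨w.comp (e o).equivRange.symm⟩
end

section
/- Let L be a countable first-order language, let F be a Fraïssé class of L-structures and let U be its Fraïssé limit. Then the following are equivalent: (1) there exists a self-embedding e : U → U that is not surjective; (2) there exists an uncountable L-structure X that is injective and whose age equals F. -/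
open FirstOrder Language Cardinal CategoryTheory

namespace Stmt3

open FirstOrder.Language.Structure FirstOrder.Language.Substructure

variable {L : FirstOrder.Language.{0, 0}}

/-- Injectivity as in the statement. -/
def Inj (X : Type) [L.Structure X] : Prop :=
  ∀ (A B : Bundled.{0} L.Structure), A ∈ L.age X → B ∈ L.age X →
    ∀ (i : A ↪[L] B) (e : A ↪[L] X), ∃ g : B ↪[L] X, g.comp i = e

theorem Inj.extPair {X Y : Type} [L.Structure X] [L.Structure Y] (hY : Inj (L := L) Y)
    (h : L.age X ⊆ L.age Y) : L.IsExtensionPair X Y := by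
  intro ⟨f, f_FG⟩ m
  let S := f.dom ⊔ closure L {m}
  have S_FG : S.FG := f_FG.sup (Substructure.fg_closure_singleton _)
  have hS : (⟨S, inferInstance⟩ : Bundled.{0} L.Structure) ∈ L.age Y :=
    h (age.fg_substructure S_FG)
  have hD : (⟨f.dom, inferInstance⟩ : Bundled.{0} L.Structure) ∈ L.age Y :=
    h (age.fg_substructure f_FG)
  obtain ⟨g, g_eq⟩ := hY ⟨f.dom, inferInstance⟩ ⟨S, inferInstance⟩ hD hS
    (inclusion (le_sup_left : _ ≤ S)) ((subtype f.cod).comp f.toEquiv.toEmbedding)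
  let g : S ↪[L] Y := g
  change g.comp (inclusion (le_sup_left : _ ≤ S)) = _ at g_eq
  refine ⟨⟨⟨S, g.toHom.range, g.equivRange⟩, S_FG⟩,
    subset_closure.trans (le_sup_right : _ ≤ S) (Set.mem_singleton m), ⟨le_sup_left, ?_⟩⟩
  rw [← g_eq]
  ext x
  simp

theorem Inj.emb {X Y : Type} [L.Structure X] [L.Structure Y] [Countable X] (hY : Inj (L := L) Y)
    (h : L.age X ⊆ L.age Y) : Nonempty (X ↪[L] Y) := by
  obtain ⟨_, ⟨e⟩⟩ := h (age.fg_substructure (fg_bot (L := L) (M := X)))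
  let e : (⊥ : L.Substructure X) ↪[L] Y := e
  let v : X ≃ₚ[L] Y := ⟨⊥, e.toHom.range, e.equivRange⟩
  exact ⟨(embedding_from_cg cg_of_countable ⟨v, fg_bot⟩ (hY.extPair h)).choose⟩

theorem Inj.homog {X : Type} [L.Structure X] [Countable X] (hX : Inj (L := L) X) :
    L.IsUltrahomogeneous X :=
  (isUltrahomogeneous_iff_IsExtensionPair cg_of_countable).2 (hX.extPair subset_rfl)

theorem inj_of_homog {X : Type} [L.Structure X] (hX : L.IsUltrahomogeneous X) :
    Inj (L := L) X := by
  intro A B hA hB i e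
  obtain ⟨f, hf⟩ := hX.extend_embedding hA.1 (h := hB.2) e i
  exact ⟨f, hf.symm⟩

theorem Inj.equiv {X Y : Type} [L.Structure X] [L.Structure Y] (hX : Inj (L := L) X)
    (f : X ≃[L] Y) : Inj (L := L) Y := by
  intro A B hA hB i e
  rw [← f.age_eq_age] at hA hB
  obtain ⟨g, hg⟩ := hX A B hA hB i (f.symm.toEmbedding.comp e)
  refine ⟨f.toEmbedding.comp g, ?_⟩
  ext a
  have := DFunLike.congr_fun hg a
  simp only [Embedding.comp_apply, FirstOrder.Language.Equiv.coe_toEmbedding] at this ⊢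
  rw [this]; simp

theorem inj_directLimit {ι : Type} [Preorder ι] [IsDirectedOrder ι] [Nonempty ι]
    (G : ι → Type) [∀ i, L.Structure (G i)] (f : ∀ i j, i ≤ j → G i ↪[L] G j)
    [DirectedSystem G fun i j h => f i j h] (K : Set (Bundled.{0} L.Structure))
    (hG : ∀ i, Inj (L := L) (G i)) (hK : ∀ i, L.age (G i) = K) :
    Inj (L := L) (Language.DirectLimit G f) ∧ L.age (Language.DirectLimit G f) = K := by
  have hage : L.age (Language.DirectLimit G f) = K := by
    rw [age_directLimit]; simp only [hK]; exact Set.iUnion_const K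
  refine ⟨?_, hage⟩
  intro A B hA hB k e
  rw [hage] at hB
  obtain ⟨i, T, hT⟩ := Language.DirectLimit.exists_fg_substructure_in_Sigma e.toHom.range
    (hA.1.range e.toHom)
  rw [hage] at hA
  have hle : e.toHom.range ≤ (Language.DirectLimit.of L ι G f i).toHom.range := by
    rw [← hT, Hom.range_eq_map]
    exact (Substructure.gc_map_comap _).monotone_l le_top
  let o := Language.DirectLimit.of L ι G f i
  let e' : A ↪[L] G i := o.equivRange.symm.toEmbedding.comp
    ((Substructure.inclusion hle).comp e.equivRange.toEmbedding)
  have he' : ∀ a, o (e' a) = e a := by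
    intro a
    have h : o.equivRange (e' a) = Substructure.inclusion hle (e.equivRange a) :=
      o.equivRange.apply_symm_apply _
    have := congrArg Subtype.val h
    simpa using this
  obtain ⟨g, hg⟩ := hG i A B (by rwa [hK]) (by rwa [hK]) k e'
  refine ⟨o.comp g, ?_⟩
  ext a
  rw [← he', ← hg]
  rfl

/-- Structures on subsets of the reals. -/
structure Obj (K : Set (Bundled.{0} L.Structure)) where
  carrier : Set ℝ
  str : L.Structure carrier
  inj : Inj (L := L) carrier
  age : L.age carrier = K

attribute [instance] Obj.str

instance (K : Set (Bundled.{0} L.Structure)) : Preorder (Obj K) where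
  le A B := ∃ f : A.carrier ↪[L] B.carrier, ∀ a, (f a : ℝ) = a
  le_refl A := ⟨Embedding.refl L _, fun _ => rfl⟩
  le_trans A B C := by
    rintro ⟨f, hf⟩ ⟨g, hg⟩
    exact ⟨g.comp f, fun a => by simp [hf, hg]⟩

theorem exists_obj {K : Set (Bundled.{0} L.Structure)} {X : Type} [L.Structure X]
    (hX : Inj (L := L) X) (hK : L.age X = K) (κ : X → ℝ) (hκ : Function.Injective κ) :
    ∃ (N : Obj K) (g : X ≃[L] N.carrier), ∀ x, (g x : ℝ) = κ x := by
  let E := _root_.Equiv.ofInjective κ hκ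
  let _ : L.Structure (Set.range κ) := E.inducedStructure
  let g : X ≃[L] (Set.range κ) := E.inducedStructureEquiv
  exact ⟨⟨Set.range κ, inferInstance, hX.equiv g, by rw [← g.age_eq_age, hK]⟩, g, fun x => rfl⟩

theorem chain_bdd {K : Set (Bundled.{0} L.Structure)} (c : Set (Obj K)) (hc : IsChain (· ≤ ·) c)
    (hne : c.Nonempty) : BddAbove c := by
  have : Nonempty c := hne.to_subtype
  have : IsDirectedOrder c := by
    constructor
    exact hc.directed
  let G : c → Type := fun i => i.1.carrier
  let _ : ∀ i, L.Structure (G i) := fun i => i.1.str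
  have hle : ∀ i j : c, i ≤ j → ∃ f : G i ↪[L] G j, ∀ a, ((f a).1 : ℝ) = a.1 := fun i j h => h
  choose f hf using hle
  have : DirectedSystem G fun i j h => f i j h :=
    ⟨fun i x => Subtype.ext (hf _ _ _ _), fun _ _ _ _ _ x => Subtype.ext (by simp only [hf])⟩
  obtain ⟨h1, h2⟩ := inj_directLimit G f K (fun i => i.1.inj) (fun i => i.1.age)
  have hcomp : ∀ (i j : c) (x : G i) (y : G j),
      Language.DirectLimit.of L c G f i x = Language.DirectLimit.of L c G f j y ↔ x.1 = y.1 := by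
    intro i j x y
    obtain ⟨k, hik, hjk⟩ := exists_ge_ge i j
    rw [← Language.DirectLimit.of_f (hij := hik), ← Language.DirectLimit.of_f (hij := hjk),
      (Language.DirectLimit.of L c G f k).injective.eq_iff, Subtype.ext_iff, hf, hf]
  choose idx pt hpt using fun z : Language.DirectLimit G f => Language.DirectLimit.exists_of z
  obtain ⟨N, g, hg⟩ := exists_obj h1 h2 (fun z => (pt z).1) (by
    intro z w h
    rw [← hpt z, ← hpt w]
    exact (hcomp _ _ _ _).2 h)
  refine ⟨N, fun A hA => ⟨g.toEmbedding.comp (Language.DirectLimit.of L c G f ⟨A, hA⟩), fun a => ?_⟩⟩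
  rw [Embedding.comp_apply, FirstOrder.Language.Equiv.coe_toEmbedding, hg]
  exact (hcomp _ _ _ _).1 (hpt _)

theorem forward [Countable L.Symbols]
    (K : Set (Bundled.{0} L.Structure)) (U : Type) [L.Structure U] [Countable U]
    (hU : IsFraisseLimit K U) (e : U ↪[L] U) (he : ¬ Function.Surjective e) :
    ∃ M : Obj K, ¬ M.carrier.Countable := by
  have hUI : Inj (L := L) U := inj_of_homog hU.ultrahomogeneous
  obtain ⟨c, hc⟩ := exists_injective_nat U
  obtain ⟨N0, -, -⟩ := exists_obj hUI hU.age (fun u => (c u : ℝ))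
    (Nat.cast_injective.comp hc)
  have : Nonempty (Obj K) := ⟨N0⟩
  obtain ⟨M, hM⟩ := zorn_le_nonempty (α := Obj K) chain_bdd
  refine ⟨M, fun hcount => ?_⟩
  have : Countable M.carrier := hcount
  obtain ⟨q⟩ := IsFraisseLimit.nonempty_equiv (K := K) ⟨M.inj.homog, M.age⟩ hU
  let j : M.carrier ↪[L] U := e.comp q.toEmbedding
  have hinf : (M.carrierᶜ).Infinite := by
    intro hfin
    apply Cardinal.not_countable_real
    rw [← Set.union_compl_self M.carrier]
    exact hcount.union hfin.countable
  let d : ℕ ↪ (M.carrierᶜ : Set ℝ) := hinf.natEmbedding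
  classical
  let κ : U → ℝ := fun u => if h : ∃ m, j m = u then (h.choose : ℝ) else d (c u)
  have κ1 : ∀ m, κ (j m) = m := by
    intro m
    have h : ∃ m', j m' = j m := ⟨m, rfl⟩
    simp only [κ, dif_pos h]
    exact congrArg _ (j.injective h.choose_spec)
  have κ2 : ∀ u, (¬ ∃ m, j m = u) → κ u = d (c u) := fun u h => by simp only [κ, dif_neg h]
  have hκ : Function.Injective κ := by
    intro u v huv
    by_cases hu : ∃ m, j m = u <;> by_cases hv : ∃ m, j m = v
    · obtain ⟨m, rfl⟩ := hu
      obtain ⟨n, rfl⟩ := hv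
      rw [κ1, κ1] at huv
      rw [Subtype.ext huv]
    · obtain ⟨m, rfl⟩ := hu
      rw [κ1, κ2 v hv] at huv
      exact ((d (c v)).2 (huv ▸ m.2)).elim
    · obtain ⟨m, rfl⟩ := hv
      rw [κ1, κ2 u hu] at huv
      exact ((d (c u)).2 (huv ▸ m.2)).elim
    · rw [κ2 u hu, κ2 v hv] at huv
      exact hc (d.injective (Subtype.ext huv))
  obtain ⟨N, g, hg⟩ := exists_obj hUI hU.age κ hκ
  have hMN : M ≤ N := ⟨g.toEmbedding.comp j, fun a => by
    rw [Embedding.comp_apply, FirstOrder.Language.Equiv.coe_toEmbedding, hg, κ1]⟩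
  obtain ⟨p, hp⟩ := hM hMN
  apply he
  intro u
  by_contra hu
  have hu' : ¬ ∃ m, j m = u := fun ⟨m, hm⟩ => hu ⟨q m, hm⟩
  have h1 := hp (g u)
  rw [hg, κ2 u hu'] at h1
  exact (d (c u)).2 (h1 ▸ (p (g u)).2)

theorem backward [Countable L.Symbols]
    (K : Set (Bundled.{0} L.Structure)) (U : Type) [L.Structure U] [Countable U]
    (hU : IsFraisseLimit K U) (X : Type) [L.Structure X] (hX : ¬ Countable X)
    (hI : Inj (L := L) X) (hK : L.age X = K) :
    ∃ e : U ↪[L] U, ¬ Function.Surjective e := by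
  obtain ⟨f⟩ := hI.emb (X := U) (by rw [hU.age, hK])
  have hr : ∃ x, x ∉ Set.range f := by
    by_contra! h
    exact hX (Function.Surjective.countable (f := f) h)
  obtain ⟨x, hx⟩ := hr
  let S := closure L (Set.range f ∪ {x})
  have hS : S.CG := cg_closure ((Set.countable_range f).union (Set.countable_singleton x))
  have : Countable S := Substructure.cg_iff_countable.1 hS
  obtain ⟨h⟩ := (inj_of_homog hU.ultrahomogeneous).emb (X := S)
    (by rw [hU.age, ← hK]; exact S.subtype.age_subset_age)
  have hxS : x ∈ S := subset_closure (Or.inr rfl)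
  let k : U ↪[L] S := Embedding.codRestrict S f (fun u => subset_closure (Or.inl ⟨u, rfl⟩))
  refine ⟨h.comp k, fun hs => ?_⟩
  obtain ⟨u, hu⟩ := hs (h ⟨x, hxS⟩)
  have := h.injective hu
  exact hx ⟨u, congrArg Subtype.val this⟩

end Stmt3



/-- For a Fraïssé class `K` with Fraïssé limit `U` in a countable language,
there exists a non-surjective self-embedding of `U` if and only if there exists an uncountable
injective structure whose age is `K`. -/
theorem statement3 (L : FirstOrder.Language.{0, 0}) [Countable L.Symbols]
    (K : Set (Bundled.{0} L.Structure)) [IsFraisse K]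
    (U : Type) [L.Structure U] [Countable U]
    (hU : IsFraisseLimit K U) :
    (∃ e : U ↪[L] U, ¬ Function.Surjective e) ↔
      ∃ X : Bundled.{0} L.Structure, ¬ Countable X ∧
        (∀ (A B : Bundled.{0} L.Structure), A ∈ L.age X → B ∈ L.age X →
          ∀ (i : A ↪[L] B) (e : A ↪[L] X), ∃ g : B ↪[L] X, g.comp i = e) ∧
        L.age X = K := by
  constructor
  · rintro ⟨e, he⟩
    obtain ⟨M, hM⟩ := Stmt3.forward K U hU e he
    exact ⟨⟨M.carrier, M.str⟩, hM, M.inj, M.age⟩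
  · rintro ⟨X, hX, hI, hK⟩
    exact Stmt3.backward K U hU X hX hI hK
end

section
/- Let L be a finite relational first-order language, let F be a Fraïssé class of L-structures whose Fraïssé limit U is infinite, and let p be a non-principal ultrafilter on ℕ. Then the ultrapower U^ℕ/p is ultrahomogeneous, has cardinality 2^ℵ₀, and its age equals F. -/
open FirstOrder Language Cardinal CategoryTheory Filter

section Helpers

theorem aux_mk_eq {U : Type} (p : Ultrafilter ℕ) (x y : ℕ → U) :
    ((Quotient.mk'' x : (p : Filter ℕ).Product fun _ => U) = Quotient.mk'' y) ↔
      ∀ᶠ n in (p : Filter ℕ), x n = y n :=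
  Quotient.eq''

theorem aux_rel {L : FirstOrder.Language.{0, 0}} {U : Type} [L.Structure U] (p : Ultrafilter ℕ)
    {k : ℕ} (R : L.Relations k) (x : Fin k → ℕ → U) :
    Structure.RelMap (M := (p : Filter ℕ).Product fun _ => U) R (fun i => Quotient.mk'' (x i)) ↔
      ∀ᶠ n in (p : Filter ℕ), Structure.RelMap R fun i => x i n := by
  exact relMap_quotient_mk' (s := (p : Filter ℕ).productSetoid (fun _ => U)) R x

theorem aux_lift {L : FirstOrder.Language.{0, 0}} [L.IsRelational] [Finite L.Symbols]
    {U : Type} [L.Structure U] (p : Ultrafilter ℕ) {N : Type} [L.Structure N] [Finite N]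
    (e : N ↪[L] ((p : Filter ℕ).Product fun _ => U)) (r : N → ℕ → U)
    (hr : ∀ x, e x = Quotient.mk'' (r x)) :
    ∀ᶠ n in (p : Filter ℕ), ∃ f : N ↪[L] U, ∀ x, f x = r x n := by
  have hfin : Finite (Σ k, L.Relations k) :=
    Finite.of_injective (β := L.Symbols) Sum.inr Sum.inr_injective
  have h1 : ∀ᶠ n in (p : Filter ℕ), ∀ x y : N, r x n = r y n → x = y := by
    rw [eventually_all]; intro x
    rw [eventually_all]; intro y
    by_cases hxy : x = y
    · exact Eventually.of_forall fun _ _ => hxy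
    · have : ¬ ∀ᶠ n in (p : Filter ℕ), r x n = r y n := by
        rw [← aux_mk_eq, ← hr, ← hr]
        exact fun h => hxy (e.injective h)
      rw [← Ultrafilter.eventually_not] at this
      exact this.mono fun n hn h => absurd h hn
  have h2 : ∀ᶠ n in (p : Filter ℕ), ∀ (R : Σ k, L.Relations k) (x : Fin R.1 → N),
      (Structure.RelMap R.2 (fun i => r (x i) n) ↔ Structure.RelMap R.2 x) := by
    rw [eventually_all]; intro R
    rw [eventually_all]; intro x
    have key := aux_rel p R.2 (fun i => r (x i))
    have : (fun i => (Quotient.mk'' (r (x i)) : (p : Filter ℕ).Product fun _ => U)) = e ∘ x := by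
      funext i; exact (hr _).symm
    replace key := (e.map_rel R.2 x).symm.trans ((iff_of_eq (congrArg _ this.symm)).trans key)
    by_cases hR : Structure.RelMap R.2 x
    · exact (key.1 hR).mono fun n hn => ⟨fun _ => hR, fun _ => hn⟩
    · have h' := mt key.2 hR
      rw [← Ultrafilter.eventually_not] at h'
      exact h'.mono fun n hn => ⟨fun h => absurd h hn, fun h => absurd h hR⟩
  filter_upwards [h1, h2] with n hn1 hn2
  exact ⟨{ toFun := fun x => r x n
           inj' := fun x y h => hn1 x y h
           map_fun' := fun f => isEmptyElim f
           map_rel' := fun R x => hn2 ⟨_, R⟩ x }, fun _ => rfl⟩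

theorem aux_homog {L : FirstOrder.Language.{0, 0}} {U : Type} [L.Structure U]
    (hU : L.IsUltrahomogeneous U) {N : Type} [L.Structure N] (hN : Structure.FG L N)
    (i j : N ↪[L] U) : ∃ g : U ≃[L] U, ∀ x, g (i x) = j x := by
  obtain ⟨g, hg⟩ := hU i.toHom.range (hN.range i.toHom) (j.comp i.equivRange.symm.toEmbedding)
  refine ⟨g, fun x => ?_⟩
  have := (Embedding.ext_iff.1 hg) (i.equivRange x)
  simpa using this.symm

/-- The ultraproduct of a sequence of automorphisms. -/
def auxUltraEquiv {L : FirstOrder.Language.{0, 0}} [L.IsRelational]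
    {U : Type} [L.Structure U] (p : Ultrafilter ℕ) (g : ℕ → (U ≃[L] U)) :
    ((p : Filter ℕ).Product fun _ => U) ≃[L] ((p : Filter ℕ).Product fun _ => U) where
  toFun := Quotient.map' (fun x n => g n (x n))
    (fun x y (h : ∀ᶠ n in (p : Filter ℕ), x n = y n) => h.mono fun n hn => congrArg (g n) hn)
  invFun := Quotient.map' (fun x n => (g n).symm (x n))
    (fun x y (h : ∀ᶠ n in (p : Filter ℕ), x n = y n) => h.mono fun n hn => congrArg (g n).symm hn)
  left_inv := by
    intro a
    induction a using Quotient.inductionOn' with | _ a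
    exact congrArg Quotient.mk'' (funext fun n => (g n).symm_apply_apply (a n))
  right_inv := by
    intro a
    induction a using Quotient.inductionOn' with | _ a
    exact congrArg Quotient.mk'' (funext fun n => (g n).apply_symm_apply (a n))
  map_fun' f := isEmptyElim f
  map_rel' := by
    intro k R x
    obtain ⟨y, rfl⟩ : ∃ y : Fin k → ℕ → U, x = fun i => Quotient.mk'' (y i) :=
      ⟨fun i => (x i).out, funext fun i => (Quotient.out_eq' (x i)).symm⟩
    refine (aux_rel p R (fun i n => g n (y i n))).trans (Iff.trans ?_ (aux_rel p R y).symm)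
    exact eventually_congr (Eventually.of_forall fun n => (g n).map_rel R fun i => y i n)

theorem aux_card {U : Type} [Countable U] [Infinite U] (p : Ultrafilter ℕ)
    (hp : ∀ n : ℕ, p ≠ pure n) :
    #((p : Filter ℕ).Product fun _ => U) = 2 ^ aleph0 := by
  apply le_antisymm
  · refine (mk_le_of_surjective (f := fun x : ℕ → U =>
      (Quotient.mk'' x : (p : Filter ℕ).Product fun _ => U)) Quotient.mk''_surjective).trans ?_
    simp
  · have hcof : (p : Filter ℕ) ≤ cofinite := by
      rcases p.le_cofinite_or_eq_pure with h | ⟨n, h⟩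
      · exact h
      · exact absurd h (hp n)
    have hcard : (2 : Cardinal.{0}) ^ aleph0.{0} = #(ℕ → Bool) := by simp
    rw [hcard]
    let E : List Bool → U := fun l => Infinite.natEmbedding U (Encodable.encode l)
    have hE : Function.Injective E :=
      (Infinite.natEmbedding U).injective.comp Encodable.encode_injective
    refine mk_le_of_injective (f := fun x : ℕ → Bool =>
      (Quotient.mk'' (fun n => E ((List.range n).map x)) :
        (p : Filter ℕ).Product fun _ => U)) ?_
    intro x y hxy
    have h := (aux_mk_eq p _ _).1 hxy
    funext k
    have hk : ∀ᶠ n in (p : Filter ℕ), k < n := by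
      apply hcof
      rw [Nat.cofinite_eq_atTop]
      exact eventually_gt_atTop k
    obtain ⟨n, hn, hkn⟩ := (h.and hk).exists
    have := List.map_inj_left.1 (hE hn)
    exact this k (List.mem_range.2 hkn)

end Helpers

/-- If `K` is a Fraïssé class in a finite relational language whose Fraïssé
limit `U` is infinite, and `p` is a non-principal ultrafilter on `ℕ`, then the ultrapower
`U^ℕ/p` is ultrahomogeneous, has cardinality `2^ℵ₀`, and its age is `K`. -/
theorem statement6 (L : FirstOrder.Language.{0, 0}) [L.IsRelational] [Finite L.Symbols]
    (K : Set (Bundled.{0} L.Structure)) [IsFraisse K]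
    (U : Type) [L.Structure U] [Countable U] [Infinite U]
    (hU : IsFraisseLimit K U)
    (p : Ultrafilter ℕ) (hp : ∀ n : ℕ, p ≠ pure n) :
    L.IsUltrahomogeneous ((p : Filter ℕ).Product fun _ => U) ∧
      #((p : Filter ℕ).Product fun _ => U) = 2 ^ aleph0 ∧
      L.age ((p : Filter ℕ).Product fun _ => U) = K := by
  refine ⟨?_, aux_card p hp, ?_⟩
  · intro S hS f
    have hfin : Finite S := hS.finite
    have hSfg := (Substructure.fg_iff_structure_fg S).1 hS
    let r : S → ℕ → U := fun x => (x : (p : Filter ℕ).Product fun _ => U).out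
    let s : S → ℕ → U := fun x => (f x).out
    have hr : ∀ x, S.subtype x = Quotient.mk'' (r x) := fun x => (Quotient.out_eq' _).symm
    have hs : ∀ x, f x = Quotient.mk'' (s x) := fun x => (Quotient.out_eq' _).symm
    have hex : ∀ n, ∃ g : U ≃[L] U, (∃ i : S ↪[L] U, ∀ x, i x = r x n) →
        (∃ j : S ↪[L] U, ∀ x, j x = s x n) → ∀ x, g (r x n) = s x n := by
      intro n
      by_cases h : (∃ i : S ↪[L] U, ∀ x, i x = r x n) ∧ (∃ j : S ↪[L] U, ∀ x, j x = s x n)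
      · obtain ⟨⟨i, hi⟩, ⟨j, hj⟩⟩ := h
        obtain ⟨g, hg⟩ := aux_homog hU.ultrahomogeneous hSfg i j
        exact ⟨g, fun _ _ x => by rw [← hi, ← hj, hg]⟩
      · exact ⟨Language.Equiv.refl L U, fun h1 h2 => absurd ⟨h1, h2⟩ h⟩
    choose g hg using hex
    refine ⟨auxUltraEquiv p g, ?_⟩
    ext x
    change f x = auxUltraEquiv p g (S.subtype x)
    rw [hr, hs]
    refine (aux_mk_eq p (s x) (fun n => g n (r x n))).2 ?_
    filter_upwards [aux_lift p S.subtype r hr, aux_lift p f s hs] with n h1 h2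
    exact (hg n h1 h2 x).symm
  · rw [← hU.age]
    ext N
    constructor
    · rintro ⟨hN, ⟨e⟩⟩
      have : Finite N := hN.finite
      obtain ⟨n, f, -⟩ := (aux_lift p e (fun x => (e x).out)
        (fun x => (Quotient.out_eq' _).symm)).exists
      exact ⟨hN, ⟨f⟩⟩
    · rintro ⟨hN, ⟨e⟩⟩
      refine ⟨hN, ⟨{ toFun := fun x => Quotient.mk'' (fun _ => e x)
                     inj' := ?_
                     map_fun' := fun f => isEmptyElim f
                     map_rel' := ?_ }⟩⟩
      · intro x y h
        obtain ⟨n, hn⟩ := ((aux_mk_eq p _ _).1 h).exists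
        exact e.injective hn
      · intro k R x
        refine (aux_rel p R (fun i _ => e (x i))).trans ?_
        rw [eventually_const]
        exact e.map_rel R x
end

section
/- Let L be a countable first-order language, let F be a Fraïssé class of L-structures and let U be its Fraïssé limit. Assume that for every countable set G of automorphisms of U there exists a non-surjective embedding e : U → U that is G-extensible. Then there exists an ultrahomogeneous L-structure of cardinality ℵ₁ whose age equals F. -/
open FirstOrder Language Cardinal CategoryTheory

namespace S7

open FirstOrder.Language FirstOrder.Language.Structure

theorem uh_of_equiv {L : FirstOrder.Language.{0, 0}} {M N : Type} [L.Structure M] [L.Structure N]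
    (E : M ≃[L] N) (h : L.IsUltrahomogeneous M) : L.IsUltrahomogeneous N := by
  intro S hS f
  have hS' := (Substructure.fg_iff_structure_fg S).1 hS
  obtain ⟨f', hf'⟩ := IsUltrahomogeneous.extend_embedding h hS' (T := M) (h := ⟨Embedding.refl L M⟩)
    (E.symm.toEmbedding.comp f) (E.symm.toEmbedding.comp S.subtype)
  let k := (E.symm.toEmbedding.comp S.subtype)
  obtain ⟨g, hg⟩ := h k.toHom.range (hS'.range _)
    ((E.symm.toEmbedding.comp f).comp k.equivRange.symm.toEmbedding)
  refine ⟨(E.comp g).comp E.symm, ?_⟩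
  ext x
  have h1 := DFunLike.congr_fun hg (k.equivRange x)
  have h2 : E.symm (f (k.equivRange.symm (k.equivRange x))) = g (E.symm x) := h1
  rw [Language.Equiv.symm_apply_apply] at h2
  change f x = E (g (E.symm x))
  rw [← h2, Language.Equiv.apply_symm_apply]

section limit

variable {L : FirstOrder.Language.{0, 0}} {ι : Type} [Preorder ι] [IsDirectedOrder ι] [Nonempty ι]
  {G : ι → Type} [∀ i, L.Structure (G i)] (f : ∀ i j, i ≤ j → G i ↪[L] G j)
  [DirectedSystem G fun i j h => f i j h]

theorem glue (i₀ : ι) (g : ∀ i, i₀ ≤ i → (G i ≃[L] G i))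
    (hg : ∀ i j (hi : i₀ ≤ i) (hij : i ≤ j) (x : G i),
      g j (hi.trans hij) (f i j hij x) = f i j hij (g i hi x)) :
    ∃ F : Language.DirectLimit G f ≃[L] Language.DirectLimit G f, ∀ i (hi : i₀ ≤ i) (x : G i),
      F (Language.DirectLimit.of L ι G f i x) = Language.DirectLimit.of L ι G f i (g i hi x) := by
  choose k hk1 hk2 using fun i => directed_of (· ≤ ·) i i₀
  let u : ∀ i, G i ↪[L] Language.DirectLimit G f := fun i =>
    (Language.DirectLimit.of L ι G f (k i)).comp ((g (k i) (hk2 i)).toEmbedding.comp (f i (k i) (hk1 i)))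
  have hu : ∀ i j (hij : i ≤ j) (hj : i₀ ≤ j) (x : G i), u i x =
      Language.DirectLimit.of L ι G f j (g j hj (f i j hij x)) := by
    intro i j hij hj x
    obtain ⟨l, h1, h2⟩ := directed_of (· ≤ ·) (k i) j
    change Language.DirectLimit.of L ι G f (k i) (g (k i) (hk2 i) (f i (k i) (hk1 i) x)) = _
    rw [← Language.DirectLimit.of_f (hij := h1), ← Language.DirectLimit.of_f (i := j) (hij := h2),
      ← hg _ _ _ h1, ← hg _ _ _ h2]
    congr 2
    rw [DirectedSystem.map_map' f, DirectedSystem.map_map' f]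
  let F : Language.DirectLimit G f ↪[L] Language.DirectLimit G f := Language.DirectLimit.lift L ι G f u (by
    intro i j hij x
    rw [hu j (k j) (hk1 j) (hk2 j), hu i (k j) (hij.trans (hk1 j)) (hk2 j),
      DirectedSystem.map_map' f])
  have hF : ∀ i (hi : i₀ ≤ i) (x : G i),
      F (Language.DirectLimit.of L ι G f i x) = Language.DirectLimit.of L ι G f i (g i hi x) := by
    intro i hi x
    change Language.DirectLimit.lift L ι G f u _ _ = _
    rw [Language.DirectLimit.lift_of, hu i i le_rfl hi, DirectedSystem.map_self' f]
  have hsurj : Function.Surjective F := by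
    intro y
    obtain ⟨i, x, rfl⟩ := Language.DirectLimit.exists_of y
    refine ⟨Language.DirectLimit.of L ι G f (k i) ((g (k i) (hk2 i)).symm (f i (k i) (hk1 i) x)), ?_⟩
    rw [hF _ (hk2 i), Language.Equiv.apply_symm_apply, Language.DirectLimit.of_f]
  exact ⟨⟨Equiv.ofBijective F ⟨F.injective, hsurj⟩, F.map_fun', F.map_rel'⟩, hF⟩

theorem uh_limit (huh : ∀ i, L.IsUltrahomogeneous (G i))
    (H : ∀ i (g : G i ≃[L] G i) (B : Finset (G i)), ∃ F : Language.DirectLimit G f ≃[L] Language.DirectLimit G f,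
      ∀ b ∈ B, F (Language.DirectLimit.of L ι G f i b) = Language.DirectLimit.of L ι G f i (g b)) :
    L.IsUltrahomogeneous (Language.DirectLimit G f) := by
  classical
  intro S hS e
  obtain ⟨B, hB⟩ := ((Substructure.fg_iff_structure_fg S).1 hS).out
  obtain ⟨i, y, hy⟩ := Language.DirectLimit.exists_quotient_mk'_sigma_mk'_eq G f
    (Sum.elim (fun b : B => (b.1 : Language.DirectLimit G f)) (fun b : B => e b.1))
  have hy1 : ∀ b : B, Language.DirectLimit.of L ι G f i (y (Sum.inl b)) = b.1 := fun b =>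
    (congrFun hy (Sum.inl b)).symm
  have hy2 : ∀ b : B, Language.DirectLimit.of L ι G f i (y (Sum.inr b)) = e b.1 := fun b =>
    (congrFun hy (Sum.inr b)).symm
  let o := Language.DirectLimit.of L ι G f i
  let A : Finset (G i) := Finset.univ.image (fun b : B => y (Sum.inl b))
  let T : L.Substructure (G i) := Substructure.closure L (A : Set (G i))
  have hTS : T ≤ S.comap o.toHom := by
    rw [Substructure.closure_le]
    intro a ha
    obtain ⟨b, -, rfl⟩ := Finset.mem_image.1 (Finset.mem_coe.1 ha)
    change o _ ∈ S
    rw [hy1]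
    exact b.1.2
  have hR : e.toHom.range ≤ o.toHom.range := by
    rw [Hom.range_eq_map, ← hB, Substructure.map_closure, Substructure.closure_le]
    rintro _ ⟨b, hb, rfl⟩
    exact ⟨y (Sum.inr ⟨b, hb⟩), hy2 ⟨b, hb⟩⟩
  let c : T ↪[L] S := (o.comp T.subtype).codRestrict S (fun x => hTS x.2)
  let d : S ↪[L] G i := o.equivRange.symm.toEmbedding.comp
    (e.codRestrict o.toHom.range (fun x => hR ⟨x, rfl⟩))
  have hd : ∀ x, o (d x) = e x := by
    intro x
    rw [← Embedding.equivRange_apply]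
    simp [d]
  obtain ⟨g, hg⟩ := huh i T (Substructure.fg_closure A.finite_toSet) (d.comp c)
  obtain ⟨F, hF⟩ := H i g A
  refine ⟨F, ?_⟩
  suffices e.toHom = (F.toEmbedding.comp S.subtype).toHom by
    ext x
    exact DFunLike.congr_fun this x
  refine Hom.eq_of_eqOn_dense hB ?_
  intro b hb
  have hbA : y (Sum.inl ⟨b, hb⟩) ∈ A := Finset.mem_image_of_mem _ (Finset.mem_univ _)
  have hbT : y (Sum.inl ⟨b, hb⟩) ∈ T := Substructure.subset_closure hbA
  have h1 := hF _ hbA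
  rw [hy1] at h1
  have h2 : d (c ⟨_, hbT⟩) = g (y (Sum.inl ⟨b, hb⟩)) := DFunLike.congr_fun hg ⟨_, hbT⟩
  have h3 : c ⟨_, hbT⟩ = b := Subtype.ext (hy1 ⟨b, hb⟩)
  rw [h3] at h2
  change e b = F b
  rw [h1, ← h2]
  exact (hd b).symm

end limit

/-- Structures on subsets of `Ω` with a choice of automorphisms extending finite partial maps. -/
structure State (L : FirstOrder.Language.{0, 0}) (K : Set (Bundled.{0} L.Structure)) (Ω : Type) where
  A : Set Ω
  str : L.Structure A
  uh : L.IsUltrahomogeneous A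
  hage : L.age A = K
  h : Finset (Ω × Ω) → (A ≃[L] A)
  spec : ∀ p, (∃ g : A ≃[L] A, ∀ q ∈ p, ∃ ha : q.1 ∈ A, (g ⟨q.1, ha⟩ : Ω) = q.2) →
    ∀ q ∈ p, ∃ ha : q.1 ∈ A, (h p ⟨q.1, ha⟩ : Ω) = q.2

attribute [instance] State.str

variable {L : FirstOrder.Language.{0, 0}} {K : Set (Bundled.{0} L.Structure)} {Ω : Type}

def State.good (s : State L K Ω) (p : Finset (Ω × Ω)) : Prop :=
  ∃ g : s.A ≃[L] s.A, ∀ q ∈ p, ∃ ha : q.1 ∈ s.A, (g ⟨q.1, ha⟩ : Ω) = q.2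

def State.le (s t : State L K Ω) : Prop :=
  ∃ j : s.A ↪[L] t.A, (∀ x, (j x : Ω) = x) ∧ ∀ p, s.good p → ∀ x, t.h p (j x) = j (s.h p x)

theorem State.le.good {s t : State L K Ω} (hst : s.le t) {p} (hp : s.good p) : t.good p := by
  obtain ⟨j, hj, hj2⟩ := hst
  refine ⟨t.h p, fun q hq => ?_⟩
  obtain ⟨ha, h2⟩ := s.spec p hp q hq
  have h1 : (j ⟨q.1, ha⟩ : Ω) = q.1 := hj _
  have ht : q.1 ∈ t.A := h1 ▸ (j ⟨q.1, ha⟩).2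
  refine ⟨ht, ?_⟩
  have : (⟨q.1, ht⟩ : t.A) = j ⟨q.1, ha⟩ := Subtype.ext h1.symm
  rw [this, hj2 p hp, hj, h2]

instance : Preorder (State L K Ω) where
  le := State.le
  le_refl s := ⟨Embedding.refl L _, fun _ => rfl, fun _ _ _ => rfl⟩
  le_trans s t u hst htu := by
    have hgood := fun p => State.le.good hst (p := p)
    obtain ⟨j, hj, hj2⟩ := hst
    obtain ⟨k, hk, hk2⟩ := htu
    refine ⟨k.comp j, fun x => by simp [hj, hk], fun p hp x => ?_⟩
    simp only [Embedding.comp_apply]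
    rw [hk2 p (hgood p hp), hj2 p hp]

noncomputable def State.map (s t : State L K Ω) (h : s ≤ t) : s.A ↪[L] t.A := Classical.choose h

theorem State.map_val {s t : State L K Ω} (h : s ≤ t) (x) : (s.map t h x : Ω) = x :=
  (Classical.choose_spec h).1 x

theorem State.map_h {s t : State L K Ω} (h : s ≤ t) {p} (hp : s.good p) (x) :
    t.h p (s.map t h x) = s.map t h (s.h p x) :=
  (Classical.choose_spec h).2 p hp x

theorem mkState {D : Type} [L.Structure D] (uh : L.IsUltrahomogeneous D) (hage : L.age D = K)
    (ρ : D → Ω) (hρ : Function.Injective ρ) (P : Finset (Ω × Ω) → Prop)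
    (hD : Finset (Ω × Ω) → (D ≃[L] D))
    (hspec : ∀ p, P p → ∀ q ∈ p, ∃ a, ρ a = q.1 ∧ ρ (hD p a) = q.2) :
    ∃ t : State L K Ω, ∃ E : D ≃[L] t.A, (∀ x, (E x : Ω) = ρ x) ∧
      ∀ p, P p → ∀ x, t.h p (E x) = E (hD p x) := by
  classical
  let : L.Structure (Set.range ρ) := (Equiv.ofInjective ρ hρ).inducedStructure
  let E : D ≃[L] Set.range ρ := (Equiv.ofInjective ρ hρ).inducedStructureEquiv
  have hE : ∀ x, (E x : Ω) = ρ x := fun x => rfl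
  refine ⟨⟨Set.range ρ, inferInstance, uh_of_equiv E uh, E.age_eq_age.symm.trans hage,
    fun p => if P p then (E.comp (hD p)).comp E.symm else
      if h : ∃ g : Set.range ρ ≃[L] Set.range ρ,
        ∀ q ∈ p, ∃ ha : q.1 ∈ Set.range ρ, (g ⟨q.1, ha⟩ : Ω) = q.2 then Classical.choose h else
      Language.Equiv.refl L _, ?_⟩, E, hE, ?_⟩
  · intro p hp
    by_cases h : P p
    · rw [if_pos h]
      intro q hq
      obtain ⟨a, h1, h2⟩ := hspec p h q hq
      refine ⟨⟨a, h1⟩, ?_⟩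
      have : (⟨q.1, ⟨a, h1⟩⟩ : Set.range ρ) = E a := Subtype.ext h1.symm
      rw [this]
      simp [hE, h2]
    · rw [if_neg h, dif_pos hp]
      exact Classical.choose_spec hp
  · intro p h x
    simp [if_pos h]

theorem chain_bdd (C : Set (State L K Ω)) (hC : IsChain (· ≤ ·) C) (hne : C.Nonempty) :
    BddAbove C := by
  classical
  have : Nonempty C := hne.to_subtype
  have : IsDirectedOrder C := ⟨fun a b => by
    rcases hC.total a.2 b.2 with h | h
    · exact ⟨b, h, le_rfl⟩
    · exact ⟨a, le_rfl, h⟩⟩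
  let G : C → Type := fun s => s.1.A
  let : ∀ s, L.Structure (G s) := fun s => s.1.str
  let f : ∀ i j : C, i ≤ j → G i ↪[L] G j := fun i j h => i.1.map j.1 h
  have fval : ∀ i j h x, (f i j h x : Ω) = x.1 := fun i j h x => State.map_val h x
  have : DirectedSystem G fun i j h => f i j h :=
    ⟨fun i x => Subtype.ext (fval _ _ _ _),
     fun i j k hij hjk x => Subtype.ext (by rw [fval, fval, fval])⟩
  let D := Language.DirectLimit G f
  let o := Language.DirectLimit.of L C G f
  have hglue : ∀ p, ∃ F : D ≃[L] D, ∀ s : C, s.1.good p → ∀ x : G s,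
      F (o s x) = o s (s.1.h p x) := by
    intro p
    by_cases hp : ∃ s : C, s.1.good p
    · obtain ⟨s₀, hs₀⟩ := hp
      obtain ⟨F, hF⟩ := glue f s₀ (fun i _ => i.1.h p) (fun i j hi hij x =>
        State.map_h hij (State.le.good hi hs₀) x)
      refine ⟨F, fun s hs x => ?_⟩
      obtain ⟨k, h1, h2⟩ := directed_of (· ≤ ·) s s₀
      change F (Language.DirectLimit.of L C G f s x) = Language.DirectLimit.of L C G f s _
      rw [← Language.DirectLimit.of_f (hij := h1), hF k h2, ← Language.DirectLimit.of_f (i := s) (hij := h1)]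
      congr 1
      exact State.map_h h1 hs x
    · exact ⟨Language.Equiv.refl L _, fun s hs => (hp ⟨s, hs⟩).elim⟩
  choose hD hhD using hglue
  have huh : L.IsUltrahomogeneous D := by
    refine uh_limit f (fun i => i.1.uh) ?_
    intro i g B
    let p : Finset (Ω × Ω) := B.image (fun b => ((b.1 : Ω), ((g b).1 : Ω)))
    have hp : i.1.good p := by
      refine ⟨g, fun q hq => ?_⟩
      obtain ⟨b, hb, rfl⟩ := Finset.mem_image.1 hq
      exact ⟨b.2, rfl⟩
    refine ⟨hD p, fun b hb => ?_⟩
    refine (hhD p i hp b).trans ?_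
    congr 1
    obtain ⟨ha, h⟩ := i.1.spec p hp _ (Finset.mem_image_of_mem _ hb)
    exact Subtype.ext h
  have hage : L.age D = K := by
    refine (age_directLimit G f).trans ?_
    rw [Set.iUnion_congr (fun i : C => i.1.hage), Set.iUnion_const]
  -- the injection into `Ω`
  have hex : ∀ z : D, ∃ w : Ω, ∀ (i : C) (x : G i), o i x = z → (x.1 : Ω) = w := by
    intro z
    obtain ⟨i, x, rfl⟩ := Language.DirectLimit.exists_of z
    refine ⟨x.1, fun j y hy => ?_⟩
    obtain ⟨k, h1, h2⟩ := directed_of (· ≤ ·) i j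
    change Language.DirectLimit.of L C G f j y = Language.DirectLimit.of L C G f i x at hy
    rw [← Language.DirectLimit.of_f (hij := h1), ← Language.DirectLimit.of_f (i := j) (hij := h2)] at hy
    have := congrArg Subtype.val ((Language.DirectLimit.of L C G f k).injective hy)
    rwa [fval, fval] at this
  choose ρ hρ using hex
  have hρo : ∀ i x, ρ (o i x) = x.1 := fun i x => (hρ _ i x rfl).symm
  have hρinj : Function.Injective ρ := by
    intro z w hzw
    obtain ⟨i, x, rfl⟩ := Language.DirectLimit.exists_of z
    obtain ⟨j, y, rfl⟩ := Language.DirectLimit.exists_of w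
    obtain ⟨k, h1, h2⟩ := directed_of (· ≤ ·) i j
    have h3 := hρo i x
    have h4 := hρo j y
    have : (x.1 : Ω) = y.1 := h3.symm.trans (hzw.trans h4)
    rw [← Language.DirectLimit.of_f (hij := h1), ← Language.DirectLimit.of_f (i := j) (hij := h2)]
    congr 1
    exact Subtype.ext (by rw [fval, fval, this])
  obtain ⟨t, E, hE1, hE2⟩ := mkState huh hage ρ hρinj (fun p => ∃ s : C, s.1.good p) hD (by
    rintro p ⟨s, hs⟩ q hq
    obtain ⟨ha, h⟩ := s.1.spec p hs q hq
    refine ⟨o s ⟨q.1, ha⟩, hρo _ _, ?_⟩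
    rw [hhD p s hs, hρo]
    exact h)
  refine ⟨t, fun s hs => ?_⟩
  refine ⟨E.toEmbedding.comp (o ⟨s, hs⟩), fun x => ?_, fun p hp x => ?_⟩
  · exact (hE1 _).trans (hρo ⟨s, hs⟩ x)
  · change t.h p (E (o ⟨s, hs⟩ x)) = E (o ⟨s, hs⟩ (s.h p x))
    rw [hE2 p ⟨⟨s, hs⟩, hp⟩, hhD p ⟨s, hs⟩ hp]

end S7

/-- Let `K` be a Fraïssé class in a countable language with Fraïssé limit `U`.
If for every countable set `G` of automorphisms of `U` there is a non-surjective `G`-extensible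
self-embedding of `U`, then there is an ultrahomogeneous structure of cardinality `ℵ₁` whose
age is `K`. -/
theorem statement7 (L : FirstOrder.Language.{0, 0}) [Countable L.Symbols]
    (K : Set (Bundled.{0} L.Structure)) [IsFraisse K]
    (U : Type) [L.Structure U] [Countable U]
    (hU : IsFraisseLimit K U)
    (hext : ∀ G : Set (U ≃[L] U), G.Countable →
      ∃ e : U ↪[L] U, ¬ Function.Surjective e ∧
        ∀ h ∈ G, ∃ h' : U ≃[L] U,
          e.comp (Language.Equiv.toEmbedding h) = (Language.Equiv.toEmbedding h').comp e) :
    ∃ N : Bundled.{0} L.Structure, #N = aleph 1 ∧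
      L.IsUltrahomogeneous N ∧ L.age N = K := by
  classical
  let Ω : Type := (aleph 1).out
  have hΩ : #Ω = aleph 1 := mk_out _
  have : Infinite Ω := by
    rw [Cardinal.infinite_iff, hΩ]; exact aleph0_le_aleph 1
  have emb : ∀ T : Set Ω, T.Infinite → ∃ κ : U → Ω, Function.Injective κ ∧ ∀ u, κ u ∈ T := by
    intro T hT
    have := hT.to_subtype
    obtain ⟨a, ha⟩ := exists_injective_nat U
    let b := Infinite.natEmbedding T
    exact ⟨fun u => b (a u), fun u v h => ha (b.injective (Subtype.ext h)), fun u => (b (a u)).2⟩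
  have : Nonempty (S7.State L K Ω) := by
    obtain ⟨κ, hκ, -⟩ := emb Set.univ Set.infinite_univ
    obtain ⟨t, -⟩ := S7.mkState hU.ultrahomogeneous hU.age κ hκ (fun _ => False)
      (fun _ => Language.Equiv.refl L _) (fun _ h => h.elim)
    exact ⟨t⟩
  obtain ⟨m, hm⟩ := zorn_le_nonempty (α := S7.State L K Ω) S7.chain_bdd
  refine ⟨Bundled.of m.A, ?_, m.uh, m.hage⟩
  change #m.A = aleph 1
  refine le_antisymm ((mk_set_le _).trans hΩ.le) ?_
  by_contra hlt
  have hcount : #m.A ≤ ℵ₀ := by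
    rw [not_le, ← Cardinal.succ_aleph0, Order.lt_succ_iff] at hlt
    exact hlt
  have hAc : m.A.Countable := Cardinal.le_aleph0_iff_set_countable.1 hcount
  have : Countable m.A := hAc.to_subtype
  have hcompl : (m.Aᶜ).Infinite := by
    intro hfin
    have h1 : (Set.univ : Set Ω).Countable := by
      rw [← Set.union_compl_self m.A]; exact hAc.union hfin.countable
    have h2 := Cardinal.le_aleph0_iff_set_countable.2 h1
    rw [mk_univ, hΩ, ← Cardinal.succ_aleph0] at h2
    exact absurd h2 (not_le.2 (Order.lt_succ _))
  obtain ⟨κ, hκ, hκA⟩ := emb _ hcompl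
  obtain ⟨φ⟩ := IsFraisseLimit.nonempty_equiv (K := K) (M := m.A) (N := U) ⟨m.uh, m.hage⟩ hU
  have hgc : {p | m.good p}.Countable := by
    have : {p | m.good p} ⊆ Set.range (fun P : Finset (m.A × m.A) =>
        P.image (fun q => ((q.1 : Ω), (q.2 : Ω)))) := by
      rintro p ⟨g, hg⟩
      refine ⟨p.attach.image (fun q => (⟨q.1.1, (hg q.1 q.2).1⟩,
        g ⟨q.1.1, (hg q.1 q.2).1⟩)), ?_⟩
      ext q
      simp only [Finset.mem_image, Finset.mem_attach, true_and, Subtype.exists]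
      constructor
      · rintro ⟨_, ⟨r, hr, rfl⟩, rfl⟩
        have := (hg r hr).2
        simp only [this]
        exact hr
      · intro hq
        exact ⟨_, ⟨q, hq, rfl⟩, Prod.ext rfl (hg q hq).2⟩
    exact (Set.countable_range _).mono this
  obtain ⟨e, hns, he⟩ := hext ((fun p => (φ.comp (m.h p)).comp φ.symm) '' {p | m.good p})
    (hgc.image _)
  have hex : ∀ p, ∃ h' : U ≃[L] U, m.good p → ∀ a : m.A, h' (e (φ a)) = e (φ (m.h p a)) := by
    intro p
    by_cases hp : m.good p
    · obtain ⟨h', hh'⟩ := he _ ⟨p, hp, rfl⟩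
      refine ⟨h', fun _ a => ?_⟩
      have := DFunLike.congr_fun hh' (φ a)
      simpa using this.symm
    · exact ⟨Language.Equiv.refl L _, fun h => (hp h).elim⟩
  choose hD hhD using hex
  let ρ : U → Ω := fun u => if h : ∃ a : m.A, e (φ a) = u then (Classical.choose h : m.A) else κ u
  have hρ1 : ∀ a : m.A, ρ (e (φ a)) = a := by
    intro a
    have h : ∃ b : m.A, e (φ b) = e (φ a) := ⟨a, rfl⟩
    have h2 := Classical.choose_spec h
    simp only [ρ, dif_pos h]
    rw [φ.injective (e.injective h2)]
  have hρ2 : ∀ u, (¬ ∃ a : m.A, e (φ a) = u) → ρ u = κ u := fun u h => dif_neg h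
  have hρinj : Function.Injective ρ := by
    intro u v huv
    by_cases hu : ∃ a : m.A, e (φ a) = u <;> by_cases hv : ∃ a : m.A, e (φ a) = v
    · obtain ⟨a, rfl⟩ := hu
      obtain ⟨b, rfl⟩ := hv
      rw [hρ1, hρ1] at huv
      rw [Subtype.ext huv]
    · obtain ⟨a, rfl⟩ := hu
      rw [hρ1, hρ2 _ hv] at huv
      exact absurd a.2 (huv ▸ hκA v)
    · obtain ⟨a, rfl⟩ := hv
      rw [hρ1, hρ2 _ hu] at huv
      exact absurd a.2 (huv ▸ hκA u)
    · rw [hρ2 _ hu, hρ2 _ hv] at huv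
      exact hκ huv
  obtain ⟨t, E, hE1, hE2⟩ := S7.mkState hU.ultrahomogeneous hU.age ρ hρinj m.good hD (by
    intro p hp q hq
    obtain ⟨ha, h⟩ := m.spec p hp q hq
    refine ⟨e (φ ⟨q.1, ha⟩), hρ1 _, ?_⟩
    rw [hhD p hp, hρ1, h])
  have hmt : m ≤ t := by
    refine ⟨E.toEmbedding.comp (e.comp φ.toEmbedding), fun x => ?_, fun p hp x => ?_⟩
    · exact (hE1 _).trans (hρ1 x)
    · change t.h p (E (e (φ x))) = E (e (φ (m.h p x)))
      rw [hE2 p hp, hhD p hp]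
  obtain ⟨j, hj, -⟩ := hm hmt
  obtain ⟨u, hu⟩ := not_forall.1 hns
  have hu' : ¬ ∃ a : m.A, e (φ a) = u := fun ⟨a, ha⟩ => hu ⟨_, ha⟩
  have h1 : (j (E u) : Ω) = κ u := by rw [hj, hE1, hρ2 u hu']
  exact hκA u (h1 ▸ (j (E u)).2)
end

section
/- Let L be a countable first-order language, let F be a Fraïssé class of L-structures and let U be its Fraïssé limit. Assume there exists a non-surjective embedding e : U → U that is extensible, i.e., for every automorphism h of U there exists an automorphism h̃ of U with e ∘ h = h̃ ∘ e. Then there exists an uncountable ultrahomogeneous L-structure whose age equals F. -/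
open FirstOrder Language Cardinal CategoryTheory

namespace FraisseUncountable

open FirstOrder.Language

/-- Well-founded recursion with an invariant that depends only on earlier values. -/
theorem exists_rec {ι X : Type*} [LinearOrder ι] [WellFoundedLT ι] [Nonempty X]
    (P : ∀ a : ι, (∀ b, b < a → X) → X → Prop)
    (step : ∀ (a : ι) (f : ι → X), (∀ b, b < a → P b (fun c _ => f c) (f b)) →
      ∃ x, P a (fun c _ => f c) x) :
    ∃ f : ι → X, ∀ a, P a (fun c _ => f c) (f a) := by
  classical
  let F : ∀ a : ι, (∀ b, b < a → X) → X := fun a g =>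
    if h : ∃ x, P a g x then h.choose else Classical.arbitrary X
  let f : ι → X := (wellFounded_lt (α := ι)).fix F
  have hf : ∀ a, f a = F a (fun c _ => f c) := fun a => WellFounded.fix_eq _ F a
  refine ⟨f, fun a => ?_⟩
  induction a using WellFoundedLT.induction with
  | ind a ih =>
    have h := step a f ih
    rw [hf a]
    simp only [F]
    rw [dif_pos h]
    exact h.choose_spec

variable {L : FirstOrder.Language.{0, 0}} {U N : Type} [L.Structure U] [L.Structure N]

/-- Transport of an automorphism along an embedding. -/
noncomputable def conj (m : U ↪[L] N) (h : U ≃[L] U) : N ≃ₚ[L] N where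
  dom := m.toHom.range
  cod := m.toHom.range
  toEquiv := m.equivRange.comp (h.comp m.equivRange.symm)

theorem conj_apply (m : U ↪[L] N) (h : U ≃[L] U) (u : U) (hu : m u ∈ m.toHom.range) :
    ((conj m h).toEquiv ⟨m u, hu⟩ : N) = m (h u) := by
  have : m.equivRange.symm ⟨m u, hu⟩ = u := by
    apply m.equivRange.injective
    rw [Language.Equiv.apply_symm_apply]
    rfl
  change (m.equivRange (h (m.equivRange.symm ⟨m u, hu⟩)) : N) = _
  rw [this]
  rfl

theorem exists_conj (m : U ↪[L] N) (p : N ≃ₚ[L] N) (hd : p.dom = m.toHom.range)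
    (hc : p.cod = m.toHom.range) : ∃ h : U ≃[L] U, p = conj m h := by
  obtain ⟨d, c, t⟩ := p
  dsimp only at hd hc
  subst hd
  subst hc
  refine ⟨m.equivRange.symm.comp (t.comp m.equivRange), ?_⟩
  have : t = m.equivRange.comp
      ((m.equivRange.symm.comp (t.comp m.equivRange)).comp m.equivRange.symm) := by
    ext x
    simp
  unfold conj
  rw [← this]

theorem conj_le (m m' : U ↪[L] N) (e : U ↪[L] U) (hm : m = m'.comp e) (h h' : U ≃[L] U)
    (hh : e.comp (Language.Equiv.toEmbedding h) = (Language.Equiv.toEmbedding h').comp e) :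
    conj m h ≤ conj m' h' := by
  have hle : m.toHom.range ≤ m'.toHom.range := by
    rintro x ⟨u, rfl⟩
    exact ⟨e u, by rw [hm]; rfl⟩
  refine ⟨hle, ?_⟩
  ext x
  obtain ⟨x, u, rfl⟩ := x
  have h1 := conj_apply m h u ⟨u, rfl⟩
  have h2 := conj_apply m' h' (e u) ⟨e u, rfl⟩
  have h3 : e (h u) = h' (e u) := DFunLike.congr_fun hh u
  have h4 : m u = m' (e u) := by rw [hm]; rfl
  have h5 : m (h u) = m' (e (h u)) := by rw [hm]; rfl
  change ((conj m' h').toEquiv ⟨m u, _⟩ : N) = ((conj m h).toEquiv ⟨m u, _⟩ : N)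
  rw [h1, h5, h3, ← h2]
  congr 2
  exact Subtype.ext h4

set_option linter.unusedSectionVars false

variable {ι : Type} [LinearOrder ι] [WellFoundedLT ι]

/-- The union of the levels in `I`. -/
def T (φ : ι → (U ↪[L] N)) (I : Set ι) : L.Substructure N := ⨆ b : I, (φ b).toHom.range

theorem le_T (φ : ι → (U ↪[L] N)) {I : Set ι} {b : ι} (hb : b ∈ I) :
    (φ b).toHom.range ≤ T φ I :=
  le_iSup (fun b : I => (φ b).toHom.range) ⟨b, hb⟩

theorem exists_extend (φ : ι → (U ↪[L] N))
    (hmono : ∀ a b, a ≤ b → (φ a).toHom.range ≤ (φ b).toHom.range)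
    (hsurj : ∀ x, ∃ a u, φ a u = x) (e : U ↪[L] U) (hns : ¬ Function.Surjective e)
    (hr : ∀ a, (∃ b, b < a) → ((φ a).comp e).toHom.range = T φ (Set.Iio a))
    (he : ∀ h : U ≃[L] U, ∃ h' : U ≃[L] U,
        e.comp (Language.Equiv.toEmbedding h) = (Language.Equiv.toEmbedding h').comp e)
    (a : ι) (g : U ≃[L] U) : ∃ G : N ≃[L] N, ∀ u, G (φ a u) = φ a (g u) := by
  let s : Set (N ≃ₚ[L] N) :=
    {p | ∃ I : Set ι, IsLowerSet I ∧ a ∈ I ∧ p.dom = T φ I ∧ p.cod = T φ I}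
  have hT : ∀ b, (φ b).toHom.range = T φ (Set.Iic b) := fun b =>
    le_antisymm (le_T φ (Set.mem_Iic.2 le_rfl)) (iSup_le fun c => hmono _ _ c.2)
  obtain ⟨p, hp0, hps, hpmax⟩ := zorn_le_nonempty₀ s (by
    intro c hcs hc y hy
    have : Nonempty c := ⟨⟨y, hy⟩⟩
    have : IsDirectedOrder c := ⟨fun x z => by
      rcases hc.total x.2 z.2 with h | h
      · exact ⟨z, h, le_rfl⟩
      · exact ⟨x, le_rfl, h⟩⟩
    let S : c →o (N ≃ₚ[L] N) := ⟨Subtype.val, fun _ _ h => h⟩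
    choose I hI using fun x : c => hcs x.2
    have key : (⨆ x : c, T φ (I x)) = T φ (⋃ x, I x) := by
      apply le_antisymm
      · exact iSup_le fun x => iSup_le fun b => le_T φ (Set.mem_iUnion.2 ⟨x, b.2⟩)
      · refine iSup_le fun b => ?_
        obtain ⟨x, hx⟩ := Set.mem_iUnion.1 b.2
        exact (le_T φ hx).trans (le_iSup (fun x => T φ (I x)) x)
    refine ⟨DirectLimit.partialEquivLimit S, ⟨⋃ x, I x, isLowerSet_iUnion fun x => (hI x).1,
      Set.mem_iUnion.2 ⟨⟨y, hy⟩, (hI _).2.1⟩, ?_, ?_⟩, fun z hz =>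
        DirectLimit.le_partialEquivLimit S ⟨z, hz⟩⟩
    · rw [DirectLimit.dom_partialEquivLimit, ← key]
      exact iSup_congr fun x => (hI x).2.2.1
    · rw [DirectLimit.cod_partialEquivLimit, ← key]
      exact iSup_congr fun x => (hI x).2.2.2) (conj (φ a) g)
    ⟨Set.Iic a, isLowerSet_Iic a, Set.mem_Iic.2 le_rfl, hT a, hT a⟩
  obtain ⟨I, hlow, haI, hd, hc⟩ := hps
  have hIu : I = Set.univ := by
    by_contra hne
    obtain ⟨a0, ha0, hmin⟩ := (wellFounded_lt (α := ι)).has_min Iᶜ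
      (Set.nonempty_compl.2 hne)
    have hII : I = Set.Iio a0 := by
      ext b
      refine ⟨fun hb => ?_, fun hb => ?_⟩
      · by_contra h
        exact ha0 (hlow (not_lt.1 h) hb)
      · by_contra h
        exact hmin b h hb
    subst hII
    have hr0 := hr a0 ⟨a, haI⟩
    obtain ⟨h, rfl⟩ := exists_conj ((φ a0).comp e) p (hd.trans hr0.symm) (hc.trans hr0.symm)
    obtain ⟨h', hh⟩ := he h
    have hle := conj_le ((φ a0).comp e) (φ a0) e rfl h h' hh
    have h2 := hpmax ⟨Set.Iic a0, isLowerSet_Iic a0, le_of_lt haI, hT a0, hT a0⟩ hle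
    apply hns
    intro u
    obtain ⟨v, hv⟩ := PartialEquiv.dom_le_dom h2 ⟨u, rfl⟩
    exact ⟨v, (φ a0).injective hv⟩
  have htop : T φ I = ⊤ := by
    rw [eq_top_iff]
    intro x _
    obtain ⟨b, u, rfl⟩ := hsurj x
    exact le_T φ (hIu ▸ Set.mem_univ b) ⟨u, rfl⟩
  refine ⟨PartialEquiv.toEquivOfEqTop (hd.trans htop) (hc.trans htop), fun u => ?_⟩
  have h1 := conj_apply (φ a) g u ⟨u, rfl⟩
  rw [← h1]
  have := PartialEquiv.toEquiv_inclusion_apply hp0 ⟨φ a u, ⟨u, rfl⟩⟩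
  have h2 := DFunLike.congr_fun
    (PartialEquiv.toEquivOfEqTop_toEmbedding (hd.trans htop) (hc.trans htop)) (φ a u)
  rw [PartialEquiv.toEmbeddingOfEqTop_apply] at h2
  exact h2.trans (congrArg Subtype.val this)

theorem fg_le [Nonempty ι] (φ : ι → (U ↪[L] N))
    (hmono : ∀ a b, a ≤ b → (φ a).toHom.range ≤ (φ b).toHom.range)
    (hsurj : ∀ x, ∃ a u, φ a u = x) (S : L.Substructure N) (hS : S.FG) :
    ∃ a, S ≤ (φ a).toHom.range := by
  classical
  obtain ⟨A, rfl⟩ := hS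
  choose i u hi using hsurj
  obtain ⟨a, ha⟩ := Finset.exists_le (A.image i)
  refine ⟨a, Substructure.closure_le.2 fun x hx => ?_⟩
  exact hmono _ _ (ha _ (Finset.mem_image_of_mem _ hx)) ⟨u x, hi x⟩

theorem factor {S : Type} [L.Structure S] (m : U ↪[L] N) (f : S ↪[L] N)
    (h : ∀ x, f x ∈ m.toHom.range) : ∃ s : S ↪[L] U, ∀ x, m (s x) = f x := by
  refine ⟨m.equivRange.symm.toEmbedding.comp (f.codRestrict m.toHom.range h), fun x => ?_⟩
  have := m.equivRange.apply_symm_apply (f.codRestrict m.toHom.range h x)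
  exact congrArg Subtype.val this

theorem ultra [Nonempty ι] (φ : ι → (U ↪[L] N))
    (hmono : ∀ a b, a ≤ b → (φ a).toHom.range ≤ (φ b).toHom.range)
    (hsurj : ∀ x, ∃ a u, φ a u = x) (e : U ↪[L] U) (hns : ¬ Function.Surjective e)
    (hr : ∀ a, (∃ b, b < a) → ((φ a).comp e).toHom.range = T φ (Set.Iio a))
    (he : ∀ h : U ≃[L] U, ∃ h' : U ≃[L] U,
        e.comp (Language.Equiv.toEmbedding h) = (Language.Equiv.toEmbedding h').comp e)
    (hU : L.IsUltrahomogeneous U) : L.IsUltrahomogeneous N ∧ L.age N = L.age U := by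
  constructor
  · intro S hS f
    have hS' : Structure.FG L S := (Substructure.fg_iff_structure_fg S).1 hS
    obtain ⟨a, ha⟩ := fg_le φ hmono hsurj (S ⊔ f.toHom.range) (hS.sup (hS'.range f.toHom))
    obtain ⟨s, hs⟩ := factor (φ a) S.subtype
      (fun x => ha (le_sup_left (a := S) (b := f.toHom.range) x.2))
    obtain ⟨t, ht⟩ := factor (φ a) f
      (fun x => ha (le_sup_right (a := S) (b := f.toHom.range) ⟨x, rfl⟩))
    obtain ⟨g, hg⟩ := hU s.toHom.range (hS'.range _) (t.comp s.equivRange.symm.toEmbedding)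
    have hg' : ∀ x, g (s x) = t x := fun x => by
      have := DFunLike.congr_fun hg (s.equivRange x)
      simp only [Embedding.comp_apply, Language.Equiv.coe_toEmbedding,
        Language.Equiv.symm_apply_apply] at this
      exact this.symm
    obtain ⟨G, hG⟩ := exists_extend φ hmono hsurj e hns hr he a g
    refine ⟨G, ?_⟩
    ext x
    change f x = G (S.subtype x)
    rw [← hs, hG, hg', ht]
  · ext M
    constructor
    · rintro ⟨hM, ⟨f⟩⟩
      obtain ⟨a, ha⟩ := fg_le φ hmono hsurj f.toHom.range (hM.range f.toHom)
      obtain ⟨s, -⟩ := factor (φ a) f (fun x => ha ⟨x, rfl⟩)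
      exact ⟨hM, ⟨s⟩⟩
    · rintro ⟨hM, ⟨f⟩⟩
      exact ⟨hM, ⟨(φ (Classical.arbitrary ι)).comp f⟩⟩

/-- The limit of a compatible system of injections into `Ω`. -/
theorem limit {Ω : Type} [Nonempty ι] (φ : ι → U → Ω) (hinj : ∀ a, Function.Injective (φ a))
    (hcomp : ∀ a b, a < b → ∃ j : U ↪[L] U, ∀ u, φ a u = φ b (j u))
    (e : U ↪[L] U) (hns : ¬ Function.Surjective e)
    (hr : ∀ a, (∃ b, b < a) → Set.range (φ a ∘ e) = ⋃ b, ⋃ _ : b < a, Set.range (φ b))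
    (he : ∀ h : U ≃[L] U, ∃ h' : U ≃[L] U,
        e.comp (Language.Equiv.toEmbedding h) = (Language.Equiv.toEmbedding h').comp e)
    (hU : L.IsUltrahomogeneous U) :
    ∃ (D : Bundled.{0} L.Structure) (m : D → Ω) (o : ι → (U ↪[L] D)),
      Function.Injective m ∧ (∀ a u, m (o a u) = φ a u) ∧ (∀ x, ∃ a u, o a u = x) ∧
      L.IsUltrahomogeneous D ∧ L.age D = L.age U := by
  have hcomp' : ∀ a b, a ≤ b → ∃ j : U ↪[L] U, ∀ u, φ a u = φ b (j u) := by
    intro a b h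
    rcases h.eq_or_lt with rfl | h
    · exact ⟨Embedding.refl L U, fun u => rfl⟩
    · exact hcomp a b h
  choose f hf using hcomp'
  have hsys : DirectedSystem (fun _ : ι => U) (fun i j h => f i j h) :=
    { map_self := fun i x => hinj i (hf _ _ _ _).symm
      map_map := fun k j i hij hjk x => hinj _ (by rw [← hf, ← hf, ← hf]) }
  let D := Language.DirectLimit (fun _ : ι => U) f
  let o : ι → (U ↪[L] D) := fun i => Language.DirectLimit.of L ι (fun _ : ι => U) f i
  have ho : ∀ i j (h : i ≤ j) u, o j (f i j h u) = o i u := fun i j h u => Language.DirectLimit.of_f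
  have hosurj : ∀ x, ∃ a u, o a u = x := fun x => Language.DirectLimit.exists_of x
  choose i v hiv using hosurj
  let m : D → Ω := fun x => φ (i x) (v x)
  have hm : ∀ a u, m (o a u) = φ a u := by
    intro a u
    change φ (i (o a u)) (v (o a u)) = φ a u
    have h := hiv (o a u)
    generalize i (o a u) = b at *
    generalize v (o a u) = w at *
    rcases le_total a b with hab | hab
    · rw [← ho _ _ hab] at h
      rw [(o b).injective h, ← hf]
    · rw [← ho _ _ hab] at h
      rw [← (o a).injective h, ← hf]
  have hminj : Function.Injective m := by
    intro x y hxy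
    rw [← hiv x, ← hiv y] at hxy ⊢
    rw [hm, hm] at hxy
    rcases le_total (i x) (i y) with hab | hab
    · rw [hf _ _ hab] at hxy
      rw [← ho _ _ hab, hinj _ hxy]
    · rw [hf _ _ hab] at hxy
      rw [← ho _ _ hab, hinj _ hxy]
  have hosurj : ∀ x, ∃ a u, o a u = x := fun x => ⟨_, _, hiv x⟩
  refine ⟨Bundled.of D, m, o, hminj, hm, hosurj, ?_⟩
  have hmono : ∀ a b, a ≤ b → (o a).toHom.range ≤ (o b).toHom.range := by
    rintro a b h _ ⟨u, rfl⟩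
    exact ⟨f a b h u, ho a b h u⟩
  refine ultra o hmono hosurj e hns (fun a ha => ?_) he hU
  apply le_antisymm
  · rintro _ ⟨u, rfl⟩
    have : φ a (e u) ∈ ⋃ b, ⋃ _ : b < a, Set.range (φ b) := by
      rw [← hr a ha]; exact ⟨u, rfl⟩
    simp only [Set.mem_iUnion] at this
    obtain ⟨b, hb, w, hw⟩ := this
    refine le_T o (Set.mem_Iio.2 hb) ⟨w, ?_⟩
    apply hminj
    change m (o b w) = m (o a (e u))
    rw [hm, hm, hw]
  · refine iSup_le fun b => ?_
    rintro _ ⟨w, rfl⟩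
    have : φ b w ∈ Set.range (φ a ∘ e) := by
      rw [hr a ha]
      simp only [Set.mem_iUnion]
      exact ⟨b, b.2, w, rfl⟩
    obtain ⟨u, hu⟩ := this
    refine ⟨u, ?_⟩
    apply hminj
    change m (o a (e u)) = m (o b w)
    rw [hm, hm, ← hu]
    rfl

/-- A countable injection extends along `e` into an uncountable set. -/
theorem extend_inj {Ω U : Type} [Countable U] [Uncountable Ω] (e : U → U)
    (he : Function.Injective e) (ψ : U → Ω) (hψ : Function.Injective ψ) :
    ∃ χ : U → Ω, Function.Injective χ ∧ ∀ u, χ (e u) = ψ u := by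
  classical
  have hunc : ¬ (Set.range ψ)ᶜ.Countable := fun h => by
    have := (Set.countable_range ψ).union h
    rw [Set.union_compl_self] at this
    exact not_countable (Set.countable_univ_iff.1 this)
  have hinf : Infinite ↥(Set.range ψ)ᶜ := by
    rw [Set.infinite_coe_iff]
    exact fun h => hunc h.countable
  obtain ⟨k, hk⟩ := exists_injective_nat U
  let n := Infinite.natEmbedding ↥(Set.range ψ)ᶜ
  refine ⟨fun u => if h : ∃ v, e v = u then ψ h.choose else (n (k u) : Ω), ?_, ?_⟩
  · intro x y hxy
    dsimp only at hxy
    split_ifs at hxy with h1 h2 h2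
    · rw [← h1.choose_spec, ← h2.choose_spec, hψ hxy]
    · exact ((n (k y)).2 ⟨_, hxy⟩).elim
    · exact ((n (k x)).2 ⟨_, hxy.symm⟩).elim
    · exact hk (n.injective (Subtype.ext hxy))
  · intro u
    have h : ∃ v, e v = e u := ⟨u, rfl⟩
    dsimp only
    rw [dif_pos h, he h.choose_spec]

end FraisseUncountable

theorem statement8 (L : FirstOrder.Language.{0, 0}) [Countable L.Symbols]
    (K : Set (Bundled.{0} L.Structure)) [IsFraisse K]
    (U : Type) [L.Structure U] [Countable U]
    (hU : IsFraisseLimit K U)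
    (hext : ∃ e : U ↪[L] U, ¬ Function.Surjective e ∧
      ∀ h : U ≃[L] U, ∃ h' : U ≃[L] U,
        e.comp (Language.Equiv.toEmbedding h) = (Language.Equiv.toEmbedding h').comp e) :
    ∃ N : Bundled.{0} L.Structure, ¬ Countable N ∧
      L.IsUltrahomogeneous N ∧ L.age N = K := by
  classical
  obtain ⟨e, hns, he⟩ := hext
  let ι : Type := (Cardinal.aleph 1 : Cardinal.{0}).ord.ToType
  have hιu : Uncountable ι := by
    rw [← Cardinal.aleph0_lt_mk_iff, Cardinal.mk_ord_toType]
    exact Cardinal.aleph0_lt_aleph_one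
  have hιc : ∀ a : ι, Countable (Set.Iio a) := fun a => by
    rw [← Cardinal.mk_le_aleph0_iff, ← Cardinal.lt_aleph_one_iff]
    exact Cardinal.mk_Iio_toType_ord_lt a
  have hne : Nonempty ι := inferInstance
  have := FraisseUncountable.exists_rec (ι := ι) (X := U → ι)
    (fun a f x => Function.Injective x ∧
      (∀ b (h : b < a), ∃ j : U ↪[L] U, ∀ u, f b h u = x (j u)) ∧
      ((∃ b, b < a) → Set.range (x ∘ e) = ⋃ b, ⋃ h : b < a, Set.range (f b h)))
    (by
      intro a φ hφ
      by_cases ha : ∃ b, b < a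
      · obtain ⟨b0, hb0⟩ := ha
        have : Nonempty (Set.Iio a) := ⟨⟨b0, hb0⟩⟩
        have := hιc a
        obtain ⟨D, m, o, hm, hmo, hosurj, hD, hage⟩ :=
          FraisseUncountable.limit (L := L) (ι := Set.Iio a) (fun b => φ b)
          (fun b => (hφ b b.2).1)
          (fun b c hbc => (hφ c c.2).2.1 b hbc) e hns
          (fun b hb => by
            obtain ⟨c, hc⟩ := hb
            rw [(hφ b b.2).2.2 ⟨c, hc⟩]
            ext x
            simp only [Set.mem_iUnion]
            constructor
            · rintro ⟨d, hd, hx⟩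
              exact ⟨⟨d, lt_trans hd b.2⟩, hd, hx⟩
            · rintro ⟨d, hd, hx⟩
              exact ⟨d, hd, hx⟩) he hU.ultrahomogeneous
        have hDc : Countable D := by
          have : Function.Surjective (fun p : Set.Iio a × U => o p.1 p.2) := fun x => by
            obtain ⟨b, u, h⟩ := hosurj x
            exact ⟨(b, u), h⟩
          exact this.countable
        have hDF : IsFraisseLimit K D := ⟨hD, hage.trans hU.age⟩
        obtain ⟨i⟩ := hU.nonempty_equiv hDF
        obtain ⟨χ, hχ, hχe⟩ := FraisseUncountable.extend_inj (Ω := ι) e e.injective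
          (fun u => m (i u)) (hm.comp i.injective)
        refine ⟨χ, hχ, fun b hb => ⟨e.comp (i.symm.toEmbedding.comp (o ⟨b, hb⟩)), fun u => ?_⟩,
          fun _ => ?_⟩
        · change _ = χ (e (i.symm (o ⟨b, hb⟩ u)))
          rw [hχe, Language.Equiv.apply_symm_apply, hmo]
        · ext x
          simp only [Set.mem_iUnion, Set.mem_range, Function.comp_apply, hχe]
          constructor
          · rintro ⟨u, rfl⟩
            obtain ⟨b, w, h⟩ := hosurj (i u)
            exact ⟨b, b.2, w, by rw [← h, hmo]⟩
          · rintro ⟨b, hb, w, rfl⟩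
            refine ⟨i.symm (o ⟨b, hb⟩ w), ?_⟩
            rw [Language.Equiv.apply_symm_apply, hmo]
      · obtain ⟨k, hk⟩ := exists_injective_nat U
        have : Infinite ι := inferInstance
        refine ⟨fun u => Infinite.natEmbedding ι (k u), (Infinite.natEmbedding ι).injective.comp hk,
          fun b hb => (ha ⟨b, hb⟩).elim, fun h => (ha h).elim⟩)
  obtain ⟨φ, hφ⟩ := this
  obtain ⟨D, m, o, hm, hmo, hosurj, hD, hage⟩ :=
    FraisseUncountable.limit (L := L) φ (fun b => (hφ b).1)
    (fun b c hbc => (hφ c).2.1 b hbc) e hns (fun b hb => (hφ b).2.2 hb) he hU.ultrahomogeneous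
  refine ⟨D, fun hc => ?_, hD, hage.trans hU.age⟩
  obtain ⟨w, hw⟩ := not_forall.1 hns
  have hinj : Function.Injective (fun a => o a w) := by
    have key : ∀ a b, a < b → o a w ≠ o b w := by
      intro a b hab h
      have h1 : φ a w = φ b w := by rw [← hmo, ← hmo, h]
      have h2 : φ a w ∈ Set.range (φ b ∘ e) := by
        rw [(hφ b).2.2 ⟨a, hab⟩]
        simp only [Set.mem_iUnion]
        exact ⟨a, hab, w, rfl⟩
      obtain ⟨u, hu⟩ := h2
      exact hw ⟨u, (hφ b).1 (hu.trans h1)⟩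
    intro a b h
    rcases lt_trichotomy a b with hab | hab | hab
    · exact (key a b hab h).elim
    · exact hab
    · exact (key b a hab h.symm).elim
  have : Countable ι := hinj.countable
  exact not_countable this
end

section
/- Let L be a finite relational first-order language and let F be a Fraïssé class of L-structures containing structures of arbitrarily large finite cardinality (equivalently, whose Fraïssé limit is infinite). Then there exists an ultrahomogeneous L-structure of cardinality ℵ₁ whose age equals F. -/
open FirstOrder Language Cardinal CategoryTheory

namespace St13
open FirstOrder.Language.Structure

variable {L : FirstOrder.Language.{0, 0}}

/-- Two tuples have the same quantifier-free type. -/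
def SameType {M N : Type} [L.Structure M] [L.Structure N] {ι : Type} (a : ι → M) (b : ι → N) :
    Prop :=
  (∀ i j, a i = a j ↔ b i = b j) ∧
    ∀ (k : ℕ) (r : L.Relations k) (t : Fin k → ι), RelMap r (a ∘ t) ↔ RelMap r (b ∘ t)

variable (L) in
/-- Tuple version of ultrahomogeneity. -/
def TH (M : Type) [L.Structure M] : Prop :=
  ∀ (n : ℕ) (a b : Fin n → M), SameType (L := L) a b → ∃ g : M ≃[L] M, ∀ i, g (a i) = b i

/-- Embedding in a relational language. -/
def mkEmb [L.IsRelational] {M N : Type} [L.Structure M] [L.Structure N] (f : M → N)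
    (hf : Function.Injective f)
    (h : ∀ (k : ℕ) (r : L.Relations k) (t : Fin k → M), RelMap r (f ∘ t) ↔ RelMap r t) :
    M ↪[L] N where
  toFun := f
  inj' := hf
  map_fun' := fun g => isEmptyElim g
  map_rel' := fun r t => h _ r t

@[simp] theorem mkEmb_apply [L.IsRelational] {M N : Type} [L.Structure M] [L.Structure N]
    (f : M → N) (hf : Function.Injective f)
    (h : ∀ (k : ℕ) (r : L.Relations k) (t : Fin k → M), RelMap r (f ∘ t) ↔ RelMap r t) (x : M) :
    mkEmb (L := L) f hf h x = f x := rfl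

/-- Equivalence in a relational language. -/
def mkEquiv [L.IsRelational] {M N : Type} [L.Structure M] [L.Structure N] (f : M ≃ N)
    (h : ∀ (k : ℕ) (r : L.Relations k) (t : Fin k → M), RelMap r (f ∘ t) ↔ RelMap r t) :
    M ≃[L] N where
  toEquiv := f
  map_fun' := fun g => isEmptyElim g
  map_rel' := fun r t => h _ r t

@[simp] theorem mkEquiv_apply [L.IsRelational] {M N : Type} [L.Structure M] [L.Structure N]
    (f : M ≃ N)
    (h : ∀ (k : ℕ) (r : L.Relations k) (t : Fin k → M), RelMap r (f ∘ t) ↔ RelMap r t) (x : M) :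
    mkEquiv (L := L) f h x = f x := rfl

/-- Structure on a type in a relational language. -/
@[reducible] def strOf [L.IsRelational] {α : Type}
    (R : ∀ n, L.Relations n → (Fin n → α) → Prop) : L.Structure α where
  funMap := fun f => isEmptyElim f
  RelMap := fun {n} r x => R n r x

theorem sameType_of_emb {M N : Type} [L.Structure M] [L.Structure N] (f : M ↪[L] N)
    {ι : Type} (a : ι → M) : SameType (L := L) a (fun i => f (a i)) :=
  ⟨fun _ _ => f.injective.eq_iff.symm, fun _ r t => (f.map_rel r (a ∘ t)).symm⟩

theorem TH.ultra [L.IsRelational] {M : Type} [L.Structure M] (h : TH L M) :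
    L.IsUltrahomogeneous M := by
  intro S hS f
  have : Finite S := hS.finite
  obtain ⟨n, ⟨e⟩⟩ := Finite.exists_equiv_fin S
  obtain ⟨g, hg⟩ := h n (fun i => (e.symm i : M)) (fun i => f (e.symm i)) (by
    have h1 := sameType_of_emb (L := L) f (fun i => e.symm i)
    have h2 := sameType_of_emb (L := L) S.subtype (fun i => e.symm i)
    exact ⟨fun i j => (h2.1 i j).symm.trans (h1.1 i j),
      fun k r t => (h2.2 k r t).symm.trans (h1.2 k r t)⟩)
  refine ⟨g, ?_⟩
  ext x
  have := hg (e x)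
  simp at this
  simp [this]

theorem exists_lift_emb [L.IsRelational] {M N : Type} [L.Structure M] [L.Structure N]
    {ι : Type} {a : ι → M} {b : ι → N} (hab : SameType (L := L) a b) (S : L.Substructure M)
    (hS : (S : Set M) = Set.range a) :
    ∃ f : S ↪[L] N, ∀ i (hi : a i ∈ S), f ⟨a i, hi⟩ = b i := by
  have h : ∀ x : S, ∃ i, a i = x := fun x => by
    have : (x : M) ∈ (S : Set M) := x.2
    rw [hS] at this
    exact this
  choose c hc using h
  refine ⟨mkEmb (fun x => b (c x)) ?_ ?_, ?_⟩
  · intro x y hxy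
    have := (hab.1 (c x) (c y)).2 hxy
    rw [hc, hc] at this
    exact Subtype.ext this
  · intro k r t
    have := hab.2 k r (fun i => c (t i))
    refine this.symm.trans ?_
    have h2 : a ∘ (fun i => c (t i)) = S.subtype ∘ t := by
      funext i; simp [hc]
    rw [h2]
    exact S.subtype.map_rel r t
  · intro i hi
    exact (hab.1 _ _).1 (hc ⟨a i, hi⟩)

/-- Tuple version of the extension property, for countable structures. -/
theorem TH_of_ext [L.IsRelational] {M : Type} [L.Structure M] [Countable M]
    (h : ∀ (n : ℕ) (a b : Fin n → M) (m : M), SameType (L := L) a b →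
      ∃ m' : M, SameType (L := L) (Fin.cons m a : Fin (n+1) → M) (Fin.cons m' b : Fin (n+1) → M)) :
    TH L M := by
  have hext : L.IsExtensionPair M M := by
    rw [isExtensionPair_iff_exists_embedding_closure_singleton_sup]
    intro S hS f m
    have : Finite S := hS.finite
    obtain ⟨n, ⟨e⟩⟩ := Finite.exists_equiv_fin S
    obtain ⟨m', hm'⟩ := h n (fun i => (e.symm i : M)) (fun i => f (e.symm i)) m (by
      have h1 := sameType_of_emb (L := L) f (fun i => e.symm i)
      have h2 := sameType_of_emb (L := L) S.subtype (fun i => e.symm i)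
      exact ⟨fun i j => (h2.1 i j).symm.trans (h1.1 i j),
        fun k r t => (h2.2 k r t).symm.trans (h1.2 k r t)⟩)
    obtain ⟨g, hg⟩ := exists_lift_emb hm' (Substructure.closure L {m} ⊔ S) (by
      have : (Substructure.closure L {m} ⊔ S) = Substructure.closure L ({m} ∪ (S : Set M)) := by
        rw [Substructure.closure_union, Substructure.closure_eq]
      rw [this, Substructure.closure_eq_of_isRelational, Fin.range_cons]
      ext x
      simp only [Set.mem_union, Set.mem_insert_iff, Set.mem_singleton_iff, Set.mem_range]
      refine or_congr Iff.rfl ⟨fun hx => ⟨e ⟨x, hx⟩, by simp⟩, ?_⟩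
      rintro ⟨i, rfl⟩
      exact (e.symm i).2)
    refine ⟨g, ?_⟩
    ext x
    have := hg (e x).succ (by simpa using (le_sup_right : S ≤ Substructure.closure L {m} ⊔ S) x.2)
    simp only [Fin.cons_succ, Equiv.symm_apply_apply] at this
    rw [← this]
    rfl
  have hu := (isUltrahomogeneous_iff_IsExtensionPair (Structure.cg_of_countable)).2 hext
  intro n a b hab
  obtain ⟨f, hf⟩ := exists_lift_emb hab (Substructure.closure L (Set.range a))
    (Substructure.closure_eq_of_isRelational L _)
  obtain ⟨g, hg⟩ := hu _ (Substructure.fg_closure (Set.finite_range a)) f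
  refine ⟨g, fun i => ?_⟩
  have h1 : a i ∈ Substructure.closure L (Set.range a) :=
    Substructure.subset_closure ⟨i, rfl⟩
  rw [← hf i h1, hg]
  rfl

/-! ### Ultrapower -/

/-- Ultrapower. -/
def U (M : Type) : Type := Filter.Germ (Filter.hyperfilter ℕ : Filter ℕ) M

/-- Representative. -/
noncomputable def U.rep {M : Type} (x : U M) : ℕ → M := Quotient.out x

/-- Class of a sequence. -/
noncomputable def U.mk {M : Type} (x : ℕ → M) : U M := (x : Filter.Germ (Filter.hyperfilter ℕ : Filter ℕ) M)

theorem U.mk_eq {M : Type} (x y : ℕ → M) :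
    U.mk x = U.mk y ↔ ∀ᶠ i in (Filter.hyperfilter ℕ : Filter ℕ), x i = y i :=
  Filter.Germ.coe_eq

theorem U.mk_rep {M : Type} (x : U M) : U.mk x.rep = x := Quotient.out_eq x

theorem U.rep_mk {M : Type} (x : ℕ → M) :
    ∀ᶠ i in (Filter.hyperfilter ℕ : Filter ℕ), (U.mk x).rep i = x i := by
  rw [← U.mk_eq, U.mk_rep]

instance [L.IsRelational] (M : Type) [L.Structure M] : L.Structure (U M) :=
  strOf fun _ r x => ∀ᶠ i in (Filter.hyperfilter ℕ : Filter ℕ), RelMap r (fun j => (x j).rep i)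

theorem U.rel [L.IsRelational] {M : Type} [L.Structure M] {k : ℕ} (r : L.Relations k)
    (x : Fin k → ℕ → M) : RelMap r (fun j => U.mk (x j)) ↔
      ∀ᶠ i in (Filter.hyperfilter ℕ : Filter ℕ), RelMap r (fun j => x j i) := by
  have h : ∀ᶠ i in (Filter.hyperfilter ℕ : Filter ℕ), ∀ j, (U.mk (x j)).rep i = x j i :=
    Filter.eventually_all.2 fun j => U.rep_mk (x j)
  change (∀ᶠ i in (Filter.hyperfilter ℕ : Filter ℕ), RelMap r (fun j => (U.mk (x j)).rep i)) ↔ _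
  refine Filter.eventually_congr (h.mono fun i hi => ?_)
  simp only [hi]

theorem ev_iff (P Q : ℕ → Prop) :
    (∀ᶠ i in (Filter.hyperfilter ℕ : Filter ℕ), (P i ↔ Q i)) ↔
    ((∀ᶠ i in (Filter.hyperfilter ℕ : Filter ℕ), P i) ↔
      (∀ᶠ i in (Filter.hyperfilter ℕ : Filter ℕ), Q i)) := by
  simp only [iff_iff_implies_and_implies, Filter.eventually_and, Ultrafilter.eventually_imp]

theorem U.sameType [L.IsRelational] [Finite L.Symbols] {M : Type} [L.Structure M]
    {ι : Type} [Finite ι] (b c : ι → ℕ → M)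
    (h : SameType (L := L) (fun j => U.mk (b j)) (fun j => U.mk (c j))) :
    ∀ᶠ i in (Filter.hyperfilter ℕ : Filter ℕ),
      SameType (L := L) (fun j => b j i) (fun j => c j i) := by
  have : Finite (Σ k, L.Relations k) := Finite.of_injective
    (Sum.inr : _ → L.Symbols) Sum.inr_injective
  refine Filter.Eventually.and ?_ ?_
  · refine Filter.eventually_all.2 fun i => Filter.eventually_all.2 fun j => ?_
    rw [ev_iff, ← U.mk_eq, ← U.mk_eq]
    exact h.1 i j
  · have : ∀ᶠ i in (Filter.hyperfilter ℕ : Filter ℕ), ∀ (s : Σ k, L.Relations k)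
      (t : Fin s.1 → ι), RelMap s.2 ((fun j => b j i) ∘ t) ↔ RelMap s.2 ((fun j => c j i) ∘ t) := by
      refine Filter.eventually_all.2 fun s => Filter.eventually_all.2 fun t => ?_
      rw [ev_iff]
      have h1 := U.rel s.2 (fun j => b (t j))
      have h2 := U.rel s.2 (fun j => c (t j))
      exact h1.symm.trans ((h.2 s.1 s.2 t).trans h2)
    exact this.mono fun i hi k r t => hi ⟨k, r⟩ t

/-- Diagonal embedding. -/
noncomputable def U.diag [L.IsRelational] (M : Type) [L.Structure M] : M ↪[L] U M :=
  mkEmb (fun x => U.mk fun _ => x)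
    (fun x y h => by
      rw [U.mk_eq] at h
      simpa using h)
    (fun k r t => by
      refine (U.rel r (fun j _ => t j)).trans ?_
      simp)

/-- Apply maps coordinatewise. -/
noncomputable def U.map {M : Type} (g : ℕ → M → M) (x : U M) : U M := U.mk fun i => g i (x.rep i)

theorem U.map_mk {M : Type} (g : ℕ → M → M) (x : ℕ → M) :
    U.map g (U.mk x) = U.mk fun i => g i (x i) := by
  rw [U.map, U.mk_eq]
  exact (U.rep_mk x).mono fun i hi => by rw [hi]

theorem U.th [L.IsRelational] [Finite L.Symbols] {M : Type} [L.Structure M] (h : TH L M) :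
    TH L (U M) := by
  classical
  intro n a b hab
  have h1 := U.sameType (L := L) (fun j => (a j).rep) (fun j => (b j).rep)
    (by simpa only [U.mk_rep] using hab)
  have h2 : ∀ i, ∃ g : M ≃[L] M,
      SameType (L := L) (fun j => (a j).rep i) (fun j => (b j).rep i) →
        ∀ j, g ((a j).rep i) = (b j).rep i := by
    intro i
    by_cases hs : SameType (L := L) (fun j => (a j).rep i) (fun j => (b j).rep i)
    · obtain ⟨g, hg⟩ := h n _ _ hs
      exact ⟨g, fun _ => hg⟩
    · exact ⟨FirstOrder.Language.Equiv.refl L M, fun h => absurd h hs⟩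
  choose g hg using h2
  refine ⟨mkEquiv ⟨U.map fun i => g i, U.map fun i => (g i).symm, ?_, ?_⟩ ?_, ?_⟩
  · intro x
    rw [← U.mk_rep x, U.map_mk, U.map_mk]
    simp
  · intro x
    rw [← U.mk_rep x, U.map_mk, U.map_mk]
    simp
  · intro k r t
    have h3 : t = fun j => U.mk (t j).rep := by funext j; rw [U.mk_rep]
    rw [h3]
    have h4 : ((U.map fun i => g i) ∘ fun j => U.mk (t j).rep) =
      fun j => U.mk fun i => g i ((t j).rep i) := by
      funext j; exact U.map_mk _ _
    refine (iff_of_eq (congrArg (RelMap r) h4)).trans ?_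
    rw [U.rel, U.rel]
    refine Filter.eventually_congr (Filter.Eventually.of_forall fun i => ?_)
    exact (g i).map_rel r (fun j => (t j).rep i)
  · intro j
    simp only [mkEquiv_apply, Equiv.coe_fn_mk]
    conv_rhs => rw [← U.mk_rep (b j)]
    rw [U.map, U.mk_eq]
    exact h1.mono fun i hi => hg i hi j

theorem U.emb [L.IsRelational] [Finite L.Symbols] {M N : Type} [L.Structure M]
    [L.Structure N] [Finite N] (e : N ↪[L] U M) : Nonempty (N ↪[L] M) := by
  have : Finite (Σ k, L.Relations k) := Finite.of_injective
    (Sum.inr : _ → L.Symbols) Sum.inr_injective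
  have h1 : ∀ᶠ i in (Filter.hyperfilter ℕ : Filter ℕ), ∀ x y, (e x).rep i = (e y).rep i → x = y := by
    refine Filter.eventually_all.2 fun x => Filter.eventually_all.2 fun y => ?_
    rw [Ultrafilter.eventually_imp, ← U.mk_eq, U.mk_rep, U.mk_rep]
    intro h
    exact Filter.Eventually.of_forall fun _ => e.injective h
  have h2 : ∀ᶠ i in (Filter.hyperfilter ℕ : Filter ℕ), ∀ (s : Σ k, L.Relations k)
      (t : Fin s.1 → N), RelMap s.2 ((fun j => (e j).rep i) ∘ t) ↔ RelMap s.2 t := by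
    refine Filter.eventually_all.2 fun s => Filter.eventually_all.2 fun t => ?_
    rw [ev_iff]
    have h1 := U.rel s.2 (fun j => (e (t j)).rep)
    simp only [U.mk_rep] at h1
    refine h1.symm.trans ?_
    rw [Filter.eventually_const]
    exact e.map_rel s.2 t
  obtain ⟨i, hi1, hi2⟩ := (h1.and h2).exists
  exact ⟨mkEmb (fun x => (e x).rep i) (fun x y h => hi1 x y h) (fun k r t => hi2 ⟨k, r⟩ t)⟩

theorem U.uncountable (M : Type) [Infinite M] : Uncountable (U M) := by
  rw [← not_countable_iff]
  intro hc
  have : Nonempty (U M) := ⟨U.mk fun _ => Classical.arbitrary M⟩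
  obtain ⟨f, hf⟩ := exists_surjective_nat (U M)
  have : ∀ i : ℕ, ∃ m : M, m ∉ (fun n => (f n).rep i) '' (Set.Iic i) := fun i =>
    ((Set.finite_Iic i).image _).infinite_compl.nonempty
  choose h hh using this
  obtain ⟨n, hn⟩ := hf (U.mk h)
  rw [← U.mk_rep (f n), U.mk_eq] at hn
  have h2 : ∀ᶠ i in (Filter.hyperfilter ℕ : Filter ℕ), n ≤ i := by
    apply Filter.Eventually.filter_mono (Nat.hyperfilter_le_atTop)
    exact Filter.eventually_ge_atTop n
  obtain ⟨i, hi1, hi2⟩ := (hn.and h2).exists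
  exact hh i ⟨n, hi2, hi1⟩


/-! ### Closing off under automorphisms -/

open Classical in
/-- A chosen automorphism realizing a finite list of pairs. -/
noncomputable def aut {V : Type} [L.Structure V] (l : List (V × V)) : V ≃[L] V :=
  if h : ∃ g : V ≃[L] V, ∀ p ∈ l, g p.1 = p.2 then h.choose
  else FirstOrder.Language.Equiv.refl L V

theorem aut_spec {V : Type} [L.Structure V] (l : List (V × V)) (h : ∃ g : V ≃[L] V, ∀ p ∈ l, g p.1 = p.2) :
    ∀ p ∈ l, aut (L := L) l p.1 = p.2 := by
  rw [aut, dif_pos h]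
  exact h.choose_spec

variable (L) in
/-- The value used in the closing-off step. -/
noncomputable def stepFun {V : Type} [L.Structure V] (X : Set V) (q : List (X × X) × Bool × X) : V :=
  let g := aut (L := L) (q.1.map fun p => ((p.1 : V), (p.2 : V)))
  if q.2.1 then g q.2.2 else g.symm q.2.2

variable (L) in
/-- One closing-off step. -/
noncomputable def step {V : Type} [L.Structure V] (X : Set V) : Set V :=
  X ∪ Set.range (stepFun L X)

theorem card_step {V : Type} [L.Structure V] (X : Set V) (h : #X = ℵ_ 1) : #(step L X) = ℵ_ 1 := by
  have hinf : ℵ₀ ≤ #X := by rw [h]; exact aleph0_le_aleph 1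
  have : Infinite X := infinite_iff.2 hinf
  apply le_antisymm
  · refine (mk_union_le _ _).trans ?_
    refine (add_le_add h.le mk_range_le).trans ?_
    have h0 : ℵ₀ ≤ ℵ_ 1 := aleph0_le_aleph 1
    have h1 : #(List (X × X)) = ℵ_ 1 := by
      simp only [mk_list_eq_mk, mk_prod, lift_id, h, mul_eq_self h0]
    simp only [mk_prod, lift_id, h1, h, mk_bool]
    have h2 : (2 : Cardinal) * ℵ_ 1 = ℵ_ 1 :=
      mul_eq_right h0 ((ofNat_lt_aleph0).le.trans h0) two_ne_zero
    rw [h2, mul_eq_self h0, add_eq_self h0]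
  · rw [← h]
    exact mk_le_mk_of_subset Set.subset_union_left

theorem exists_sub [L.IsRelational] {V : Type} [L.Structure V] (hV : TH L V) (X₀ : Set V)
    (h0 : #X₀ = ℵ_ 1) :
    ∃ N : L.Substructure V, X₀ ⊆ N ∧ #N = ℵ_ 1 ∧ TH L N := by
  let X : ℕ → Set V := fun n => (step L)^[n] X₀
  have hsucc : ∀ n, X (n+1) = step L (X n) := fun n => Function.iterate_succ_apply' _ _ _
  have hcard : ∀ n, #(X n) = ℵ_ 1 := by
    intro n
    induction n with
    | zero => exact h0
    | succ n ih => rw [hsucc]; exact card_step _ ih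
  have hmono : Monotone X := monotone_nat_of_le_succ fun n => by
    rw [hsucc]; exact Set.subset_union_left
  let N : L.Substructure V := ⟨⋃ n, X n, fun {n} f => isEmptyElim f⟩
  have hmem : ∀ x : V, x ∈ N ↔ ∃ n, x ∈ X n := fun x => Set.mem_iUnion
  have hX0 : X₀ ⊆ N := fun x hx => (hmem x).2 ⟨0, hx⟩
  refine ⟨N, hX0, le_antisymm ?_ ?_, ?_⟩
  · refine (mk_iUnion_le X).trans ?_
    simp only [hcard]
    rw [ciSup_const, mk_nat]
    exact (aleph0_mul_eq (aleph0_le_aleph 1)).le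
  · rw [← h0]; exact mk_le_mk_of_subset hX0
  · intro n a b hab
    have key : ∀ l : List (V × V), (∀ p ∈ l, p.1 ∈ N ∧ p.2 ∈ N) → ∀ x ∈ N,
        aut (L := L) l x ∈ N ∧ (aut (L := L) l).symm x ∈ N := by
      intro l hl x hx
      have hk : ∃ k, ∀ p ∈ l, p.1 ∈ X k ∧ p.2 ∈ X k := by
        clear hx
        induction l with
        | nil => exact ⟨0, by simp⟩
        | cons p l ih =>
          obtain ⟨k, hk⟩ := ih fun p hp => hl p (List.mem_cons_of_mem _ hp)
          obtain ⟨h1, h2⟩ := hl p List.mem_cons_self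
          obtain ⟨k1, h1⟩ := (hmem _).1 h1
          obtain ⟨k2, h2⟩ := (hmem _).1 h2
          refine ⟨max k (max k1 k2), fun q hq => ?_⟩
          rcases List.mem_cons.1 hq with rfl | hq
          · exact ⟨hmono (by simp) h1, hmono (by simp) h2⟩
          · exact ⟨hmono (by simp) (hk q hq).1, hmono (by simp) (hk q hq).2⟩
      obtain ⟨k, hk⟩ := hk
      obtain ⟨k', hx⟩ := (hmem x).1 hx
      let m := max k k'
      have hl' : ∀ p ∈ l, p.1 ∈ X m ∧ p.2 ∈ X m := fun p hp =>
        ⟨hmono (le_max_left _ _) (hk p hp).1, hmono (le_max_left _ _) (hk p hp).2⟩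
      have hx' : x ∈ X m := hmono (le_max_right _ _) hx
      let l' : List (X m × X m) := l.pmap (fun p hp => (⟨p.1, hp.1⟩, ⟨p.2, hp.2⟩)) hl'
      have hl'' : l'.map (fun p => ((p.1 : V), (p.2 : V))) = l := by
        simp [l', List.map_pmap]
      constructor
      · refine (hmem _).2 ⟨m+1, ?_⟩
        rw [hsucc]
        refine Or.inr ⟨(l', true, ⟨x, hx'⟩), ?_⟩
        simp only [stepFun, hl'']
        rfl
      · refine (hmem _).2 ⟨m+1, ?_⟩
        rw [hsucc]
        refine Or.inr ⟨(l', false, ⟨x, hx'⟩), ?_⟩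
        simp only [stepFun, hl'']
        rfl
    let l : List (V × V) := List.ofFn fun i => ((a i : V), (b i : V))
    have hex : ∃ g : V ≃[L] V, ∀ p ∈ l, g p.1 = p.2 := by
      obtain ⟨g, hg⟩ := hV n (fun i => (a i : V)) (fun i => (b i : V)) (by
        have h1 := sameType_of_emb (L := L) N.subtype a
        have h2 := sameType_of_emb (L := L) N.subtype b
        exact ⟨fun i j => (h1.1 i j).symm.trans ((hab.1 i j).trans (h2.1 i j)),
          fun k r t => (h1.2 k r t).symm.trans ((hab.2 k r t).trans (h2.2 k r t))⟩)
      refine ⟨g, fun p hp => ?_⟩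
      obtain ⟨i, rfl⟩ := (List.mem_ofFn' _ _).1 hp
      exact hg i
    have hs := aut_spec l hex
    have hl : ∀ p ∈ l, p.1 ∈ N ∧ p.2 ∈ N := fun p hp => by
      obtain ⟨i, rfl⟩ := (List.mem_ofFn' _ _).1 hp
      exact ⟨(a i).2, (b i).2⟩
    refine ⟨mkEquiv ⟨fun x => ⟨aut (L := L) l x, (key l hl x x.2).1⟩,
      fun x => ⟨(aut (L := L) l).symm x, (key l hl x x.2).2⟩, ?_, ?_⟩ ?_, ?_⟩
    · intro x; simp
    · intro x; simp
    · intro k r t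
      refine (N.subtype.map_rel r _).symm.trans ?_
      refine Iff.trans ?_ (N.subtype.map_rel r t)
      exact (aut (L := L) l).map_rel r (N.subtype ∘ t)
    · intro i
      exact Subtype.ext (hs (a i, b i) ((List.mem_ofFn' _ _).2 ⟨i, rfl⟩))


/-! ### The countable Fraïssé limit -/

section limit

variable [L.IsRelational] (K : Set (Bundled.{0} L.Structure))

/-- The domain of a finite structure on a subset of `ℕ`. -/
@[ext] structure FT (D : Finset ℕ) (R : ∀ n, L.Relations n → (Fin n → ℕ) → Prop) : Type where
  /-- the underlying number -/
  val : ℕ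
  mem : val ∈ D

instance (D : Finset ℕ) (R : ∀ n, L.Relations n → (Fin n → ℕ) → Prop) :
    L.Structure (FT D R) := strOf fun n r x => R n r fun i => (x i).val

instance (D : Finset ℕ) (R : ∀ n, L.Relations n → (Fin n → ℕ) → Prop) : Finite (FT D R) :=
  Finite.of_injective (fun x => (⟨x.1, x.2⟩ : {x // x ∈ D}))
    (fun _ _ h => FT.ext (congrArg Subtype.val h))

/-- The finite structure attached to a family of relations on `ℕ` and a finite set. -/
abbrev fstr (D : Finset ℕ) (R : ∀ n, L.Relations n → (Fin n → ℕ) → Prop) :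
    Bundled.{0} L.Structure :=
  ⟨FT D R, inferInstance⟩

/-- Conditions: finite structures of `K` living on finite subsets of `ℕ`. -/
structure Cond where
  /-- the domain -/
  D : Finset ℕ
  /-- the relations -/
  R : ∀ n, L.Relations n → (Fin n → ℕ) → Prop
  mem : fstr D R ∈ K

variable {K}

instance : Preorder (Cond K) where
  le p q := p.D ⊆ q.D ∧ ∀ n (r : L.Relations n) (x : Fin n → ℕ), (∀ i, x i ∈ p.D) →
    (p.R n r x ↔ q.R n r x)
  le_refl p := ⟨subset_rfl, fun _ _ _ _ => Iff.rfl⟩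
  le_trans p q s h1 h2 := ⟨h1.1.trans h2.1, fun n r x hx =>
    (h1.2 n r x hx).trans (h2.2 n r x fun i => h1.1 (hx i))⟩

theorem Cond.le_def (p q : Cond K) : p ≤ q ↔ (p.D ⊆ q.D ∧
    ∀ n (r : L.Relations n) (x : Fin n → ℕ), (∀ i, x i ∈ p.D) → (p.R n r x ↔ q.R n r x)) := Iff.rfl

theorem exists_cond [hK : IsFraisse K] : Nonempty (Cond K) := by
  obtain ⟨B, hB⟩ := hK.is_nonempty
  refine ⟨⟨∅, fun n r x => ∀ t : Fin n → B, RelMap r t, ?_⟩⟩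
  refine hK.hereditary B hB ⟨?_, ?_⟩
  · exact Structure.fg_iff_finite.2 inferInstance
  · refine ⟨mkEmb (fun x => absurd x.2 (by simp)) (fun x => absurd x.2 (by simp)) ?_⟩
    · intro k r t
      have : IsEmpty (Fin k) := ⟨fun i => absurd (t i).2 (by simp)⟩
      refine ⟨fun h s => ?_, fun h => h _⟩
      convert h using 1

theorem Cond.extend [hK : IsFraisse K] (p : Cond K) (B : Bundled.{0} L.Structure) (hB : B ∈ K)
    (e : FT p.D p.R ↪[L] B) :
    ∃ q : Cond K, p ≤ q ∧ ∃ f : B → ℕ, Function.Injective f ∧ (∀ x, f x ∈ q.D) ∧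
      (∀ x, f (e x) = x.1) ∧
      ∀ n (r : L.Relations n) (t : Fin n → B), q.R n r (f ∘ t) ↔ RelMap r t := by
  classical
  have hfin : Finite B := (hK.FG B hB).finite
  obtain ⟨n, ⟨c⟩⟩ := Finite.exists_equiv_fin B
  let f : B → ℕ := fun x => if h : ∃ y, e y = x then (h.choose).1 else c x + p.D.sup id + 1
  have hfe : ∀ x, f (e x) = x.1 := by
    intro x
    have h : ∃ y, e y = e x := ⟨x, rfl⟩
    simp only [f, dif_pos h]
    exact congrArg FT.val (e.injective h.choose_spec)
  have hle : ∀ x ∈ p.D, x ≤ p.D.sup id := fun x hx => Finset.le_sup (f := id) hx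
  have hne : ∀ x, (¬ ∃ y, e y = x) → f x = c x + p.D.sup id + 1 := fun x hx => dif_neg hx
  have hf : Function.Injective f := by
    intro x y hxy
    by_cases hx : ∃ z, e z = x <;> by_cases hy : ∃ z, e z = y
    · obtain ⟨x, rfl⟩ := hx
      obtain ⟨y, rfl⟩ := hy
      rw [hfe, hfe] at hxy
      rw [FT.ext hxy]
    · obtain ⟨x, rfl⟩ := hx
      rw [hfe, hne y hy] at hxy
      have := hle _ x.2
      omega
    · obtain ⟨y, rfl⟩ := hy
      rw [hfe, hne x hx] at hxy
      have := hle _ y.2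
      omega
    · rw [hne x hx, hne y hy] at hxy
      apply c.injective
      apply Fin.ext
      omega
  let D : Finset ℕ := (Set.finite_range f).toFinset
  have hD : ∀ x, x ∈ D ↔ ∃ y, f y = x := fun x => by simp [D]
  let R : ∀ n, L.Relations n → (Fin n → ℕ) → Prop := fun n r x =>
    ∃ t : Fin n → B, f ∘ t = x ∧ RelMap r t
  have hR : ∀ n (r : L.Relations n) (t : Fin n → B), R n r (f ∘ t) ↔ RelMap r t := by
    intro n r t
    refine ⟨?_, fun h => ⟨t, rfl, h⟩⟩
    rintro ⟨s, hs, h⟩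
    rwa [← hf.comp_left hs]
  have hmem : fstr D R ∈ K := by
    refine hK.hereditary B hB ⟨Structure.fg_iff_finite.2 inferInstance, ?_⟩
    have : ∀ x : FT D R, ∃ y, f y = x.1 := fun x => (hD x.1).1 x.2
    choose g hg using this
    refine ⟨mkEmb g ?_ ?_⟩
    · intro x y hxy
      apply FT.ext
      rw [← hg x, ← hg y, hxy]
    · intro k r t
      rw [← hR]
      have : f ∘ g ∘ t = fun i => (t i).1 := by funext i; exact hg (t i)
      rw [this]
      rfl
  refine ⟨⟨D, R, hmem⟩, ⟨fun x hx => (hD x).2 ⟨e ⟨x, hx⟩, hfe _⟩, fun n r x hx => ?_⟩, f, hf,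
    fun x => (hD _).2 ⟨x, rfl⟩, hfe, hR⟩
  have h1 : x = f ∘ e ∘ fun i => (⟨x i, hx i⟩ : FT p.D p.R) := by
    funext i; exact (hfe ⟨x i, hx i⟩).symm
  refine Iff.trans ?_ (iff_of_eq (congrArg (R n r) h1.symm))
  rw [hR]
  exact (e.map_rel r fun i => (⟨x i, hx i⟩ : FT p.D p.R)).symm

/-- Same type for tuples inside a condition. -/
def Cond.ST (p : Cond K) {ι : Type} (a b : ι → ℕ) : Prop :=
  (∀ i, a i ∈ p.D) ∧ (∀ i, b i ∈ p.D) ∧ (∀ i j, a i = a j ↔ b i = b j) ∧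
    ∀ (k : ℕ) (r : L.Relations k) (t : Fin k → ι), p.R k r (a ∘ t) ↔ p.R k r (b ∘ t)

theorem Cond.ST.mono {p q : Cond K} (h : p ≤ q) {ι : Type} {a b : ι → ℕ} (hp : p.ST a b) :
    q.ST a b :=
  ⟨fun i => h.1 (hp.1 i), fun i => h.1 (hp.2.1 i), hp.2.2.1, fun k r t =>
    (h.2 k r (a ∘ t) fun i => hp.1 _).symm.trans ((hp.2.2.2 k r t).trans
      (h.2 k r (b ∘ t) fun i => hp.2.1 _))⟩

theorem Cond.extend_point [hK : IsFraisse K] (p : Cond K) {n : ℕ} (a b : Fin n → ℕ)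
    (hp : p.ST a b) (m : ℕ) (hm : m ∈ p.D) :
    ∃ q : Cond K, p ≤ q ∧ ∃ m' : ℕ,
      q.ST (Fin.cons m a : Fin (n+1) → ℕ) (Fin.cons m' b : Fin (n+1) → ℕ) := by
  classical
  -- the common substructure, living on the range of `a`
  let A : Finset ℕ := Finset.univ.image a
  have hA : ∀ x : FT A p.R, ∃ i, a i = x.1 := fun x => by
    obtain ⟨i, -, h⟩ := Finset.mem_image.1 x.2
    exact ⟨i, h⟩
  choose c hc using hA
  have hcoe : ∀ {k : ℕ} (t : Fin k → FT A p.R), a ∘ (c ∘ t) = fun i => (t i).1 :=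
    fun t => funext fun i => hc (t i)
  let e1 : FT A p.R ↪[L] FT p.D p.R :=
    mkEmb (fun x => ⟨x.1, by rw [← hc x]; exact hp.1 _⟩)
      (fun _ _ h => FT.ext (FT.mk.inj h)) (fun k r t => Iff.rfl)
  let e2 : FT A p.R ↪[L] FT p.D p.R :=
    mkEmb (fun x => ⟨b (c x), hp.2.1 _⟩)
      (fun x y h => by
        have h1 : b (c x) = b (c y) := congrArg FT.val h
        have h2 := (hp.2.2.1 _ _).2 h1
        rw [hc, hc] at h2
        exact FT.ext h2)
      (fun k r t => by
        have := hp.2.2.2 k r (c ∘ t)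
        rw [hcoe] at this
        exact this.symm)
  have hAK : fstr A p.R ∈ K :=
    hK.hereditary _ p.mem ⟨Structure.fg_iff_finite.2 inferInstance, ⟨e1⟩⟩
  obtain ⟨Q, i1, i2, hQ, hcomm⟩ := hK.amalgamation _ _ _ e1 e2 hAK p.mem p.mem
  obtain ⟨q, hpq, f, hf, hfD, hfe, hfR⟩ := p.extend Q hQ i2
  have hb : ∀ i, b i = f (i1 ⟨a i, hp.1 i⟩) := by
    intro i
    have hi : a i ∈ A := by simp [A]
    have h1 := DFunLike.congr_fun hcomm ⟨a i, hi⟩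
    have h2 : i1 ⟨a i, hp.1 i⟩ = i2 ⟨b (c ⟨a i, hi⟩), hp.2.1 _⟩ := h1
    rw [h2, hfe]
    exact (hp.2.2.1 _ _).1 (hc ⟨a i, hi⟩).symm
  let m' := f (i1 ⟨m, hm⟩)
  have ha' : ∀ i, (Fin.cons m a : Fin (n+1) → ℕ) i ∈ p.D := by
    intro i
    refine Fin.cases ?_ (fun i => ?_) i
    · simpa using hm
    · simpa using hp.1 i
  have hb' : ∀ i, (Fin.cons m' b : Fin (n+1) → ℕ) i =
      f (i1 ⟨(Fin.cons m a : Fin (n+1) → ℕ) i, ha' i⟩) := by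
    intro i
    refine Fin.cases ?_ (fun i => ?_) i
    · simp [m']
    · simpa using hb i
  refine ⟨q, hpq, m', fun i => hpq.1 (ha' i), fun i => ?_, fun i j => ?_, fun k r t => ?_⟩
  · rw [hb']; exact hfD _
  · rw [hb', hb', hf.eq_iff, i1.injective.eq_iff, FT.mk.injEq]
  · have h1 : (Fin.cons m' b : Fin (n+1) → ℕ) ∘ t =
      f ∘ i1 ∘ fun j => (⟨(Fin.cons m a : Fin (n+1) → ℕ) (t j), ha' _⟩ : FT p.D p.R) := by
      funext j; exact hb' (t j)
    rw [h1, hfR]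
    refine Iff.trans ?_ (i1.map_rel r _).symm
    exact (hpq.2 k r _ fun i => ha' _).symm

/-- Every class in a Fraïssé class is represented in a sequence. -/
theorem exists_seq [hK : IsFraisse K] : ∃ F : ℕ → Bundled.{0} L.Structure,
    (∀ n, F n ∈ K) ∧ ∀ B ∈ K, ∃ n, Nonempty (B ↪[L] F n) := by
  obtain ⟨F, hF⟩ := hK.is_essentially_countable.exists_eq_range (hK.is_nonempty.image _)
  have h1 : ∀ n, ∃ B ∈ K, Quotient.mk' B = F n := fun n => by
    have : F n ∈ Set.range F := ⟨n, rfl⟩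
    rw [← hF] at this
    exact this
  choose G hGK hG using h1
  refine ⟨G, hGK, fun B hB => ?_⟩
  have : Quotient.mk' B ∈ Set.range F := by rw [← hF]; exact ⟨B, hB, rfl⟩
  obtain ⟨n, hn⟩ := this
  rw [← hG] at hn
  obtain ⟨g⟩ := Quotient.exact hn
  exact ⟨n, ⟨g.symm.toEmbedding⟩⟩

theorem exists_limit [hK : IsFraisse K] : ∃ M : Bundled.{0} L.Structure,
    Countable M ∧ TH L M ∧ L.age M = K := by
  classical
  obtain ⟨F, hFK, hF⟩ := exists_seq (K := K)
  obtain ⟨p₀⟩ := exists_cond (K := K)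
  let I := ℕ ⊕ (Σ n : ℕ, (Fin n → ℕ) × (Fin n → ℕ) × ℕ)
  let 𝒟 : I → Order.Cofinal (Cond K) := fun i => match i with
    | .inl n => ⟨{p | Nonempty (F n ↪[L] FT p.D p.R)}, fun p => by
        obtain ⟨B, hB, ⟨e1⟩, ⟨e2⟩⟩ := hK.jointEmbedding _ p.mem _ (hFK n)
        obtain ⟨q, hpq, f, hf, hfD, -, hfR⟩ := p.extend B hB e1
        refine ⟨q, ⟨(mkEmb (fun x => ⟨f x, hfD x⟩) ?_ ?_ : B ↪[L] FT q.D q.R).comp e2⟩, hpq⟩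
        · intro x y h
          exact hf (congrArg FT.val h)
        · intro k r t
          exact hfR k r t⟩
    | .inr ⟨n, a, b, m⟩ => ⟨{q | (∃ r ≥ q, r.ST a b ∧ m ∈ r.D) → ∃ m' : ℕ,
        q.ST (Fin.cons m a : Fin (n+1) → ℕ) (Fin.cons m' b : Fin (n+1) → ℕ)}, fun p => by
        by_cases h : ∃ r ≥ p, r.ST a b ∧ m ∈ r.D
        · obtain ⟨r, hpr, hr, hm⟩ := h
          obtain ⟨q, hrq, hq⟩ := r.extend_point a b hr m hm
          exact ⟨q, fun _ => hq, hpr.trans hrq⟩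
        · exact ⟨p, fun h' => absurd h' h, le_rfl⟩⟩
  let _ : Encodable I := Encodable.ofCountable I
  let G := Order.idealOfCofinals p₀ 𝒟
  have hG : ∀ i, ∃ p, p ∈ 𝒟 i ∧ p ∈ G := Order.cofinal_meets_idealOfCofinals p₀ 𝒟
  have hdir : ∀ p ∈ G, ∀ q ∈ G, ∃ r ∈ G, p ≤ r ∧ q ≤ r := fun p hp q hq => G.directed p hp q hq
  let X : Type := {x : ℕ // ∃ p ∈ G, x ∈ p.D}
  let _ : L.Structure X := strOf fun n r x => ∃ p ∈ G, (∀ i, (x i : ℕ) ∈ p.D) ∧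
    p.R n r fun i => (x i : ℕ)
  have hrel : ∀ p ∈ G, ∀ n (r : L.Relations n) (x : Fin n → X), (∀ i, (x i : ℕ) ∈ p.D) →
      (RelMap r x ↔ p.R n r fun i => (x i : ℕ)) := by
    intro p hp n r x hx
    refine ⟨?_, fun h => ⟨p, hp, hx, h⟩⟩
    rintro ⟨q, hq, hxq, h⟩
    obtain ⟨s, hs, hps, hqs⟩ := hdir p hp q hq
    exact (hps.2 n r _ hx).2 ((hqs.2 n r _ hxq).1 h)
  have hfin : ∀ (S : Finset X), ∃ p ∈ G, ∀ x ∈ S, (x : ℕ) ∈ p.D := by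
    intro S
    induction S using Finset.induction_on with
    | empty => exact ⟨p₀, Order.mem_idealOfCofinals p₀ 𝒟, by simp⟩
    | insert x S _ ih =>
      obtain ⟨p, hp, hpS⟩ := ih
      obtain ⟨q, hq, hxq⟩ := x.2
      obtain ⟨s, hs, hps, hqs⟩ := hdir p hp q hq
      refine ⟨s, hs, fun y hy => ?_⟩
      rcases Finset.mem_insert.1 hy with rfl | hy
      · exact hqs.1 hxq
      · exact hps.1 (hpS y hy)
  refine ⟨⟨X, inferInstance⟩, inferInstanceAs (Countable X), ?_, ?_⟩
  · have : Countable X := inferInstance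
    refine TH_of_ext (M := X) ?_
    intro n a b m hab
    obtain ⟨p, hp, hpS⟩ := hfin (insert m (Finset.univ.image a ∪ Finset.univ.image b))
    have hpa : ∀ i, (a i : ℕ) ∈ p.D := fun i => hpS _ (by simp)
    have hpb : ∀ i, (b i : ℕ) ∈ p.D := fun i => hpS _ (by simp)
    have hpm : (m : ℕ) ∈ p.D := hpS _ (by simp)
    have hST : p.ST (fun i => (a i : ℕ)) (fun i => (b i : ℕ)) := by
      refine ⟨hpa, hpb, fun i j => ?_, fun k r t => ?_⟩
      · rw [← Subtype.ext_iff, ← Subtype.ext_iff]; exact hab.1 i j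
      · exact (hrel p hp k r (a ∘ t) fun i => hpa _).symm.trans ((hab.2 k r t).trans
          (hrel p hp k r (b ∘ t) fun i => hpb _))
    obtain ⟨q, hq, hqG⟩ := hG (.inr ⟨n, fun i => (a i : ℕ), fun i => (b i : ℕ), (m : ℕ)⟩)
    obtain ⟨s, hs, hps, hqs⟩ := hdir p hp q hqG
    obtain ⟨m', hm'⟩ := hq ⟨s, hqs, hST.mono hps, hps.1 hpm⟩
    let m'' : X := ⟨m', q, hqG, by simpa using hm'.2.1 0⟩
    have e1 : ∀ i, ((Fin.cons m a : Fin (n+1) → X) i : ℕ) =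
        (Fin.cons (m : ℕ) (fun i => (a i : ℕ)) : Fin (n+1) → ℕ) i := fun i => by
      refine Fin.cases ?_ (fun i => ?_) i <;> simp
    have e2 : ∀ i, ((Fin.cons m'' b : Fin (n+1) → X) i : ℕ) =
        (Fin.cons m' (fun i => (b i : ℕ)) : Fin (n+1) → ℕ) i := fun i => by
      refine Fin.cases ?_ (fun i => ?_) i <;> simp [m'']
    refine ⟨m'', fun i j => ?_, fun k r t => ?_⟩
    · rw [Subtype.ext_iff, Subtype.ext_iff, e1, e1, e2, e2]
      exact hm'.2.2.1 i j
    · rw [hrel q hqG k r _ (fun i => by rw [Function.comp, e1]; exact hm'.1 _),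
        hrel q hqG k r _ (fun i => by rw [Function.comp, e2]; exact hm'.2.1 _)]
      simp only [Function.comp, e1, e2]
      exact hm'.2.2.2 k r t
  · ext B
    constructor
    · rintro ⟨hfg, ⟨e⟩⟩
      have : Finite B := hfg.finite
      obtain ⟨p, hp, hpS⟩ := hfin (Set.finite_range e).toFinset
      have hpe : ∀ x, (e x).1 ∈ p.D := fun x => hpS _ (by simp)
      refine hK.hereditary _ p.mem ⟨hfg, ⟨mkEmb (fun x => ⟨(e x).1, hpe x⟩) ?_ ?_⟩⟩
      · intro x y h
        exact e.injective (Subtype.ext (congrArg FT.val h))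
      · intro k r t
        exact (hrel p hp k r (e ∘ t) fun i => hpe _).symm.trans (e.map_rel r t)
    · intro hB
      refine ⟨hK.FG B hB, ?_⟩
      obtain ⟨n, ⟨e⟩⟩ := hF B hB
      obtain ⟨p, ⟨e'⟩, hp⟩ := hG (.inl n)
      let e'' : FT p.D p.R ↪[L] X := mkEmb (fun x => ⟨x.1, p, hp, x.2⟩)
        (fun _ _ h => FT.ext (Subtype.mk.inj h))
        (fun k r t => hrel p hp k r _ fun i => (t i).2)
      exact ⟨e''.comp (e'.comp e)⟩

end limit

end St13

/-- If `K` is a Fraïssé class in a finite relational language containing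
structures of arbitrarily large finite cardinality, then there exists an ultrahomogeneous
structure of cardinality `ℵ₁` whose age is `K`. -/
theorem statement13 (L : FirstOrder.Language.{0, 0}) [L.IsRelational] [Finite L.Symbols]
    (K : Set (Bundled.{0} L.Structure)) [IsFraisse K]
    (hlarge : ∀ n : ℕ, ∃ M ∈ K, (n : Cardinal) ≤ #M) :
    ∃ N : Bundled.{0} L.Structure, #N = aleph 1 ∧
      L.IsUltrahomogeneous N ∧ L.age N = K := by
  obtain ⟨M, hMc, hM, hage⟩ := St13.exists_limit (K := K)
  have hinf : Infinite M := by
    rw [infinite_iff, aleph0_le]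
    intro n
    obtain ⟨A, hA, hn⟩ := hlarge n
    rw [← hage] at hA
    obtain ⟨-, ⟨e⟩⟩ := hA
    exact hn.trans (mk_le_of_injective e.injective)
  have hU := St13.U.th hM
  have hunc := St13.U.uncountable M
  have hle : ℵ_ 1 ≤ #(St13.U M) := by
    rw [← succ_aleph0, Order.succ_le_iff]
    exact aleph0_lt_mk_iff.2 hunc
  obtain ⟨X, hX⟩ := le_mk_iff_exists_set.1 hle
  let X₀ : Set (St13.U M) := X ∪ Set.range (St13.U.diag (L := L) M)
  have hX₀ : #X₀ = ℵ_ 1 := by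
    apply le_antisymm
    · refine (mk_union_le _ _).trans ?_
      rw [hX]
      refine (add_le_add le_rfl (mk_range_le.trans ((mk_le_aleph0 (α := M)).trans
        (aleph0_le_aleph 1)))).trans ?_
      rw [add_eq_self (aleph0_le_aleph 1)]
    · rw [← hX]
      exact mk_le_mk_of_subset Set.subset_union_left
  obtain ⟨N, hXN, hcard, hN⟩ := St13.exists_sub hU X₀ hX₀
  refine ⟨⟨N, inferInstance⟩, hcard, hN.ultra, ?_⟩
  rw [← hage]
  ext A
  constructor
  · rintro ⟨hfg, ⟨e⟩⟩
    have : Finite A := hfg.finite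
    exact ⟨hfg, St13.U.emb (N.subtype.comp e)⟩
  · rintro ⟨hfg, ⟨e⟩⟩
    let d : M ↪[L] N := St13.mkEmb (fun x => ⟨St13.U.diag (L := L) M x, hXN (Or.inr ⟨x, rfl⟩)⟩)
      (fun x y h => (St13.U.diag (L := L) M).injective (congrArg (fun z => z.1) h))
      (fun k r t => (N.subtype.map_rel r _).symm.trans ((St13.U.diag (L := L) M).map_rel r t))
    exact ⟨hfg, ⟨d.comp e⟩⟩
end
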